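/- arXiv:1210.4951 — 4 statements merged into one kernel-verified Lean document; each statement's English description precedes it below -/
import Mathlib

section
/- Let K be a division ring, K0 a field contained in the center of K over which K has finite dimension q, and n a positive integer. If V is a K0-linear subspace of M_n(K) all of whose elements are nilpotent matrices, then dim_{K0} V ≤ q·(n choose 2). -/
/-!
Suppose that for every `i` there is a nonzero `A i ∈ V` whose rows other than row `i` vanish, and
draw an edge `i → j` whenever `A i i j ≠ 0`. A minimal nonempty set `S` of vertices in which every
vertex has a successor is a cycle without chords, so `∑ i ∈ S, A i` maps vectors of support `S` to
vectors of support `S` and is not nilpotent. Hence for some `i` no nonzero matrix in `V` is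
supported in row `i`. The matrices in `V` whose `i`-th column vanishes off the diagonal are then
determined by their minor without row and column `i`, which is again nilpotent, and induction on
the size applies.
-/

open Matrix

lemma exists_subset_forall_existsUnique_rel {α : Type*} {r : α → α → Prop} {T : Finset α}
    (hT : T.Nonempty) (hr : ∀ i ∈ T, ∃ j ∈ T, r i j) :
    ∃ S ⊆ T, S.Nonempty ∧ ∀ i ∈ S, ∃! j, j ∈ S ∧ r i j := by
  classical
  let P : Finset α → Prop := fun S ↦ S.Nonempty ∧ ∀ i ∈ S, ∃ j ∈ S, r i j
  obtain ⟨S, hST, hS⟩ := exists_minimal_le_of_wellFoundedLT P T ⟨hT, hr⟩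
  choose! f hfS hrf using hS.prop.2
  have image_subset : S.image f ⊆ S := Finset.image_subset_iff.mpr hfS
  have image_eq : S.image f = S := by
    refine image_subset.antisymm (hS.le_of_le ⟨hS.prop.1.image f, fun j hj ↦ ?_⟩ image_subset)
    exact ⟨f j, Finset.mem_image_of_mem f (image_subset hj), hrf j (image_subset hj)⟩
  have f_injOn : Set.InjOn f S := Finset.card_image_iff.mp (by rw [image_eq])
  refine ⟨S, hST, hS.prop.1, fun i hi ↦ ⟨f i, ⟨hfS i hi, hrf i hi⟩, fun k ⟨hk, hik⟩ ↦ ?_⟩⟩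
  -- Otherwise rerouting `i` to `k` leaves a successor for every vertex of `S.erase (f i)`.
  by_contra hne
  have erase_closed : P (S.erase (f i)) := by
    refine ⟨⟨k, Finset.mem_erase.mpr ⟨hne, hk⟩⟩, fun l hl ↦ ?_⟩
    have hlS := Finset.mem_of_mem_erase hl
    obtain rfl | hli := eq_or_ne l i
    · exact ⟨k, Finset.mem_erase.mpr ⟨hne, hk⟩, hik⟩
    · exact ⟨f l, Finset.mem_erase.mpr ⟨fun h ↦ hli (f_injOn hlS hi h), hfS l hlS⟩, hrf l hlS⟩
  exact Finset.notMem_erase _ _ (hS.le_of_le erase_closed (Finset.erase_subset _ _) (hfS i hi))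

section Nilpotent

variable {ι R : Type*} [Fintype ι] [Semiring R]

lemma support_mulVec_eq_of_existsUnique [NoZeroDivisors R] {A : Matrix ι ι R} {S : Set ι}
    (hzero : ∀ i ∉ S, ∀ j, A i j = 0) (hunique : ∀ i ∈ S, ∃! j, j ∈ S ∧ A i j ≠ 0)
    {v : ι → R} (hv : Function.support v = S) : Function.support (A *ᵥ v) = S := by
  subst hv
  ext i
  by_cases hi : v i = 0
  · simp [mulVec, dotProduct, hi, hzero]
  · obtain ⟨j, ⟨hvj, hAij⟩, huniq⟩ := hunique i hi
    have entry_eq : (A *ᵥ v) i = A i j * v j := by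
      refine Fintype.sum_eq_single j fun k hkj ↦ ?_
      by_contra hk
      exact hkj (huniq k ⟨right_ne_zero_of_mul hk, left_ne_zero_of_mul hk⟩)
    simpa [entry_eq, hi, hAij] using hvj

variable [DecidableEq ι]

lemma not_isNilpotent_of_existsUnique [IsDomain R] {A : Matrix ι ι R} {S : Set ι}
    (hS : S.Nonempty) (hzero : ∀ i ∉ S, ∀ j, A i j = 0)
    (hunique : ∀ i ∈ S, ∃! j, j ∈ S ∧ A i j ≠ 0) : ¬ IsNilpotent A := by
  rintro ⟨m, hm⟩
  have support_pow (k : ℕ) : Function.support (A ^ k *ᵥ S.indicator 1) = S := by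
    induction k with
    | zero => simp [Function.support_one]
    | succ k ih =>
      rw [pow_succ', ← mulVec_mulVec]
      exact support_mulVec_eq_of_existsUnique hzero hunique ih
  have hempty : S = ∅ := by simpa [hm] using (support_pow m).symm
  exact hS.ne_empty hempty

lemma exists_row_forall_eq_zero_of_isNilpotent [IsDomain R] [Nonempty ι]
    (V : AddSubmonoid (Matrix ι ι R)) (hV : ∀ M ∈ V, IsNilpotent M) :
    ∃ i, ∀ M ∈ V, (∀ j ≠ i, ∀ k, M j k = 0) → M = 0 := by
  by_contra! hrow
  choose A hAV hA_off hA_ne using hrow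
  have exists_entry_ne (i : ι) : ∃ j, A i i j ≠ 0 := by
    by_contra! h
    refine hA_ne i (Matrix.ext fun a b ↦ ?_)
    obtain rfl | ha := eq_or_ne a i
    exacts [h b, hA_off i a ha b]
  obtain ⟨S, -, hS, hunique⟩ := exists_subset_forall_existsUnique_rel (r := fun i j ↦ A i i j ≠ 0)
    Finset.univ_nonempty fun i _ ↦ (exists_entry_ne i).imp fun j hj ↦ ⟨Finset.mem_univ j, hj⟩
  have sum_entry (i j : ι) : (∑ l ∈ S, A l) i j = if i ∈ S then A i i j else 0 := by
    rw [Matrix.sum_apply, ← Finset.sum_ite_eq S i fun l ↦ A l i j]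
    refine Finset.sum_congr rfl fun l _ ↦ ?_
    split_ifs with hil
    exacts [rfl, hA_off l i hil j]
  refine not_isNilpotent_of_existsUnique (S := (S : Set ι)) (A := ∑ l ∈ S, A l) hS ?_ ?_
    (hV _ (sum_mem fun l _ ↦ hAV l))
  · intro i hi j
    rw [sum_entry, if_neg (by simpa using hi)]
  · intro i hi
    simpa only [sum_entry, if_pos (Finset.mem_coe.mp hi), Finset.mem_coe] using hunique i hi

end Nilpotent

section Blocks

variable {R : Type*} [Semiring R]

lemma toBlock_mul_of_toBlock_eq_zero {l m n : Type*} [Fintype m] {p : l → Prop} {q : m → Prop}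
    [DecidablePred q] {A : Matrix l m R} (h : A.toBlock p q = 0) (B : Matrix m n R)
    (r : n → Prop) :
    (A * B).toBlock p r = A.toBlock p (fun j ↦ ¬ q j) * B.toBlock (fun j ↦ ¬ q j) r := by
  ext i k
  have term_eq_zero (j : {j // q j}) : A i j * B j k = 0 := by
    rw [show A i j = 0 from congr_fun₂ h i j, zero_mul]
  simp only [toBlock_apply, mul_apply, term_eq_zero, Finset.sum_const_zero, zero_add,
    ← Fintype.sum_subtype_add_sum_subtype q fun j ↦ A i j * B j k]

variable {ι : Type*} [Fintype ι] [DecidableEq ι] {q : ι → Prop} [DecidablePred q]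
  {M : Matrix ι ι R}

lemma toBlock_pow_of_toBlock_eq_zero (h : M.toBlock (fun i ↦ ¬ q i) q = 0) (k : ℕ) :
    (M ^ k).toBlock (fun i ↦ ¬ q i) (fun i ↦ ¬ q i) =
      M.toBlock (fun i ↦ ¬ q i) (fun i ↦ ¬ q i) ^ k := by
  induction k with
  | zero => rw [pow_zero, pow_zero, toBlock_one_self]
  | succ k ih => rw [pow_succ', pow_succ', toBlock_mul_of_toBlock_eq_zero h, ih]

lemma isNilpotent_toBlock_of_toBlock_eq_zero (h : M.toBlock (fun i ↦ ¬ q i) q = 0)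
    (hM : IsNilpotent M) : IsNilpotent (M.toBlock (fun i ↦ ¬ q i) (fun i ↦ ¬ q i)) := by
  obtain ⟨m, hm⟩ := hM
  exact ⟨m, by rw [← toBlock_pow_of_toBlock_eq_zero h, hm]; rfl⟩

end Blocks

/-- `Matrix.toBlock` as a linear map, sending a matrix to its block with rows in `p` and columns
in `q`. -/
def toBlockLinearMap (F : Type*) {m n R : Type*} [Semiring F] [AddCommMonoid R] [Module F R]
    (p : m → Prop) (q : n → Prop) :
    Matrix m n R →ₗ[F] Matrix {i // p i} {j // q j} R where
  toFun M := M.toBlock p q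
  map_add' _ _ := rfl
  map_smul' _ _ := rfl

section Rank

universe u v

lemma rank_eq_rank_map_add_rank_map_inf_ker {F : Type*} {M N P : Type u} [Ring F]
    [HasRankNullity.{u} F] [AddCommGroup M] [Module F M] [AddCommGroup N] [Module F N]
    [AddCommGroup P] [Module F P] (V : Submodule F M) (f : M →ₗ[F] N) (g : M →ₗ[F] P)
    (h : Disjoint (V ⊓ f.ker) g.ker) :
    Module.rank F V = Module.rank F (V.map f) + Module.rank F ((V ⊓ f.ker).map g) := by
  have rank_ker : Module.rank F (f.domRestrict V).ker = Module.rank F ↥(V ⊓ f.ker) := by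
    rw [LinearMap.ker_domRestrict, ← rank_map_eq V.injective_subtype, Submodule.map_comap_subtype]
  have rank_map_g : Module.rank F ((V ⊓ f.ker).map g) = Module.rank F ↥(V ⊓ f.ker) := by
    rw [← LinearMap.range_domRestrict]
    exact rank_range_of_injective _ (LinearMap.injective_domRestrict_iff.mpr h)
  rw [← LinearMap.rank_range_add_rank_ker (f.domRestrict V), rank_ker, rank_map_g,
    LinearMap.range_domRestrict]

lemma disjoint_inf_ker_toBlockLinearMap {F R ι : Type*} [Semiring F] [AddCommMonoid R] [Module F R]
    {V : Submodule F (Matrix ι ι R)} {i : ι}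
    (hrow : ∀ M ∈ V, (∀ j ≠ i, ∀ k, M j k = 0) → M = 0) :
    Disjoint (V ⊓ (toBlockLinearMap F (fun j ↦ ¬ j = i) (· = i)).ker)
      (toBlockLinearMap F (R := R) (fun j ↦ ¬ j = i) (fun k ↦ ¬ k = i)).ker := by
  rw [Submodule.disjoint_def]
  rintro M ⟨hMV, hcolumn⟩ hminor
  refine hrow M hMV fun j hj k ↦ ?_
  by_cases hk : k = i
  · exact congr_fun₂ hcolumn ⟨j, hj⟩ ⟨k, hk⟩
  · exact congr_fun₂ hminor ⟨j, hj⟩ ⟨k, hk⟩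

variable {F : Type*} {R : Type u} {ι : Type v} [DivisionRing F] [Ring R] [IsDomain R] [Module F R]
  [Fintype ι] [DecidableEq ι]

lemma exists_isNilpotent_submodule_rank_le [Nonempty ι] (V : Submodule F (Matrix ι ι R))
    (hV : ∀ M ∈ V, IsNilpotent M) :
    ∃ (i : ι) (W : Submodule F (Matrix {j // ¬ j = i} {j // ¬ j = i} R)),
      (∀ M ∈ W, IsNilpotent M) ∧
      Module.rank F V ≤
        Cardinal.lift.{v} (Module.rank F R) * Fintype.card {j // ¬ j = i} + Module.rank F W := by
  obtain ⟨i, hrow⟩ := exists_row_forall_eq_zero_of_isNilpotent V.toAddSubmonoid hV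
  let column := toBlockLinearMap F (R := R) (fun j ↦ ¬ j = i) (· = i)
  let minor := toBlockLinearMap F (R := R) (fun j ↦ ¬ j = i) (fun k ↦ ¬ k = i)
  have rank_column : Module.rank F (V.map column) ≤
      Cardinal.lift.{v} (Module.rank F R) * Fintype.card {j // ¬ j = i} := by
    refine (Submodule.rank_le _).trans_eq ?_
    rw [rank_matrix_module', Cardinal.mk_fintype, Cardinal.mk_fintype, Fintype.card_subtype_eq,
      Nat.cast_one, mul_one, Cardinal.lift_natCast, mul_comm]
  refine ⟨i, (V ⊓ column.ker).map minor, ?_, ?_⟩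
  · rintro _ ⟨M, ⟨hMV, hcolumn⟩, rfl⟩
    exact isNilpotent_toBlock_of_toBlock_eq_zero hcolumn (hV M hMV)
  · rw [rank_eq_rank_map_add_rank_map_inf_ker V column minor
      (disjoint_inf_ker_toBlockLinearMap hrow)]
    gcongr

theorem stmt_0_general (V : Submodule F (Matrix ι ι R)) (hV : ∀ M ∈ V, IsNilpotent M) :
    Module.rank F V ≤ Cardinal.lift.{v} (Module.rank F R) * (Fintype.card ι).choose 2 := by
  induction hn : Fintype.card ι generalizing ι with
  | zero =>
    have := Fintype.card_eq_zero_iff.mp hn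
    simp
  | succ n ih =>
    have : Nonempty ι := Fintype.card_pos_iff.mp (by lia)
    obtain ⟨i, W, hW, rank_le⟩ := exists_isNilpotent_submodule_rank_le V hV
    have card_ne : Fintype.card {j // ¬ j = i} = n := by
      rw [Fintype.card_subtype_compl, Fintype.card_subtype_eq, hn, Nat.add_sub_cancel]
    rw [card_ne] at rank_le
    calc Module.rank F V
        ≤ Cardinal.lift.{v} (Module.rank F R) * n + Module.rank F W := rank_le
      _ ≤ Cardinal.lift.{v} (Module.rank F R) * n +
            Cardinal.lift.{v} (Module.rank F R) * n.choose 2 := by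
          gcongr
          exact ih W hW card_ne
      _ = Cardinal.lift.{v} (Module.rank F R) * (n + 1).choose 2 := by
          rw [← mul_add, Nat.choose_succ_succ' n 1, Nat.choose_one_right, Nat.cast_add]

end Rank

/-- Gerstenhaber inequality over a skew field: a `K0`-linear subspace of nilpotent
`n × n` matrices over `K` has dimension at most `q * (n choose 2)`, where
`q = dim_{K0} K`. -/
theorem stmt_0 (K : Type*) [DivisionRing K] (K0 : Type*) [Field K0] [Algebra K0 K]
    [FiniteDimensional K0 K] (q n : ℕ) (hq : Module.finrank K0 K = q) (hn : 0 < n)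
    (V : Submodule K0 (Matrix (Fin n) (Fin n) K))
    (hV : ∀ M ∈ V, IsNilpotent M) :
    Module.finrank K0 V ≤ q * n.choose 2 := by
  subst hq
  have rank_le := stmt_0_general V hV
  rw [← Module.finrank_eq_rank, ← Module.finrank_eq_rank, Fintype.card_fin, Cardinal.lift_natCast]
    at rank_le
  exact_mod_cast rank_le
end

section
/- Let K be a division ring, K0 a field contained in the center of K over which K has finite dimension q, and n a positive integer. If V is a K0-linear subspace of M_n(K) all of whose elements are nilpotent matrices and dim_{K0} V = q·(n choose 2), then there exists an invertible matrix P in M_n(K) such that P V P^{-1} equals the set NT_n(K) of all strictly upper-triangular n×n matrices over K (i.e. M ∈ V if and only if P M P^{-1} is strictly upper-triangular). -/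
/-!
A rank one endomorphism `f ⊗ x` sends `v` to `f v • x`. If `V` contains no nonzero `f ⊗ z`, and
`g z = 1`, then rank-nullity for `M ↦ M z` and induction applied to the compressions to `ker g` of
those `M ∈ V` with `M z = 0` bound the dimension of `V` by `q * (n choose 2)`. Such vectors `z`
exist because they include the complement of a proper subspace, and so do, dually, forms `g` such
that `V` contains no nonzero `g ⊗ u`.

If `V` attains the bound, so do both kinds of compression, hence they are strictly triangular by
induction. Lifting their last column and their first row gives vectors `e, y` and forms `g, h`, dual
to each other, such that `V` contains elements `r ⊗ e + φ ⊗ y` for all `r` killing `e, y`, and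
`h ⊗ u + g ⊗ ψ` for all `u` killed by `g, h`. Nilpotency of their sums forces `φ = r l + g p` and
`ψ = -(l u + p y)` for constants `l, p` independent of `r` and `u`. A nonzero `p` is possible only
for the field with two elements in dimension three, where a finite check excludes it. Then
`e + l y` is killed by all of `V`, and compressing along this vector concludes by induction.
-/

open Module

open scoped RightActions

namespace Gerstenhaber

section Combinatorics

variable {ι : Type*}

theorem exists_subset_unique_successor {r : ι → ι → Prop} {S : Finset ι} (hne : S.Nonempty)
    (hS : ∀ i ∈ S, ∃ j ∈ S, r i j) :
    ∃ T ⊆ S, T.Nonempty ∧ ∀ i ∈ T, ∃ j ∈ T, ∀ k ∈ T, r k j ↔ k = i := by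
  classical
  obtain ⟨T, ⟨hTS, hTne, hT⟩, hmin⟩ := wellFounded_lt.has_min
    {T : Finset ι | T ⊆ S ∧ T.Nonempty ∧ ∀ i ∈ T, ∃ j ∈ T, r i j} ⟨S, subset_rfl, hne, hS⟩
  have image_eq {σ : ι → ι} (hσ : ∀ i ∈ T, σ i ∈ T ∧ r i (σ i)) : T.image σ = T := by
    have hsub : T.image σ ⊆ T := Finset.image_subset_iff.2 fun i hi ↦ (hσ i hi).1
    by_contra hneq
    exact hmin _ ⟨hsub.trans hTS, hTne.image σ, fun i hi ↦
      ⟨σ i, Finset.mem_image_of_mem σ (hsub hi), (hσ i (hsub hi)).2⟩⟩ (hsub.ssubset_of_ne hneq)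
  choose! σ hσ using hT
  refine ⟨T, hTS, hTne, fun i hi ↦ ⟨σ i, (hσ i hi).1, fun k hk ↦ ⟨fun hki ↦ ?_, ?_⟩⟩⟩
  · by_contra hne
    -- Redirecting `k` to `σ i` would make the selector non-injective.
    have hinj : Set.InjOn (Function.update σ k (σ i)) T :=
      Finset.card_image_iff.1 <| congrArg _ <| image_eq fun a ha ↦ by
        obtain rfl | hak := eq_or_ne a k
        · simpa using ⟨(hσ i hi).1, hki⟩
        · simpa [hak] using hσ a ha
    exact hne (hinj hk hi (by simp [Ne.symm hne]))
  · rintro rfl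
    exact (hσ k hk).2

theorem wellFounded_swap [Finite ι] {r : ι → ι → Prop} (hr : WellFounded r) :
    WellFounded (Function.swap r) := by
  have : Std.Irrefl (Function.swap (Relation.TransGen r)) := ⟨hr.transGen.irrefl.irrefl⟩
  have : IsTrans ι (Function.swap (Relation.TransGen r)) := inferInstance
  exact Subrelation.wf (fun h ↦ .single h)
    (Finite.wellFounded_of_trans_of_irrefl (Function.swap (Relation.TransGen r)))

end Combinatorics

section Nilpotent

variable {D E : Type*} [DivisionRing D] [AddCommGroup E] [Module D E] {M X : End D E}

theorem exists_pow_apply_ne_zero (hM : IsNilpotent M) {x : E} (hx : x ≠ 0) :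
    ∃ k, (M ^ k) x ≠ 0 ∧ (M ^ (k + 1)) x = 0 := by
  classical
  have hex : ∃ m, (M ^ m) x = 0 := hM.imp fun m hm ↦ by simp [hm]
  have hpos : Nat.find hex ≠ 0 := fun h ↦ hx (by simpa [h] using Nat.find_spec hex)
  obtain ⟨k, hk⟩ := Nat.exists_eq_succ_of_ne_zero hpos
  exact ⟨k, Nat.find_min hex (by omega), by simpa only [hk] using Nat.find_spec hex⟩

theorem exists_ne_zero_apply_eq_zero [Nontrivial E] (hM : IsNilpotent M) : ∃ x ≠ 0, M x = 0 := by
  obtain ⟨x, hx⟩ := exists_ne (0 : E)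
  obtain ⟨k, hk, hk'⟩ := exists_pow_apply_ne_zero hM hx
  exact ⟨_, hk, by rwa [pow_succ'] at hk'⟩

theorem pow_finrank_eq_zero [FiniteDimensional D E] (hM : IsNilpotent M) :
    M ^ finrank D E = 0 := by
  obtain ⟨k, hk⟩ := hM
  have hker := Module.End.ker_pow_le_ker_pow_finrank M k
  rwa [hk, LinearMap.ker_zero, top_le_iff, LinearMap.ker_eq_top] at hker

theorem eq_zero_of_finrank_eq_one [FiniteDimensional D E] (hM : IsNilpotent M)
    (hE : finrank D E = 1) : M = 0 := by
  rw [← pow_one M, ← hE]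
  exact pow_finrank_eq_zero hM

theorem eigenvalue_eq_zero (hM : IsNilpotent M) {x : E} (hx : x ≠ 0) {a : D} (h : M x = a • x) :
    a = 0 := by
  obtain ⟨k, hk, hk'⟩ := exists_pow_apply_ne_zero hM hx
  rw [pow_succ, Module.End.mul_apply, h, map_smul] at hk'
  exact (smul_eq_zero.1 hk').resolve_right hk

theorem left_eigenvalue_eq_zero (hM : IsNilpotent M) {f : Dual D E} (hf : f ≠ 0) {a : D}
    (h : ∀ e, f (M e) = f e * a) : a = 0 := by
  obtain ⟨k, hk⟩ := hM
  have hpow (j : ℕ) (e : E) : f ((M ^ j) e) = f e * a ^ j := by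
    induction j with
    | zero => simp
    | succ j ih => rw [pow_succ', Module.End.mul_apply, h, ih, mul_assoc, pow_succ]
  obtain ⟨e, he⟩ := DFunLike.ne_iff.1 hf
  have h0 : f e * a ^ k = 0 := by rw [← hpow, hk, LinearMap.zero_apply, map_zero]
  exact eq_zero_of_pow_eq_zero ((mul_eq_zero.1 h0).resolve_left he)

theorem coeff_eq_zero_of_pow_three_apply (hX : IsNilpotent X) {y : E} (hy : X y ≠ 0) {a b : D}
    (h : (X ^ 3) y = a • y + b • X y) : a = 0 ∧ b = 0 := by
  obtain ⟨k, hk, hk'⟩ := exists_pow_apply_ne_zero hX hy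
  have hvanish (j : ℕ) : (X ^ (k + 2 + j)) y = 0 := by
    rw [show k + 2 + j = j + ((k + 1) + 1) by ring, pow_add, pow_succ, Module.End.mul_apply,
      Module.End.mul_apply, hk', map_zero]
  have hrec (i : ℕ) : (X ^ (i + 3)) y = a • (X ^ i) y + b • (X ^ (i + 1)) y := by
    rw [pow_add, Module.End.mul_apply, h, map_add, map_smul, map_smul, pow_succ X i,
      Module.End.mul_apply]
  have hk1 : (X ^ (k + 1)) y ≠ 0 := by rwa [pow_succ]
  have ha : a = 0 := by
    have := hrec (k + 1)
    rw [hvanish 0, show k + 1 + 3 = k + 2 + 2 by ring, hvanish, smul_zero, add_zero] at this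
    exact (smul_eq_zero.1 this.symm).resolve_right hk1
  have := hrec k
  rw [ha, zero_smul, zero_add, show k + 3 = k + 2 + 1 by ring, hvanish] at this
  exact ⟨ha, (smul_eq_zero.1 this.symm).resolve_right hk1⟩

theorem pow_add_smulRight_apply (M : End D E) (f : Dual D E) (x : E) (k : ℕ) :
    ((M + f.smulRight x) ^ (k + 1)) x = (M ^ (k + 1)) x +
      ∑ p ∈ Finset.HasAntidiagonal.antidiagonal k,
        f (((M + f.smulRight x) ^ p.1) x) • (M ^ p.2) x := by
  induction k with
  | zero => simp
  | succ k ih =>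
    rw [pow_succ', Module.End.mul_apply, LinearMap.add_apply, LinearMap.smulRight_apply,
      Finset.Nat.sum_antidiagonal_succ']
    nth_rw 1 [ih]
    simp only [map_add, map_sum, map_smul, pow_succ' M, Module.End.mul_apply, pow_zero,
      Module.End.one_apply]
    abel

theorem eq_zero_of_eq_add_X_mul {R : Type*} [Ring R] [NoZeroDivisors R] {p q : Polynomial R}
    (h : q = p + Polynomial.X * (q * p)) : p = 0 := by
  by_contra hp
  have hq : q ≠ 0 := by rintro rfl; exact hp (by simpa using h.symm)
  have : Nontrivial R := Polynomial.nontrivial_iff.1 ⟨p, 0, hp⟩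
  have hdeg : (q - p).natDegree = q.natDegree + p.natDegree + 1 := by
    rw [sub_eq_iff_eq_add'.2 h, Polynomial.natDegree_X_mul (mul_ne_zero hq hp),
      Polynomial.natDegree_mul hq hp]
  have := Polynomial.natDegree_sub_le q p
  omega

theorem dual_pow_apply_eq_zero {f : Dual D E} {x : E} (hM : IsNilpotent M)
    (hN : IsNilpotent (M + f.smulRight x)) (k : ℕ) : f ((M ^ k) x) = 0 := by
  obtain ⟨m, hm⟩ := hM
  obtain ⟨n, hn⟩ := hN
  set N := M + f.smulRight x with hNdef
  let orbit (L : End D E) : Polynomial D :=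
    ∑ i ∈ Finset.range (max m n), Polynomial.monomial i (f ((L ^ i) x))
  have coeff_orbit {L : End D E} (hL : L ^ max m n = 0) (i : ℕ) :
      (orbit L).coeff i = f ((L ^ i) x) := by
    simp only [orbit, Polynomial.finsetSum_coeff, Polynomial.coeff_monomial, Finset.sum_ite_eq',
      Finset.mem_range, ite_eq_left_iff, not_lt]
    intro hi
    rw [pow_eq_zero_of_le hi hL, LinearMap.zero_apply, map_zero]
  have hcM := coeff_orbit (pow_eq_zero_of_le (le_max_left m n) hm)
  have hcN := coeff_orbit (pow_eq_zero_of_le (le_max_right m n) hn)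
  have hrec : orbit N = orbit M + Polynomial.X * (orbit N * orbit M) := by
    ext (_ | i)
    · simp [hcM, hcN]
    · rw [Polynomial.coeff_add, Polynomial.coeff_X_mul, Polynomial.coeff_mul]
      simp only [hcM, hcN]
      rw [hNdef, pow_add_smulRight_apply]
      simp only [map_add, map_sum, map_smul, smul_eq_mul]
  rw [← hcM, eq_zero_of_eq_add_X_mul hrec, Polynomial.coeff_zero]

end Nilpotent

section Forms

variable {D E : Type*} [DivisionRing D] [AddCommGroup E] [Module D E]

theorem exists_notMem_and_notMem {A B : Submodule D E} (hA : A ≠ ⊤) (hB : B ≠ ⊤) :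
    ∃ y, y ∉ A ∧ y ∉ B := by
  obtain ⟨a, -, ha⟩ := SetLike.exists_of_lt hA.lt_top
  obtain ⟨b, -, hb⟩ := SetLike.exists_of_lt hB.lt_top
  by_cases haB : a ∈ B
  · by_cases hbA : b ∈ A
    · exact ⟨a + b, (A.add_mem_iff_left hbA).not.2 ha, (B.add_mem_iff_right haB).not.2 hb⟩
    · exact ⟨b, hbA, hb⟩
  · exact ⟨a, ha, haB⟩

theorem exists_dual_ne_zero_and_ne_zero {p : Submodule D E} {a b : E} (ha : a ∉ p) (hb : b ∉ p) :
    ∃ f : Dual D E, (∀ e ∈ p, f e = 0) ∧ f a ≠ 0 ∧ f b ≠ 0 := by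
  obtain ⟨f₁, hf₁, hp₁⟩ := Submodule.exists_le_ker_of_notMem ha
  obtain ⟨f₂, hf₂, hp₂⟩ := Submodule.exists_le_ker_of_notMem hb
  by_cases hb₁ : f₁ b = 0
  · by_cases ha₂ : f₂ a = 0
    · exact ⟨f₁ + f₂, fun e he ↦ by simp [LinearMap.mem_ker.1 (hp₁ he),
        LinearMap.mem_ker.1 (hp₂ he)], by simpa [ha₂], by simpa [hb₁]⟩
    · exact ⟨f₂, hp₂, ha₂, hf₂⟩
  · exact ⟨f₁, hp₁, hf₁, hb₁⟩

theorem notMem_span_singleton_of_apply_eq_zero {g : Dual D E} {y e : E} (hgy : g y = 1)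
    (hge : g e = 0) (he : e ≠ 0) : e ∉ Submodule.span D {y} := by
  rintro hmem
  obtain ⟨c, rfl⟩ := Submodule.mem_span_singleton.1 hmem
  have hc : c = 0 := by simpa [hgy] using hge
  exact he (by rw [hc, zero_smul])

theorem exists_dual_eq_one {x : E} (hx : x ≠ 0) : ∃ g : Dual D E, g x = 1 := by
  obtain ⟨f, -, hf, -⟩ := exists_dual_ne_zero_and_ne_zero (p := ⊥)
    ((Submodule.mem_bot D).not.2 hx) ((Submodule.mem_bot D).not.2 hx)
  exact ⟨f <• (f x)⁻¹, by simp [hf]⟩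

theorem exists_eq_op_smul_of_ker_le {r φ : Dual D E} (h : LinearMap.ker r ≤ LinearMap.ker φ) :
    ∃ c : D, φ = r <• c := by
  obtain rfl | hr := eq_or_ne r 0
  · exact ⟨0, by simpa [LinearMap.ker_eq_top] using h⟩
  · obtain ⟨u, hu⟩ := r.surjective hr 1
    refine ⟨φ u, LinearMap.ext fun e ↦ ?_⟩
    have hmem : e - r e • u ∈ LinearMap.ker φ := h (by simp [hu])
    simpa [sub_eq_zero] using hmem

end Forms

section Adapted

variable {D E : Type*} [DivisionRing D] [AddCommGroup E] [Module D E]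

/-- `y` is adapted to `V` when `V` contains no nonzero endomorphism with image `D ∙ y`. -/
def IsAdapted (V : AddSubgroup (End D E)) (y : E) : Prop :=
  ∀ f : Dual D E, f.smulRight y ∈ V → f = 0

/-- `g` is coadapted to `V` when `V` contains no nonzero endomorphism with kernel `ker g`. This is
the notion dual to `IsAdapted`. -/
def IsCoadapted (V : AddSubgroup (End D E)) (g : Dual D E) : Prop :=
  ∀ u : E, g.smulRight u ∈ V → u = 0

variable {V : AddSubgroup (End D E)} (hV : ∀ M ∈ V, IsNilpotent M)

include hV in
theorem wellFounded_rankOne {ι : Type*} [Finite ι] {f : ι → Dual D E} {x : ι → E}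
    (hfx : ∀ i, (f i).smulRight (x i) ∈ V) : WellFounded fun j i ↦ f i (x j) ≠ 0 := by
  classical
  have := Fintype.ofFinite ι
  rw [WellFounded.wellFounded_iff_has_min]
  by_contra! ⟨S, hne, hS⟩
  obtain ⟨T, -, ⟨i₀, hi₀⟩, hT⟩ := exists_subset_unique_successor
    (r := fun i j ↦ f i (x j) ≠ 0) (S := S.toFinset) (by simpa) (by simpa using hS)
  set M : End D E := ∑ k ∈ T, (f k).smulRight (x k) with hM
  set W := Submodule.span D (x '' T)
  have hWM : W ≤ W.map M := by
    rw [Submodule.span_le]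
    rintro _ ⟨i, hi, rfl⟩
    obtain ⟨j, hj, hij⟩ := hT i hi
    have hMj : M (x j) = f i (x j) • x i := by
      rw [hM, LinearMap.sum_apply]
      refine Finset.sum_eq_single_of_mem i hi fun k hk hki ↦ ?_
      rw [LinearMap.smulRight_apply, not_ne_iff.1 ((hij k hk).not.2 hki), zero_smul]
    refine ⟨(f i (x j))⁻¹ • x j,
      W.smul_mem _ (Submodule.subset_span (Set.mem_image_of_mem x hj)), ?_⟩
    rw [map_smul, hMj, inv_smul_smul₀ ((hij i hi).2 rfl)]
  have hWpow (k : ℕ) : W ≤ W.map (M ^ k) := by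
    induction k with
    | zero => simp [Module.End.one_eq_id]
    | succ k ih =>
      rw [pow_succ, Module.End.mul_eq_comp, Submodule.map_comp]
      exact ih.trans (Submodule.map_mono hWM)
  obtain ⟨k, hk⟩ := hV M (V.sum_mem fun i _ ↦ hfx i)
  obtain ⟨j, hj, hij⟩ := hT i₀ hi₀
  have hxj : x j ∈ W.map (M ^ k) := hWpow k (Submodule.subset_span (Set.mem_image_of_mem x hj))
  rw [hk, Submodule.map_zero, Submodule.mem_bot] at hxj
  exact (hij i₀ hi₀).2 rfl (by rw [hxj, map_zero])

variable [FiniteDimensional D E] [Nontrivial E]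

include hV in
theorem exists_forall_notMem_isAdapted : ∃ H : Submodule D E, H ≠ ⊤ ∧ ∀ y ∉ H, IsAdapted V y := by
  set S : Set E := {y | ∃ f : Dual D E, f ≠ 0 ∧ f.smulRight y ∈ V}
  refine ⟨Submodule.span D S, fun htop ↦ ?_,
    fun y hy f hf ↦ by_contra fun hf0 ↦ hy (Submodule.subset_span ⟨f, hf0, hf⟩)⟩
  obtain ⟨x, hx, hspan, -⟩ := Submodule.exists_fun_fin_finrank_span_eq D S
  choose f hf hfx using hx
  have : Nonempty (Fin (finrank D (Submodule.span D S))) := by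
    rw [htop, finrank_top]
    exact Fin.pos_iff_nonempty.1 finrank_pos
  obtain ⟨i, -, hi⟩ := (wellFounded_rankOne hV hfx).has_min Set.univ Set.univ_nonempty
  simp only [Set.mem_univ, not_ne_iff, forall_const] at hi
  exact hf i (LinearMap.ext_on_range (hspan.trans htop) fun j ↦ by simp [hi])

include hV in
theorem exists_forall_apply_ne_zero_isCoadapted :
    ∃ x : E, x ≠ 0 ∧ ∀ f : Dual D E, f x ≠ 0 → IsCoadapted V f := by
  set S : Set (Submodule D E) := {p | ∃ f : Dual D E, ∃ u, u ≠ 0 ∧ f.smulRight u ∈ V ∧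
    p = LinearMap.ker f}
  suffices hS : sInf S ≠ ⊥ by
    obtain ⟨x, hx, hx0⟩ := Submodule.exists_mem_ne_zero_of_ne_bot hS
    exact ⟨x, hx0, fun f hfx u hu ↦ by_contra fun hu0 ↦
      hfx ((Submodule.mem_sInf.1 hx) _ ⟨f, u, hu0, hu, rfl⟩)⟩
  obtain ⟨t, htS, ht⟩ : ∃ t : Finset (Submodule D E),
      (t : Set (Submodule D E)) ⊆ S ∧ sInf S = t.inf id :=
    CompleteLattice.WellFoundedGT.isSupFiniteCompact (Submodule D E)ᵒᵈ S
  intro hbot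
  have hmem (p : t) := htS p.2
  choose f u hu hfu hker using hmem
  have hne : Nonempty t := by
    by_contra h
    rw [nonempty_subtype, not_exists, ← Finset.eq_empty_iff_forall_notMem] at h
    exact top_ne_bot (by rw [← hbot, ht, h, Finset.inf_empty])
  obtain ⟨j, -, hj⟩ :=
    (wellFounded_swap (wellFounded_rankOne hV hfu)).has_min Set.univ Set.univ_nonempty
  simp only [Set.mem_univ, Function.swap, not_ne_iff, forall_const] at hj
  apply hu j
  rw [← Submodule.mem_bot D, ← hbot, ht, Submodule.mem_finsetInf]
  exact fun p hp ↦ (hker ⟨p, hp⟩).ge (hj ⟨p, hp⟩)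

end Adapted

section DualPair

variable {D E : Type*} [DivisionRing D] [AddCommGroup E] [Module D E]

/-- The forms `g, h` are dual to the vectors `e, y`, so that `E` is the direct sum of `D ∙ e`,
`D ∙ y` and the middle space `ker g ⊓ ker h`. -/
structure IsDualPair (e y : E) (g h : Dual D E) : Prop where
  left_left : g e = 1
  left_right : g y = 0
  right_left : h e = 0
  right_right : h y = 1

/-- The projection onto the middle space `ker g ⊓ ker h` along `e` and `y`, when `g, h` are dual to
`e, y`. -/
def middle (e y : E) (g h : Dual D E) : End D E :=
  LinearMap.id - g.smulRight e - h.smulRight y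

theorem middle_apply (e y : E) (g h : Dual D E) (v : E) :
    middle e y g h v = v - g v • e - h v • y := rfl

theorem middle_eq_self {e y v : E} {g h : Dual D E} (hg : g v = 0) (hh : h v = 0) :
    middle e y g h v = v := by simp [middle_apply, hg, hh]

theorem apply_middle {e y : E} {r : Dual D E} (g h : Dual D E) (hre : r e = 0) (hry : r y = 0)
    (v : E) : r (middle e y g h v) = r v := by simp [middle_apply, hre, hry]

namespace IsDualPair

variable {e y : E} {g h : Dual D E} (P : IsDualPair e y g h)

include P

theorem left_ne_zero : e ≠ 0 := by
  rintro rfl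
  simpa using P.left_left

theorem right_ne_zero : y ≠ 0 := by
  rintro rfl
  simpa using P.right_right

theorem left_middle (v : E) : g (middle e y g h v) = 0 := by
  simp [middle_apply, P.left_left, P.left_right]

theorem right_middle (v : E) : h (middle e y g h v) = 0 := by
  simp [middle_apply, P.right_left, P.right_right]

theorem middle_left : middle e y g h e = 0 := by
  simp [middle_apply, P.left_left, P.right_left]

theorem middle_right : middle e y g h y = 0 := by
  simp [middle_apply, P.left_right, P.right_right]

theorem exists_middle_ne_zero [FiniteDimensional D E] (hE : 3 ≤ finrank D E) :
    ∃ u, u ≠ 0 ∧ g u = 0 ∧ h u = 0 := by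
  by_contra! hU
  have htop : Submodule.span D (Set.range ![e, y]) = ⊤ := by
    refine Submodule.eq_top_iff'.2 fun v ↦ ?_
    have hv : middle e y g h v = 0 := by
      by_contra hv
      exact hU _ hv (P.left_middle v) (P.right_middle v)
    rw [middle_apply, sub_sub, sub_eq_zero] at hv
    rw [hv, Matrix.range_cons_cons_empty]
    exact Submodule.mem_span_pair.2 ⟨_, _, rfl⟩
  have hcard := finrank_range_le_card (R := D) ![e, y]
  rw [Set.finrank, htop, finrank_top, Fintype.card_fin] at hcard
  omega

theorem exists_dual_middle_ne_zero {u v : E} (hu : u ≠ 0) (hgu : g u = 0) (hhu : h u = 0)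
    (hv : v ≠ 0) (hgv : g v = 0) (hhv : h v = 0) :
    ∃ r : Dual D E, r e = 0 ∧ r y = 0 ∧ r u ≠ 0 ∧ r v ≠ 0 := by
  obtain ⟨f, -, hfu, hfv⟩ := exists_dual_ne_zero_and_ne_zero (p := ⊥)
    ((Submodule.mem_bot D).not.2 hu) ((Submodule.mem_bot D).not.2 hv)
  refine ⟨f ∘ₗ middle e y g h, ?_, ?_, ?_, ?_⟩ <;>
    simp [P.middle_left, P.middle_right, middle_eq_self hgu hhu, middle_eq_self hgv hhv, hfu, hfv]

theorem middle_mem_span_singleton {u v : E} (hgu : g u = 0) (hhu : h u = 0)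
    (hv : ∀ r : Dual D E, r e = 0 → r y = 0 → r u = 0 → r v = 0) :
    middle e y g h v ∈ Submodule.span D {u} := by
  by_contra hmem
  obtain ⟨f, hfv, hfu⟩ := Submodule.exists_le_ker_of_notMem hmem
  rw [Submodule.span_singleton_le_iff_mem, LinearMap.mem_ker] at hfu
  exact hfv (hv (f ∘ₗ middle e y g h) (by simp [P.middle_left]) (by simp [P.middle_right])
    (by simp [middle_eq_self hgu hhu, hfu]))

variable {r φ : Dual D E} {u ψ : E}

theorem apply_eq_zero_of_isNilpotent
    (hX : IsNilpotent (r.smulRight e + φ.smulRight y + (h.smulRight u + g.smulRight ψ)))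
    (hre : r e = 0) (hry : r y = 0) (hφy : φ y = 0) (hgu : g u = 0) (hhu : h u = 0) (hgψ : g ψ = 0)
    (hru : r u = 0) : φ u = 0 ∧ r ψ = 0 := by
  set X : End D E := r.smulRight e + φ.smulRight y + (h.smulRight u + g.smulRight ψ) with hXdef
  have hX2 : IsNilpotent (X ^ 2) := hX.pow_succ 1
  constructor
  · refine eigenvalue_eq_zero hX2 P.right_ne_zero ?_
    have hXy : X y = u := by simp [hXdef, hry, hφy, P.left_right, P.right_right]
    rw [pow_two, Module.End.mul_apply, hXy]
    simp [hXdef, hru, hgu, hhu]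
  · have hg : g ≠ 0 := fun h0 ↦ by simpa [h0] using P.left_left
    refine left_eigenvalue_eq_zero hX2 hg fun v ↦ ?_
    have hgX (w : E) : g (X w) = r w := by
      simp [hXdef, P.left_left, P.left_right, hgu, hgψ]
    rw [pow_two, Module.End.mul_apply, hgX]
    simp [hXdef, hre, hry, hru]

theorem constants_eq_of_isNilpotent
    (hX : IsNilpotent (r.smulRight e + φ.smulRight y + (h.smulRight u + g.smulRight ψ)))
    (hre : r e = 0) (hry : r y = 0) (hφy : φ y = 0) (hgu : g u = 0) (hhu : h u = 0)
    (hru : r u ≠ 0) {l m q : D} (hφu : φ u = r u * l) (hψ : ψ = m • u + q • y) :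
    m = -l ∧ q = -φ e := by
  set X : End D E := r.smulRight e + φ.smulRight y + (h.smulRight u + g.smulRight ψ) with hXdef
  have hXy : X y = u := by simp [hXdef, hry, hφy, P.left_right, P.right_right]
  have hXu : X u = r u • (e + l • y) := by simp [hXdef, hgu, hhu, hφu, mul_smul]
  have hXe : X e = (φ e + q) • y + m • u := by
    simp [hXdef, hre, P.left_left, P.right_left, hψ, add_smul]; abel
  have hXy0 : X y ≠ 0 := by
    rw [hXy]
    rintro rfl
    simp at hru
  have hX3 : (X ^ 3) y = (r u * (φ e + q)) • y + (r u * (m + l)) • X y := by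
    rw [pow_succ, pow_two, Module.End.mul_apply, Module.End.mul_apply, hXy, hXu, map_smul,
      map_add, map_smul, hXy, hXe, mul_smul, mul_smul, ← smul_add]
    simp only [add_smul]
    abel_nf
  obtain ⟨hq, hm⟩ := coeff_eq_zero_of_pow_three_apply hX hXy0 hX3
  exact ⟨eq_neg_of_add_eq_zero_left ((mul_eq_zero.1 hm).resolve_left hru),
    eq_neg_of_add_eq_zero_right ((mul_eq_zero.1 hq).resolve_left hru)⟩

end IsDualPair

end DualPair

section NormalForm

variable {D E : Type*} [DivisionRing D] [AddCommGroup E] [Module D E] {V : AddSubgroup (End D E)}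
  {e y : E} {g h : Dual D E}

/-- For every form `r` vanishing on `e` and `y`, some endomorphism `r ⊗ e + φ ⊗ y` with `φ y = 0`
belongs to `V`. -/
def HasColumns (V : AddSubgroup (End D E)) (e y : E) : Prop :=
  ∀ r : Dual D E, r e = 0 → r y = 0 →
    ∃ φ : Dual D E, φ y = 0 ∧ r.smulRight e + φ.smulRight y ∈ V

/-- For every vector `u` killed by `g` and `h`, some endomorphism `h ⊗ u + g ⊗ ψ` with `g ψ = 0`
belongs to `V`. This is the notion dual to `HasColumns`. -/
def HasRows (V : AddSubgroup (End D E)) (g h : Dual D E) : Prop :=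
  ∀ u : E, g u = 0 → h u = 0 → ∃ ψ : E, g ψ = 0 ∧ h.smulRight u + g.smulRight ψ ∈ V

namespace IsDualPair

variable (P : IsDualPair e y g h) (hV : ∀ M ∈ V, IsNilpotent M)

include P hV

theorem exists_eq_op_smul_add (hS : HasRows V g h) {r φ : Dual D E} (hre : r e = 0)
    (hry : r y = 0) (hφy : φ y = 0) (hφ : r.smulRight e + φ.smulRight y ∈ V) :
    ∃ l : D, φ = r <• l + g <• φ e := by
  have hker : LinearMap.ker r ≤ LinearMap.ker (φ - g <• φ e) := by
    intro v hv
    obtain ⟨ψ, hgψ, hψ⟩ := hS _ (P.left_middle v) (P.right_middle v)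
    have hφu := (P.apply_eq_zero_of_isNilpotent (hV _ (V.add_mem hφ hψ)) hre hry hφy
      (P.left_middle v) (P.right_middle v) hgψ (by rwa [apply_middle g h hre hry])).1
    simpa [middle_apply, hφy] using hφu
  obtain ⟨l, hl⟩ := exists_eq_op_smul_of_ker_le hker
  exact ⟨l, sub_eq_iff_eq_add.1 hl⟩

theorem exists_eq_smul_add (hT : HasColumns V e y) {u ψ : E} (hgu : g u = 0) (hhu : h u = 0)
    (hgψ : g ψ = 0) (hψ : h.smulRight u + g.smulRight ψ ∈ V) :
    ∃ m : D, ψ = m • u + h ψ • y := by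
  have hmem := P.middle_mem_span_singleton hgu hhu (v := ψ) fun r hre hry hru ↦ by
    obtain ⟨φ, hφy, hφ⟩ := hT r hre hry
    exact (P.apply_eq_zero_of_isNilpotent (hV _ (V.add_mem hφ hψ)) hre hry hφy hgu hhu hgψ hru).2
  obtain ⟨m, hm⟩ := Submodule.mem_span_singleton.1 hmem
  exact ⟨m, by simp [hm, middle_apply, hgψ]⟩

theorem exists_constants_of_apply_ne_zero (hT : HasColumns V e y) (hS : HasRows V g h)
    {r φ : Dual D E} {u ψ : E} (hre : r e = 0) (hry : r y = 0) (hφy : φ y = 0)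
    (hφ : r.smulRight e + φ.smulRight y ∈ V) (hgu : g u = 0) (hhu : h u = 0) (hgψ : g ψ = 0)
    (hψ : h.smulRight u + g.smulRight ψ ∈ V) (hru : r u ≠ 0) :
    ∃ l p : D, φ = r <• l + g <• p ∧ ψ = -(l • u + p • y) := by
  obtain ⟨l, hl⟩ := P.exists_eq_op_smul_add hV hS hre hry hφy hφ
  obtain ⟨m, hm⟩ := P.exists_eq_smul_add hV hT hgu hhu hgψ hψ
  have hφu : φ u = r u * l := by simpa [hgu] using DFunLike.congr_fun hl u
  obtain ⟨hml, hq⟩ := P.constants_eq_of_isNilpotent (hV _ (V.add_mem hφ hψ)) hre hry hφy hgu hhu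
    hru hφu hm
  refine ⟨l, φ e, hl, ?_⟩
  rw [hm, hml, hq, neg_smul, neg_smul, neg_add]

theorem exists_uniform_constants (hT : HasColumns V e y) (hS : HasRows V g h) :
    ∃ l p : D, ∀ u ψ, u ≠ 0 → g u = 0 → h u = 0 → g ψ = 0 →
      h.smulRight u + g.smulRight ψ ∈ V → ψ = -(l • u + p • y) := by
  by_cases hU : ∃ u, u ≠ 0 ∧ g u = 0 ∧ h u = 0
  · obtain ⟨u₀, hu₀, hgu₀, hhu₀⟩ := hU
    obtain ⟨ψ₀, hgψ₀, hψ₀⟩ := hS u₀ hgu₀ hhu₀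
    obtain ⟨m₀, hm₀⟩ := P.exists_eq_smul_add hV hT hgu₀ hhu₀ hgψ₀ hψ₀
    refine ⟨-m₀, -h ψ₀, fun u ψ hu hgu hhu hgψ hψ ↦ ?_⟩
    -- A form which is nonzero on both `u` and `u₀` identifies the constants attached to them.
    obtain ⟨r, hre, hry, hru, hru₀⟩ := P.exists_dual_middle_ne_zero hu hgu hhu hu₀ hgu₀ hhu₀
    obtain ⟨φ, hφy, hφ⟩ := hT r hre hry
    obtain ⟨l, p, hlp, hψlp⟩ := P.exists_constants_of_apply_ne_zero hV hT hS hre hry hφy hφ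
      hgu hhu hgψ hψ hru
    have hφu₀ : φ u₀ = r u₀ * l := by simp [hlp, hgu₀]
    have hφe : φ e = p := by simp [hlp, hre, P.left_left]
    obtain ⟨hml, hq⟩ := P.constants_eq_of_isNilpotent (hV _ (V.add_mem hφ hψ₀)) hre hry hφy
      hgu₀ hhu₀ hru₀ hφu₀ hm₀
    rw [hψlp, hml, hq, hφe, neg_neg, neg_neg]
  · exact ⟨0, 0, fun u _ hu hgu hhu ↦ absurd ⟨u, hu, hgu, hhu⟩ hU⟩

theorem exists_normalForm (hT : HasColumns V e y) (hS : HasRows V g h) :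
    ∃ l p : D, IsDualPair (e + l • y) y g (h - g <• l) ∧
      (∀ r : Dual D E, r ≠ 0 → r (e + l • y) = 0 → r y = 0 →
        r.smulRight (e + l • y) + g.smulRight (p • y) ∈ V) ∧
      ∀ u, u ≠ 0 → g u = 0 → (h - g <• l) u = 0 →
        (h - g <• l).smulRight u - g.smulRight (p • y) ∈ V := by
  obtain ⟨l, p, hlp⟩ := P.exists_uniform_constants hV hT hS
  refine ⟨l, p, ⟨?_, P.left_right, ?_, ?_⟩, fun r hr hrx hry ↦ ?_, fun u hu hgu hfu ↦ ?_⟩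
  · simp [P.left_left, P.left_right]
  · simp [P.left_left, P.left_right, P.right_left, P.right_right]
  · simp [P.left_right, P.right_right]
  · have hre : r e = 0 := by simpa [hry] using hrx
    obtain ⟨v, hv⟩ := DFunLike.ne_iff.1 hr
    rw [LinearMap.zero_apply, ← apply_middle g h hre hry v] at hv
    have hu : middle e y g h v ≠ 0 := fun h0 ↦ hv (by rw [h0, map_zero])
    obtain ⟨φ, hφy, hφ⟩ := hT r hre hry
    obtain ⟨ψ, hgψ, hψ⟩ := hS _ (P.left_middle v) (P.right_middle v)
    obtain ⟨l', p', hφlp, hψlp⟩ := P.exists_constants_of_apply_ne_zero hV hT hS hre hry hφy hφ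
      (P.left_middle v) (P.right_middle v) hgψ hψ hv
    have hlp' := neg_injective <|
      hψlp.symm.trans (hlp _ ψ hu (P.left_middle v) (P.right_middle v) hgψ hψ)
    obtain rfl : p' = p := by simpa [P.right_middle, P.right_right] using congrArg h hlp'
    obtain rfl : l' = l := smul_left_injective D hu (add_right_cancel hlp')
    convert hφ using 1
    ext w
    simp [hφlp, add_smul, mul_smul]
    abel
  · have hhu : h u = 0 := by simpa [hgu] using hfu
    obtain ⟨ψ, hgψ, hψ⟩ := hS u hgu hhu
    convert hψ using 1
    rw [hlp u ψ hu hgu hhu hgψ hψ]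
    ext v
    simp [smul_add, sub_smul, mul_smul]
    abel

end IsDualPair

end NormalForm

section TwoElement

theorem pow_three_apply {R E : Type*} [Ring R] [AddCommGroup E] [Module R E] {X : End R E}
    {x u y : E} {a b d s c e τ t : R} (hx : X x = a • x + b • u + d • y)
    (hu : X u = s • x + c • u + e • y) (hy : X y = x + τ • u + t • y) :
    (X ^ 3) y = ((a + τ * s + t) * a + (b + τ * c + t * τ) * s + (d + τ * e + t * t)) • x +
      ((a + τ * s + t) * b + (b + τ * c + t * τ) * c + (d + τ * e + t * t) * τ) • u +
      ((a + τ * s + t) * d + (b + τ * c + t * τ) * e + (d + τ * e + t * t) * t) • y := by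
  have hy2 : X (X y) =
      (a + τ * s + t) • x + (b + τ * c + t * τ) • u + (d + τ * e + t * t) • y := by
    rw [hy, map_add, map_add, map_smul, map_smul, hx, hu, hy]
    simp only [add_smul, mul_smul, smul_add]
    abel
  rw [pow_succ', pow_two, Module.End.mul_apply, Module.End.mul_apply, hy2, map_add, map_add,
    map_smul, map_smul, map_smul, hx, hu, hy]
  simp only [add_smul, mul_smul, smul_add]
  abel

theorem exists_pow_three_coordinate_ne_zero (a b c d e s t : ZMod 2) : ∃ σ τ : ZMod 2, ¬
    ((a + τ * (s + σ) + t) * a + (b + τ * c + t * τ) * (s + σ) +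
        (d + σ - τ + τ * e + t * t) = 0 ∧
      (a + τ * (s + σ) + t) * b + (b + τ * c + t * τ) * c +
        (d + σ - τ + τ * e + t * t) * τ = 0 ∧
      (a + τ * (s + σ) + t) * (d + σ - τ) + (b + τ * c + t * τ) * e +
        (d + σ - τ + τ * e + t * t) * t = 0) := by
  decide +revert +kernel

theorem exists_ringHom_zmod_two_surjective {D : Type*} [DivisionRing D]
    (hD : ∀ c : D, c = 0 ∨ c = 1) : ∃ φ : ZMod 2 →+* D, Function.Surjective φ := by
  have h2 : (2 : D) = 0 := (hD 2).resolve_right (by simp [← one_add_one_eq_two])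
  have : CharP D 2 := CharTwo.of_one_ne_zero_of_two_eq_zero one_ne_zero h2
  refine ⟨ZMod.castHom dvd_rfl D, fun c ↦ ?_⟩
  obtain rfl | rfl := hD c
  exacts [⟨0, map_zero _⟩, ⟨1, map_one _⟩]

end TwoElement

section CommonKernel

variable {D E : Type*} [DivisionRing D] [AddCommGroup E] [Module D E]
  {V : AddSubgroup (End D E)} {x y : E} {g f : Dual D E}

namespace IsDualPair

variable (P : IsDualPair x y g f) (hV : ∀ M ∈ V, IsNilpotent M) {p : D}

include P hV

theorem apply_left_eq_zero [FiniteDimensional D E] (hE : 3 ≤ finrank D E)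
    (hT : ∀ r : Dual D E, r x = 0 → r y = 0 → r.smulRight x ∈ V)
    (hS : ∀ u, g u = 0 → f u = 0 → f.smulRight u ∈ V) {M : End D E} (hM : M ∈ V) : M x = 0 := by
  have hrM {r : Dual D E} (hrx : r x = 0) (hry : r y = 0) {N : End D E} (hN : N ∈ V) (k : ℕ) :
      r ((N ^ k) x) = 0 :=
    dual_pow_apply_eq_zero (hV N hN) (hV _ (V.add_mem hN (hT r hrx hry))) k
  have hfM : f (M x) = 0 := by
    obtain ⟨u, hu, hgu, hfu⟩ := P.exists_middle_ne_zero hE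
    obtain ⟨r, hrx, hry, hru, -⟩ := P.exists_dual_middle_ne_zero hu hgu hfu hu hgu hfu
    have hMM : r (M (M x)) = 0 := by simpa [pow_two] using hrM hrx hry hM 2
    have hNN := hrM hrx hry (V.add_mem hM (hS u hgu hfu)) 2
    simpa [pow_two, P.right_left, hMM, hru] using hNN
  have hmid : middle x y g f (M x) = 0 := by
    by_contra hne
    obtain ⟨r, hrx, hry, hr, -⟩ := P.exists_dual_middle_ne_zero hne (P.left_middle _)
      (P.right_middle _) hne (P.left_middle _) (P.right_middle _)
    rw [apply_middle g f hrx hry] at hr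
    exact hr (by simpa using hrM hrx hry hM 1)
  have heig : M x = g (M x) • x := by
    simpa [middle_apply, hfM, sub_eq_zero] using hmid
  rw [heig, eigenvalue_eq_zero (hV M hM) P.left_ne_zero heig, zero_smul]

theorem add_eq_zero_of_forms {N : End D E} (hN : N ∈ V) {c : D} (hNy : N y = x + c • y)
    (hp : p ≠ 0)
    (hT : ∀ r : Dual D E, r ≠ 0 → r x = 0 → r y = 0 → r.smulRight x + g.smulRight (p • y) ∈ V)
    {r s : Dual D E} (hr : r ≠ 0) (hrx : r x = 0) (hry : r y = 0) (hs : s ≠ 0) (hsx : s x = 0)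
    (hsy : s y = 0) : r + s = 0 := by
  by_contra hrs
  have hmem : g.smulRight (p • y) ∈ V := by
    convert V.sub_mem (V.add_mem (hT r hr hrx hry) (hT s hs hsx hsy))
      (hT (r + s) hrs (by simp [hrx, hsx]) (by simp [hry, hsy])) using 1
    ext v
    simp [add_smul]
    abel
  have := dual_pow_apply_eq_zero (hV N hN) (hV _ (V.add_mem hN hmem)) 1
  exact hp (by simpa [hNy, P.left_left, P.left_right] using this)

omit hV in
theorem eq_zero_or_eq_one_of_forms [FiniteDimensional D E] (hE : 3 ≤ finrank D E)
    (hadd : ∀ r s : Dual D E, r ≠ 0 → r x = 0 → r y = 0 → s ≠ 0 → s x = 0 → s y = 0 → r + s = 0)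
    (c : D) : c = 0 ∨ c = 1 := by
  obtain ⟨u, hu, hgu, hfu⟩ := P.exists_middle_ne_zero hE
  obtain ⟨r, hrx, hry, hru, -⟩ := P.exists_dual_middle_ne_zero hu hgu hfu hu hgu hfu
  have hr : r ≠ 0 := by
    rintro rfl
    exact hru rfl
  have eq_neg_one {a : D} (ha : a ≠ 0) : a = -1 := by
    have hra : r <• a ≠ 0 := fun h0 ↦ by simpa [hru, ha] using DFunLike.congr_fun h0 u
    have := DFunLike.congr_fun
      (hadd (r <• a) r hra (by simp [hrx]) (by simp [hry]) hr hrx hry) u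
    have h0 : r u * (a + 1) = 0 := by simpa [mul_add] using this
    exact eq_neg_of_add_eq_zero_left ((mul_eq_zero.1 h0).resolve_left hru)
  refine or_iff_not_imp_left.2 fun hc ↦ ?_
  rw [eq_neg_one hc, ← eq_neg_one one_ne_zero]

omit hV in
theorem eq_sum_coordinates
    (hadd : ∀ r s : Dual D E, r ≠ 0 → r x = 0 → r y = 0 → s ≠ 0 → s x = 0 → s y = 0 → r + s = 0)
    {u : E} (hgu : g u = 0) (hfu : f u = 0) {r : Dual D E} (hrx : r x = 0) (hry : r y = 0)
    (hru : r u = 1) (v : E) : v = g v • x + r v • u + f v • y := by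
  have hr : r ≠ 0 := by
    rintro rfl
    exact zero_ne_one hru
  have hmem := P.middle_mem_span_singleton hgu hfu (v := v) fun s hsx hsy hsu ↦ by
    by_contra hsv
    have hs : s ≠ 0 := by
      rintro rfl
      exact hsv rfl
    simpa [hsu, hru] using DFunLike.congr_fun (hadd r s hr hrx hry hs hsx hsy) u
  obtain ⟨a, ha⟩ := Submodule.mem_span_singleton.1 hmem
  have hra : a = r v := by simpa [hru, apply_middle g f hrx hry] using congrArg r ha
  rw [← hra, ha, middle_apply]
  abel

omit P hV in
theorem finrank_le_three_of_eq_sum {u : E} {r : Dual D E}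
    (hsum : ∀ v, v = g v • x + r v • u + f v • y) : finrank D E ≤ 3 := by
  have htop : Submodule.span D (Set.range ![x, u, y]) = ⊤ := by
    refine Submodule.eq_top_iff'.2 fun v ↦ ?_
    rw [Submodule.mem_span_range_iff_exists_fun]
    exact ⟨![g v, r v, f v], by simpa [Fin.sum_univ_three] using (hsum v).symm⟩
  have hcard := finrank_range_le_card (R := D) ![x, u, y]
  rwa [Set.finrank, htop, finrank_top, Fintype.card_fin] at hcard

omit hV in
theorem exists_mem_coordinates (φ : ZMod 2 →+* D) {u : E} (hgu : g u = 0) (hfu : f u = 0)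
    {r : Dual D E} (hrx : r x = 0) (hry : r y = 0) (hru : r u = 1)
    (hT : r.smulRight x + g.smulRight y ∈ V) (hS : f.smulRight u - g.smulRight y ∈ V)
    {N : End D E} (hN : N ∈ V) {a b c d e s t : ZMod 2} (hNx : N x = φ a • x + φ b • u + φ d • y)
    (hNu : N u = φ s • x + φ c • u + φ e • y) (hNy : N y = x + φ t • y) (σ τ : ZMod 2) :
    ∃ X ∈ V, X x = φ a • x + φ b • u + φ (d + σ - τ) • y ∧
      X u = φ (s + σ) • x + φ c • u + φ e • y ∧ X y = x + φ τ • u + φ t • y := by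
  have nsmul_eq (ρ : ZMod 2) (v : E) : ρ.val • v = φ ρ • v := by
    rw [← Nat.cast_smul_eq_nsmul D, ← map_natCast φ, ZMod.natCast_zmod_val]
  refine ⟨N + σ.val • (r.smulRight x + g.smulRight y) + τ.val • (f.smulRight u - g.smulRight y),
    V.add_mem (V.add_mem hN (V.nsmul_mem hT _)) (V.nsmul_mem hS _), ?_, ?_, ?_⟩
  all_goals
    simp only [LinearMap.add_apply, LinearMap.smul_apply, LinearMap.sub_apply, nsmul_eq, hNx, hNu,
      hNy, LinearMap.smulRight_apply, hrx, hry, hru, hgu, hfu, P.left_left, P.left_right,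
      P.right_left, P.right_right, map_add, map_sub, add_smul, sub_smul, zero_smul, one_smul,
      zero_add, add_zero, zero_sub, sub_zero, smul_neg, smul_zero]
    abel

-- The field with two elements in dimension three is what the comparison of forms leaves open.
theorem false_of_two_element [FiniteDimensional D E] (hD : ∀ c : D, c = 0 ∨ c = 1) {u : E}
    (hgu : g u = 0) (hfu : f u = 0) {r : Dual D E} (hrx : r x = 0) (hry : r y = 0) (hru : r u = 1)
    (hsum : ∀ v, v = g v • x + r v • u + f v • y)
    (hT : r.smulRight x + g.smulRight y ∈ V) (hS : f.smulRight u - g.smulRight y ∈ V)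
    {N : End D E} (hN : N ∈ V) {k : D} (hNy : N y = x + k • y) : False := by
  obtain ⟨φ, hφ⟩ := exists_ringHom_zmod_two_surjective hD
  have exists_coordinates (v : E) : ∃ a b d : ZMod 2, v = φ a • x + φ b • u + φ d • y := by
    obtain ⟨a, ha⟩ := hφ (g v)
    obtain ⟨b, hb⟩ := hφ (r v)
    obtain ⟨d, hd⟩ := hφ (f v)
    exact ⟨a, b, d, by rw [ha, hb, hd]; exact hsum v⟩
  obtain ⟨a, b, d, hNx⟩ := exists_coordinates (N x)
  obtain ⟨s, c, e, hNu⟩ := exists_coordinates (N u)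
  obtain ⟨t, rfl⟩ := hφ k
  obtain ⟨σ, τ, hστ⟩ := exists_pow_three_coordinate_ne_zero a b c d e s t
  obtain ⟨X, hX, hXx, hXu, hXy⟩ :=
    P.exists_mem_coordinates φ hgu hfu hrx hry hru hT hS hN hNx hNu hNy σ τ
  have hX3 := pow_three_apply hXx hXu hXy
  rw [pow_eq_zero_of_le (finrank_le_three_of_eq_sum hsum) (pow_finrank_eq_zero (hV X hX)),
    LinearMap.zero_apply] at hX3
  simp only [← map_mul, ← map_add] at hX3
  refine hστ ⟨?_, ?_, ?_⟩ <;> apply φ.injective <;> rw [map_zero]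
  · simpa [P.left_left, P.left_right, hgu] using (congrArg g hX3).symm
  · simpa [hrx, hry, hru] using (congrArg r hX3).symm
  · simpa [P.right_left, P.right_right, hfu] using (congrArg f hX3).symm

theorem constant_eq_zero [FiniteDimensional D E] (hE : 3 ≤ finrank D E)
    (hT : ∀ r : Dual D E, r ≠ 0 → r x = 0 → r y = 0 → r.smulRight x + g.smulRight (p • y) ∈ V)
    (hS : ∀ u, u ≠ 0 → g u = 0 → f u = 0 → f.smulRight u - g.smulRight (p • y) ∈ V)
    {N : End D E} (hN : N ∈ V) {c : D} (hNy : N y = x + c • y) : p = 0 := by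
  by_contra hp
  have hadd : ∀ r s : Dual D E, r ≠ 0 → r x = 0 → r y = 0 → s ≠ 0 → s x = 0 → s y = 0 →
      r + s = 0 := fun _ _ ↦ P.add_eq_zero_of_forms hV hN hNy hp hT
  have hD := P.eq_zero_or_eq_one_of_forms hE hadd
  obtain rfl : p = 1 := (hD p).resolve_left hp
  obtain ⟨u, hu, hgu, hfu⟩ := P.exists_middle_ne_zero hE
  obtain ⟨r, hrx, hry, hru, -⟩ := P.exists_dual_middle_ne_zero hu hgu hfu hu hgu hfu
  have hr : r ≠ 0 := by
    rintro rfl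
    exact hru rfl
  have hru1 := (hD (r u)).resolve_left hru
  have hTr := hT r hr hrx hry
  have hSu := hS u hu hgu hfu
  rw [one_smul] at hTr hSu
  exact P.false_of_two_element hV hD hgu hfu hrx hry hru1
    (P.eq_sum_coordinates hadd hgu hfu hrx hry hru1) hTr hSu hN hNy

omit P in
theorem exists_forall_apply_eq_zero {e : E} {h : Dual D E} (P : IsDualPair e y g h)
    [FiniteDimensional D E] (hE : 3 ≤ finrank D E) (hT : HasColumns V e y) (hS : HasRows V g h)
    {N : End D E} (hN : N ∈ V) {c : D} (hNy : N y = e + c • y) :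
    ∃ x : E, x ≠ 0 ∧ ∀ M ∈ V, M x = 0 := by
  obtain ⟨l, p, Q, hTp, hSp⟩ := P.exists_normalForm hV hT hS
  obtain rfl := Q.constant_eq_zero hV hE hTp hSp hN (c := c - l) (by rw [hNy, sub_smul]; abel)
  refine ⟨_, Q.left_ne_zero, fun M ↦ Q.apply_left_eq_zero hV hE (fun r hrx hry ↦ ?_)
    (fun u hgu hfu ↦ ?_)⟩
  · obtain rfl | hr := eq_or_ne r 0
    · simp
    · simpa using hTp r hr hrx hry
  · obtain rfl | hu := eq_or_ne u 0
    · simp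
    · simpa using hSp u hu hgu hfu

end IsDualPair

end CommonKernel

section Compression

variable (K₀ : Type*) {D E : Type*} [Field K₀] [DivisionRing D] [Algebra K₀ D] [AddCommGroup E]
  [Module D E] [Module K₀ E] [IsScalarTower K₀ D E] {g : Dual D E} {z : E}

/-- The projection of `E` onto `ker g` along `D ∙ z`, where `g z = 1`. -/
def kerProj (hgz : g z = 1) : E →ₗ[D] LinearMap.ker g :=
  (LinearMap.id - g.smulRight z).codRestrict (LinearMap.ker g) fun e ↦ by simp [hgz]

/-- The endomorphism of `ker g` induced by an endomorphism of `E = ker g ⊕ D ∙ z`, that is, its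
upper left block. -/
def compress (hgz : g z = 1) : End D E →ₗ[K₀] End D (LinearMap.ker g) :=
  LinearMap.compRight K₀ (kerProj hgz) ∘ₗ LinearMap.lcomp K₀ E (LinearMap.ker g).subtype

/-- The block `D ∙ z → ker g` of an endomorphism of `E = ker g ⊕ D ∙ z`, given by the image
of `z`. -/
def columnMap (hgz : g z = 1) : End D E →ₗ[K₀] LinearMap.ker g :=
  (kerProj hgz).restrictScalars K₀ ∘ₗ LinearMap.applyₗ' K₀ z

/-- The block `ker g → D` of an endomorphism of `E`. -/
def rowMap (g : Dual D E) : End D E →ₗ[K₀] Dual D (LinearMap.ker g) :=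
  LinearMap.compRight K₀ g ∘ₗ LinearMap.lcomp K₀ E (LinearMap.ker g).subtype

variable {K₀}

theorem coe_kerProj (hgz : g z = 1) (e : E) : (kerProj hgz e : E) = e - g e • z := rfl

theorem coe_compress_apply (hgz : g z = 1) (M : End D E) (u : LinearMap.ker g) :
    (compress K₀ hgz M u : E) = M u - g (M u) • z := rfl

theorem columnMap_apply (hgz : g z = 1) (M : End D E) :
    columnMap K₀ hgz M = kerProj hgz (M z) := rfl

theorem kerProj_coe (hgz : g z = 1) (u : LinearMap.ker g) : kerProj hgz u = u :=
  Subtype.ext <| by simp [coe_kerProj]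

theorem kerProj_self (hgz : g z = 1) : kerProj hgz z = 0 :=
  Subtype.ext <| by simp [coe_kerProj, hgz]

theorem eq_coe_kerProj_add (hgz : g z = 1) (e : E) : e = kerProj hgz e + g e • z := by
  simp [coe_kerProj]

variable {M : End D E}

theorem eq_smulRight_of_apply_eq_zero (hgz : g z = 1) (hMz : M z = 0)
    (hM : compress K₀ hgz M = 0) : M = (g ∘ₗ M).smulRight z := by
  ext e
  have hu := congrArg (Subtype.val) (DFunLike.congr_fun hM (kerProj hgz e))
  rw [coe_compress_apply, coe_kerProj, map_sub, map_smul, hMz, smul_zero, sub_zero] at hu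
  simpa [sub_eq_zero] using hu

theorem eq_smulRight_of_comp_eq_zero (hgz : g z = 1) (hgM : ∀ e, g (M e) = 0)
    (hM : compress K₀ hgz M = 0) : M = g.smulRight (M z) := by
  ext e
  have hu := congrArg (Subtype.val) (DFunLike.congr_fun hM (kerProj hgz e))
  rw [coe_compress_apply, hgM, zero_smul, sub_zero, coe_kerProj, map_sub, map_smul] at hu
  simpa [sub_eq_zero] using hu

theorem isNilpotent_compress_of_apply_eq_zero (hgz : g z = 1) (hM : IsNilpotent M)
    (hMz : M z = 0) : IsNilpotent (compress K₀ hgz M) := by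
  obtain ⟨k, hk⟩ := hM
  have hstep (e : E) : compress K₀ hgz M (kerProj hgz e) = kerProj hgz (M e) :=
    Subtype.ext <| by simp [coe_compress_apply, coe_kerProj, hMz]
  have hpow (j : ℕ) (e : E) :
      (compress K₀ hgz M ^ j) (kerProj hgz e) = kerProj hgz ((M ^ j) e) := by
    induction j generalizing e with
    | zero => rfl
    | succ j ih => rw [pow_succ, pow_succ, Module.End.mul_apply, hstep, ih, Module.End.mul_apply]
  refine ⟨k, LinearMap.ext fun u ↦ ?_⟩
  rw [← kerProj_coe hgz u, hpow, hk, LinearMap.zero_apply, map_zero, LinearMap.zero_apply]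

theorem forall_mem_map_compress_isNilpotent {V : Submodule K₀ (End D E)}
    (hV : ∀ M ∈ V, IsNilpotent M) (hgz : g z = 1) (hVz : ∀ M ∈ V, M z = 0) :
    ∀ N ∈ V.map (compress K₀ hgz), IsNilpotent N := by
  rintro _ ⟨M, hM, rfl⟩
  exact isNilpotent_compress_of_apply_eq_zero hgz (hV M hM) (hVz M hM)

theorem isNilpotent_compress_of_comp_eq_zero (hgz : g z = 1) (hM : IsNilpotent M)
    (hgM : ∀ e, g (M e) = 0) : IsNilpotent (compress K₀ hgz M) := by
  obtain ⟨k, hk⟩ := hM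
  have hpow (j : ℕ) (u : LinearMap.ker g) : ((compress K₀ hgz M ^ j) u : E) = (M ^ j) u := by
    induction j with
    | zero => rfl
    | succ j ih => rw [pow_succ', pow_succ', Module.End.mul_apply, coe_compress_apply, hgM, ih,
        zero_smul, sub_zero, Module.End.mul_apply]
  exact ⟨k, LinearMap.ext fun u ↦ Subtype.ext <| by simp [hpow, hk]⟩

variable (V : Submodule K₀ (End D E))

/-- The endomorphisms in `V` which vanish at `z`. -/
def vanishingAt (z : E) : Submodule K₀ (End D E) :=
  V ⊓ LinearMap.ker (LinearMap.applyₗ' K₀ z)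

/-- The endomorphisms in `V` with image in `ker g`. -/
def mapsToKer (g : Dual D E) : Submodule K₀ (End D E) :=
  V ⊓ LinearMap.ker (LinearMap.compRight K₀ g)

variable {V}

theorem mem_vanishingAt : M ∈ vanishingAt V z ↔ M ∈ V ∧ M z = 0 := Iff.rfl

theorem mem_mapsToKer : M ∈ mapsToKer V g ↔ M ∈ V ∧ ∀ e, g (M e) = 0 :=
  and_congr_right' LinearMap.ext_iff

variable (hV : ∀ M ∈ V, IsNilpotent M)

include hV

theorem inf_ker_columnMap (hgz : g z = 1) :
    V ⊓ LinearMap.ker (columnMap K₀ hgz) = vanishingAt V z := by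
  ext M
  refine and_congr_right fun hM ↦ ⟨fun hMz ↦ ?_, fun hMz ↦ ?_⟩
  · have hz : z ≠ 0 := by
      rintro rfl
      simp at hgz
    have heig : M z = g (M z) • z := by
      simpa [columnMap_apply, coe_kerProj, sub_eq_zero] using congrArg Subtype.val hMz
    change M z = 0
    rw [heig, eigenvalue_eq_zero (hV M hM) hz heig, zero_smul]
  · have hMz : M z = 0 := hMz
    simp [columnMap_apply, hMz]

theorem inf_ker_rowMap (hgz : g z = 1) : V ⊓ LinearMap.ker (rowMap K₀ g) = mapsToKer V g := by
  ext M
  rw [mem_mapsToKer]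
  refine and_congr_right fun hM ↦ ⟨fun hgM ↦ ?_, fun hgM ↦ LinearMap.ext fun u ↦ hgM u⟩
  have hg : g ≠ 0 := by
    rintro rfl
    simp at hgz
  have heig (e : E) : g (M e) = g e * g (M z) := by
    have hu : g (M (kerProj hgz e)) = 0 := DFunLike.congr_fun hgM (kerProj hgz e)
    simpa [coe_kerProj, sub_eq_zero] using hu
  intro e
  rw [heig, left_eigenvalue_eq_zero (hV M hM) hg heig, mul_zero]

theorem forall_mem_map_vanishingAt_isNilpotent (hgz : g z = 1) :
    ∀ N ∈ (vanishingAt V z).map (compress K₀ hgz), IsNilpotent N := by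
  exact forall_mem_map_compress_isNilpotent (fun M hM ↦ hV M (mem_vanishingAt.1 hM).1) hgz
    fun M hM ↦ (mem_vanishingAt.1 hM).2

theorem forall_mem_map_mapsToKer_isNilpotent (hgz : g z = 1) :
    ∀ N ∈ (mapsToKer V g).map (compress K₀ hgz), IsNilpotent N := by
  rintro _ ⟨M, hM, rfl⟩
  rw [SetLike.mem_coe, mem_mapsToKer] at hM
  exact isNilpotent_compress_of_comp_eq_zero hgz (hV M hM.1) hM.2

end Compression

section Dimension

variable {K₀ : Type*} [Field K₀]

theorem finrank_map_add_finrank_inf_ker {A B : Type*} [AddCommGroup A] [Module K₀ A]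
    [AddCommGroup B] [Module K₀ B] [FiniteDimensional K₀ A] (V : Submodule K₀ A) (φ : A →ₗ[K₀] B) :
    finrank K₀ (V.map φ) + finrank K₀ ↥(V ⊓ LinearMap.ker φ) = finrank K₀ V := by
  rw [← LinearMap.finrank_range_add_finrank_ker (φ.domRestrict V), LinearMap.range_domRestrict,
    LinearMap.ker_domRestrict, ← Submodule.finrank_map_subtype_eq, Submodule.map_comap_subtype]

theorem finrank_map_of_forall_eq_zero {A B : Type*} [AddCommGroup A] [Module K₀ A]
    [AddCommGroup B] [Module K₀ B] [FiniteDimensional K₀ A] {V : Submodule K₀ A} {φ : A →ₗ[K₀] B}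
    (hφ : ∀ M ∈ V, φ M = 0 → M = 0) : finrank K₀ (V.map φ) = finrank K₀ V := by
  have hker : V ⊓ LinearMap.ker φ = ⊥ := (Submodule.eq_bot_iff _).2 fun M hM ↦ hφ M hM.1 hM.2
  rw [← finrank_map_add_finrank_inf_ker V φ, hker, finrank_bot, add_zero]

variable {D E F : Type*} [DivisionRing D] [Algebra K₀ D] [FiniteDimensional K₀ D]
  [AddCommGroup E] [Module D E] [FiniteDimensional D E]
  [AddCommGroup F] [Module D F] [Module K₀ F] [IsScalarTower K₀ D F] [FiniteDimensional D F]

instance finiteDimensional_linearMap : FiniteDimensional K₀ (E →ₗ[D] F) :=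
  have := Module.Finite.trans (R := K₀) D F
  Module.Finite.equiv ((finBasis D E).constr K₀)

variable (K₀ D E) in
theorem finrank_dual : finrank K₀ (Dual D E) = finrank K₀ D * finrank D E := by
  rw [← ((finBasis D E).constr K₀ (M' := D)).finrank_eq, finrank_pi_fintype]
  simp [mul_comm]

theorem finrank_eq_finrank_ker_add_one {g : Dual D E} {z : E} (hgz : g z = 1) :
    finrank D E = finrank D (LinearMap.ker g) + 1 :=
  (Dual.finrank_ker_add_one_of_ne_zero (by rintro rfl; simp at hgz)).symm

theorem choose_finrank_two {g : Dual D E} {z : E} (hgz : g z = 1) :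
    (finrank D E).choose 2 =
      finrank D (LinearMap.ker g) + (finrank D (LinearMap.ker g)).choose 2 := by
  rw [finrank_eq_finrank_ker_add_one hgz, Nat.choose_succ_succ', Nat.choose_one_right]

variable [Module K₀ E] [IsScalarTower K₀ D E] {V : Submodule K₀ (End D E)}
  (hV : ∀ M ∈ V, IsNilpotent M) {g : Dual D E} {z : E} (hgz : g z = 1)

include hV hgz

theorem finrank_columnMap_add_finrank_compress (hz : IsAdapted V.toAddSubgroup z) :
    finrank K₀ (V.map (columnMap K₀ hgz)) +
      finrank K₀ ((vanishingAt V z).map (compress K₀ hgz)) = finrank K₀ V := by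
  rw [← finrank_map_add_finrank_inf_ker V (columnMap K₀ hgz), inf_ker_columnMap hV hgz,
    finrank_map_of_forall_eq_zero (φ := compress K₀ hgz)]
  rintro M ⟨hM, hMz⟩ hcM
  have hM' := eq_smulRight_of_apply_eq_zero hgz hMz hcM
  have hgM : g ∘ₗ M = 0 := hz _ (by rwa [← hM'])
  rw [hM', hgM, LinearMap.zero_smulRight]

theorem finrank_rowMap_add_finrank_compress (hg : IsCoadapted V.toAddSubgroup g) :
    finrank K₀ (V.map (rowMap K₀ g)) +
      finrank K₀ ((mapsToKer V g).map (compress K₀ hgz)) = finrank K₀ V := by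
  rw [← finrank_map_add_finrank_inf_ker V (rowMap K₀ g), inf_ker_rowMap hV hgz,
    finrank_map_of_forall_eq_zero (φ := compress K₀ hgz)]
  intro M hM hcM
  rw [mem_mapsToKer] at hM
  have hM' := eq_smulRight_of_comp_eq_zero hgz hM.2 hcM
  have hMz : M z = 0 := hg _ (by rw [← hM']; exact hM.1)
  rw [hM', hMz, LinearMap.smulRight_zero]

omit hV in
theorem finrank_le_add_finrank_compress_of_forall_apply_eq_zero (hVz : ∀ M ∈ V, M z = 0) :
    finrank K₀ V ≤ finrank K₀ D * finrank D (LinearMap.ker g) +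
      finrank K₀ (V.map (compress K₀ hgz)) := by
  have hinj : ∀ M ∈ V ⊓ LinearMap.ker (compress K₀ hgz), rowMap K₀ g M = 0 → M = 0 := by
    rintro M ⟨hM, hcM⟩ hrow
    ext e
    have hu : g (M (kerProj hgz e)) = 0 := DFunLike.congr_fun hrow (kerProj hgz e)
    rw [LinearMap.zero_apply, eq_coe_kerProj_add hgz e, map_add, map_smul, hVz M hM, smul_zero,
      add_zero, DFunLike.congr_fun (eq_smulRight_of_apply_eq_zero hgz (hVz M hM) hcM),
      LinearMap.smulRight_apply, LinearMap.comp_apply, hu, zero_smul]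
  rw [← finrank_map_add_finrank_inf_ker V (compress K₀ hgz), add_comm,
    ← finrank_map_of_forall_eq_zero hinj, ← finrank_dual]
  gcongr
  exact Submodule.finrank_le _

end Dimension

section Bound

universe u

variable {K₀ : Type*} [Field K₀] {D : Type*} [DivisionRing D] [Algebra K₀ D]
  [FiniteDimensional K₀ D]

theorem finrank_le_of_forall_isNilpotent {E : Type u} [AddCommGroup E] [Module D E] [Module K₀ E]
    [IsScalarTower K₀ D E] [FiniteDimensional D E] {V : Submodule K₀ (End D E)}
    (hV : ∀ M ∈ V, IsNilpotent M) :
    finrank K₀ V ≤ finrank K₀ D * (finrank D E).choose 2 := by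
  induction hn : finrank D E generalizing E with
  | zero =>
    have := finrank_zero_iff.1 hn
    simp [(Submodule.eq_bot_iff V).2 fun M _ ↦ Subsingleton.elim M 0]
  | succ n ih =>
    have := nontrivial_of_finrank_pos (R := D) (M := E) (by omega)
    obtain ⟨H, hH, hHV⟩ := exists_forall_notMem_isAdapted (V := V.toAddSubgroup) hV
    obtain ⟨z, -, hz⟩ := SetLike.exists_of_lt hH.lt_top
    obtain ⟨g, hgz⟩ := exists_dual_eq_one (D := D) (x := z) fun h ↦ hz (h ▸ H.zero_mem)
    have hker : finrank D (LinearMap.ker g) = n := by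
      have := finrank_eq_finrank_ker_add_one hgz
      omega
    have := Module.Finite.trans (R := K₀) D (LinearMap.ker g)
    rw [← finrank_columnMap_add_finrank_compress hV hgz (hHV z hz), ← hn, choose_finrank_two hgz,
      mul_add, finrank_mul_finrank, hker]
    exact Nat.add_le_add (Submodule.finrank_le _)
      (ih (forall_mem_map_vanishingAt_isNilpotent hV hgz) hker)

variable {E : Type*} [AddCommGroup E] [Module D E] [Module K₀ E] [IsScalarTower K₀ D E]
  [FiniteDimensional D E] {V : Submodule K₀ (End D E)} (hV : ∀ M ∈ V, IsNilpotent M)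
  (hdim : finrank K₀ V = finrank K₀ D * (finrank D E).choose 2) {g : Dual D E} {z : E}
  (hgz : g z = 1)

include hV hdim

theorem finrank_compress_vanishingAt (hz : IsAdapted V.toAddSubgroup z) :
    finrank K₀ ((vanishingAt V z).map (compress K₀ hgz)) =
      finrank K₀ D * (finrank D (LinearMap.ker g)).choose 2 := by
  have := Module.Finite.trans (R := K₀) D (LinearMap.ker g)
  have hle := finrank_le_of_forall_isNilpotent (forall_mem_map_vanishingAt_isNilpotent hV hgz)
  have hcol := Submodule.finrank_le (V.map (columnMap K₀ hgz))
  rw [← finrank_columnMap_add_finrank_compress hV hgz hz, choose_finrank_two hgz,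
    mul_add, finrank_mul_finrank] at hdim
  omega

theorem map_columnMap_eq_top (hz : IsAdapted V.toAddSubgroup z) :
    V.map (columnMap K₀ hgz) = ⊤ := by
  have := Module.Finite.trans (R := K₀) D (LinearMap.ker g)
  refine Submodule.eq_top_of_finrank_eq ?_
  have hcompress := finrank_compress_vanishingAt hV hdim hgz hz
  rw [← finrank_columnMap_add_finrank_compress hV hgz hz, choose_finrank_two hgz,
    mul_add, finrank_mul_finrank] at hdim
  omega

theorem finrank_compress_mapsToKer (hg : IsCoadapted V.toAddSubgroup g) :
    finrank K₀ ((mapsToKer V g).map (compress K₀ hgz)) =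
      finrank K₀ D * (finrank D (LinearMap.ker g)).choose 2 := by
  have hle := finrank_le_of_forall_isNilpotent (forall_mem_map_mapsToKer_isNilpotent hV hgz)
  have hrow := Submodule.finrank_le (V.map (rowMap K₀ g))
  rw [← finrank_rowMap_add_finrank_compress hV hgz hg, choose_finrank_two hgz, mul_add] at hdim
  rw [finrank_dual] at hrow
  omega

theorem finrank_compress_of_forall_apply_eq_zero (hVz : ∀ M ∈ V, M z = 0) :
    finrank K₀ (V.map (compress K₀ hgz)) =
      finrank K₀ D * (finrank D (LinearMap.ker g)).choose 2 := by
  have hle := finrank_le_of_forall_isNilpotent (forall_mem_map_compress_isNilpotent hV hgz hVz)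
  have hge := finrank_le_add_finrank_compress_of_forall_apply_eq_zero hgz hVz
  rw [choose_finrank_two hgz, mul_add] at hdim
  omega

end Bound

section StrictlyTriangular

variable (K₀ : Type*) {D E : Type*} [Field K₀] [DivisionRing D] [Algebra K₀ D] [AddCommGroup E]
  [Module D E] [Module K₀ E] [IsScalarTower K₀ D E] {n : ℕ}

/-- The endomorphisms which are strictly triangular in the basis `b`: each `b i` is sent to a
combination of the later basis vectors. -/
def strictlyTriangular (b : Basis (Fin n) D E) : Submodule K₀ (End D E) where
  carrier := {M | ∀ i, M (b i) ∈ Submodule.span D (b '' Set.Ioi i)}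
  zero_mem' _ := Submodule.zero_mem _
  add_mem' hM hN i := Submodule.add_mem _ (hM i) (hN i)
  smul_mem' c _ hM i := Submodule.smul_of_tower_mem _ c (hM i)

variable {K₀}

theorem mem_strictlyTriangular_iff_repr {b : Basis (Fin n) D E} {M : End D E} :
    M ∈ strictlyTriangular K₀ b ↔ ∀ i j, j ≤ i → b.repr (M (b i)) j = 0 := by
  refine forall_congr' fun i ↦ (b.mem_span_image).trans ?_
  simp only [Set.subset_def, Finset.mem_coe, Finsupp.mem_support_iff, Set.mem_Ioi, ← not_le,
    not_imp_not]

theorem apply_last_eq_zero {b : Basis (Fin (n + 1)) D E} {M : End D E}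
    (hM : M ∈ strictlyTriangular K₀ b) : M (b (Fin.last n)) = 0 := by
  simpa [← Fin.top_eq_last] using hM (Fin.last n)

theorem smulRight_last_mem {b : Basis (Fin (n + 1)) D E} {r : Dual D E}
    (hr : r (b (Fin.last n)) = 0) : r.smulRight (b (Fin.last n)) ∈ strictlyTriangular K₀ b := by
  intro i
  obtain rfl | hi := eq_or_ne i (Fin.last n)
  · simp [hr]
  · exact Submodule.smul_mem _ _
      (Submodule.subset_span (Set.mem_image_of_mem b (Fin.lt_last_iff_ne_last.2 hi)))

theorem coord_zero_smulRight_mem {b : Basis (Fin (n + 1)) D E} {u : E} (hu : b.coord 0 u = 0) :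
    (b.coord 0).smulRight u ∈ strictlyTriangular K₀ b := by
  rw [mem_strictlyTriangular_iff_repr]
  rintro i j hji
  obtain rfl | hi := eq_or_ne i 0
  · obtain rfl := Fin.le_zero_iff.1 hji
    simpa using hu
  · simp [Finsupp.single_eq_of_ne' hi]

theorem card_sigma_fin_fin : Fintype.card ((j : Fin n) × Fin j) = n.choose 2 := by
  simp [Fin.sum_univ_eq_sum_range (fun i ↦ i) n, Finset.sum_range_id, Nat.choose_two_right]

theorem finrank_strictlyTriangular_le [FiniteDimensional K₀ D] (b : Basis (Fin n) D E) :
    finrank K₀ (strictlyTriangular K₀ b) ≤ finrank K₀ D * n.choose 2 := by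
  let entries : strictlyTriangular K₀ b →ₗ[K₀] ((j : Fin n) × Fin j) → D :=
    { toFun M p := b.repr (M.1 (b ⟨p.2, p.2.2.trans p.1.2⟩)) p.1
      map_add' M N := by ext p; simp
      map_smul' c M := by
        ext p
        change b.repr (c • M.1 _) _ = c • b.repr (M.1 _) _
        rw [← algebraMap_smul D c, map_smul, Finsupp.smul_apply, algebraMap_smul] }
  have hinj : Function.Injective entries := by
    rw [injective_iff_map_eq_zero]
    refine fun M hM ↦ Subtype.ext <| b.ext fun i ↦ b.repr.injective <| Finsupp.ext fun j ↦ ?_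
    obtain hji | hij := le_or_gt j i
    · simpa using mem_strictlyTriangular_iff_repr.1 M.2 i j hji
    · exact (congrFun hM ⟨j, ⟨i, hij⟩⟩).trans (by simp)
  refine (LinearMap.finrank_le_finrank_of_injective hinj).trans_eq ?_
  rw [finrank_pi_fintype, Finset.sum_const, Finset.card_univ, card_sigma_fin_fin, smul_eq_mul,
    mul_comm]

theorem eq_strictlyTriangular_of_le [FiniteDimensional K₀ D] {b : Basis (Fin n) D E}
    {V : Submodule K₀ (End D E)} (hVb : V ≤ strictlyTriangular K₀ b)
    (hV : finrank K₀ V = finrank K₀ D * n.choose 2) : V = strictlyTriangular K₀ b := by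
  have := Module.Finite.of_basis b
  exact Submodule.eq_of_le_of_finrank_le hVb (hV ▸ finrank_strictlyTriangular_le b)

theorem le_strictlyTriangular_of_compress_le {g : Dual D E} {x : E} (hgx : g x = 1)
    {V : Submodule K₀ (End D E)} (hVx : ∀ M ∈ V, M x = 0) {b : Basis (Fin n) D (LinearMap.ker g)}
    (hb : V.map (compress K₀ hgx) ≤ strictlyTriangular K₀ b) :
    ∃ b' : Basis (Fin (n + 1)) D E, V ≤ strictlyTriangular K₀ b' := by
  let b' : Basis (Fin (n + 1)) D E := Basis.mkFinSnoc b x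
    (fun c u hu hcx ↦ by simpa [LinearMap.mem_ker.1 hu, hgx] using congrArg g hcx)
    (fun v ↦ ⟨-g v, by simp [hgx]⟩)
  have hb'last : b' (Fin.last n) = x := by simp [b']
  have hb' (i : Fin n) : b' i.castSucc = b i := by simp [b']
  refine ⟨b', fun M hM ↦ Fin.lastCases ?_ fun i ↦ ?_⟩
  · rw [hb'last, hVx M hM]
    exact Submodule.zero_mem _
  · have hspan : (LinearMap.ker g).subtype (compress K₀ hgx M (b i)) ∈
        Submodule.span D (b' '' Set.Ioi i.castSucc) := by
      refine Submodule.span_le (p := (Submodule.span D (b' '' Set.Ioi i.castSucc)).comap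
        (LinearMap.ker g).subtype).2 ?_ (hb (Submodule.mem_map_of_mem hM) i)
      rintro _ ⟨j, hj, rfl⟩
      exact Submodule.subset_span ⟨j.castSucc, Fin.castSucc_lt_castSucc_iff.2 hj, hb' j⟩
    have hx : x ∈ Submodule.span D (b' '' Set.Ioi i.castSucc) :=
      Submodule.subset_span ⟨Fin.last n, Fin.castSucc_lt_last i, hb'last⟩
    rw [hb']
    simpa [coe_compress_apply] using
      Submodule.add_mem _ hspan (Submodule.smul_mem _ (g (M (b i))) hx)

end StrictlyTriangular

section HyperplaneData

variable {K₀ D E : Type*} [Field K₀] [DivisionRing D] [Algebra K₀ D] [AddCommGroup E]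
  [Module D E] [Module K₀ E] [IsScalarTower K₀ D E] {V : Submodule K₀ (End D E)} {n : ℕ}

theorem hasColumns_of_map_compress_eq {g : Dual D E} {y : E} (hgy : g y = 1)
    {b : Basis (Fin (n + 1)) D (LinearMap.ker g)}
    (hb : (vanishingAt V y).map (compress K₀ hgy) = strictlyTriangular K₀ b) :
    HasColumns V.toAddSubgroup (b (Fin.last n) : E) y := by
  intro r hre hry
  obtain ⟨M, ⟨hM, hMy⟩, hMr⟩ := hb.ge
    (smulRight_last_mem (b := b) (r := r ∘ₗ (LinearMap.ker g).subtype) hre)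
  have hMy : M y = 0 := hMy
  have hMr : compress K₀ hgy (M - r.smulRight (b (Fin.last n) : E)) = 0 := by
    rw [map_sub, hMr, sub_eq_zero]
    ext u
    simp [coe_compress_apply]
  have hM' := eq_smulRight_of_apply_eq_zero hgy (by simp [hMy, hry]) hMr
  exact ⟨g ∘ₗ (M - r.smulRight (b (Fin.last n) : E)), by simp [hMy, hry],
    by rwa [← hM', add_sub_cancel]⟩

theorem exists_apply_last_eq_smul {g : Dual D E} {y : E} (hgy : g y = 1)
    {b : Basis (Fin (n + 1)) D (LinearMap.ker g)}
    (hb : (vanishingAt V y).map (compress K₀ hgy) = strictlyTriangular K₀ b) {M : End D E}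
    (hM : M ∈ V) (hMy : M y = 0) : ∃ c : D, M (b (Fin.last n)) = c • y := by
  have hlast := apply_last_eq_zero (hb.le (Submodule.mem_map_of_mem ⟨hM, hMy⟩))
  exact ⟨_, by simpa [coe_compress_apply, sub_eq_zero] using congrArg Subtype.val hlast⟩

theorem exists_mem_apply_eq_add_smul {g : Dual D E} {y : E} (hgy : g y = 1)
    (htop : V.map (columnMap K₀ hgy) = ⊤) (u : LinearMap.ker g) :
    ∃ N ∈ V, ∃ c : D, N y = u + c • y := by
  obtain ⟨N, hN, rfl⟩ := htop.ge (Submodule.mem_top (x := u))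
  exact ⟨N, hN, g (N y), eq_coe_kerProj_add hgy (N y)⟩

variable {g : Dual D E} {e : E} (hge : g e = 1) {b : Basis (Fin (n + 1)) D (LinearMap.ker g)}
  (hb : (mapsToKer V g).map (compress K₀ hge) = strictlyTriangular K₀ b)

include hb

theorem hasRows_of_map_compress_eq :
    HasRows V.toAddSubgroup g (b.coord 0 ∘ₗ kerProj hge) := by
  intro u hgu hu
  obtain ⟨u, rfl⟩ : ∃ u' : LinearMap.ker g, (u' : E) = u := ⟨⟨u, hgu⟩, rfl⟩
  rw [LinearMap.comp_apply, kerProj_coe] at hu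
  obtain ⟨M, hM, hMu⟩ := hb.ge (coord_zero_smulRight_mem hu)
  rw [SetLike.mem_coe, mem_mapsToKer] at hM
  refine ⟨M e, hM.2 e, ?_⟩
  have hMu : compress K₀ hge (M - (b.coord 0 ∘ₗ kerProj hge).smulRight (u : E)) = 0 := by
    rw [map_sub, hMu, sub_eq_zero]
    ext v
    simp [coe_compress_apply, kerProj_coe, LinearMap.mem_ker.1 u.2]
  have hM' := eq_smulRight_of_comp_eq_zero hge
    (fun v ↦ by simp [hM.2, LinearMap.mem_ker.1 u.2]) hMu
  have hMe : (M - (b.coord 0 ∘ₗ kerProj hge).smulRight (u : E)) e = M e := by simp [kerProj_self]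
  rw [hMe, sub_eq_iff_eq_add'] at hM'
  exact hM' ▸ hM.1

-- Otherwise the row at `y` would be a rank one element of `V` with image `D ∙ y`.
theorem coord_zero_kerProj_ne_zero {y : E} (hgy : g y = 0) (hy : IsAdapted V.toAddSubgroup y)
    (hVe : ∀ M ∈ V, M y = 0 → ∃ c : D, M e = c • y) : b.coord 0 (kerProj hge y) ≠ 0 := by
  intro hby
  obtain ⟨ψ, -, hψ⟩ := hasRows_of_map_compress_eq hge hb y hgy hby
  obtain ⟨c, hc⟩ := hVe _ hψ (by simpa [hgy] using Or.inl hby)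
  have hc : ψ = c • y := by simpa [hge, kerProj_self] using hc
  have hzero : b.coord 0 ∘ₗ kerProj hge + g <• c = 0 := by
    refine hy _ ?_
    convert hψ using 1
    ext v
    simp [hc, add_smul, mul_smul]
  have := DFunLike.congr_fun hzero (b 0 : E)
  simp [kerProj_coe] at this

end HyperplaneData

section Flag

universe u

variable {K₀ D : Type*} [Field K₀] [DivisionRing D] [Algebra K₀ D]

theorem HasRows.op_smul {E : Type*} [AddCommGroup E] [Module D E] {V : AddSubgroup (End D E)}
    {g h : Dual D E} (hS : HasRows V g h) {c : D} (hc : c ≠ 0) : HasRows V g (h <• c) := by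
  intro u hgu hhu
  have hhu : h u = 0 := by simpa [hc] using hhu
  obtain ⟨ψ, hgψ, hψ⟩ := hS (c • u) (by simp [hgu]) (by simp [hhu])
  refine ⟨ψ, hgψ, ?_⟩
  convert hψ using 1
  ext v
  simp [mul_smul]

variable [FiniteDimensional K₀ D] {E : Type u} [AddCommGroup E] [Module D E] [Module K₀ E]
  [IsScalarTower K₀ D E] [FiniteDimensional D E] {V : Submodule K₀ (End D E)}
  (hV : ∀ M ∈ V, IsNilpotent M)
  (hdim : finrank K₀ V = finrank K₀ D * (finrank D E).choose 2)

include hV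

include hdim

theorem exists_forall_apply_eq_zero_of_finrank_eq_two (hE : finrank D E = 2) :
    ∃ x : E, x ≠ 0 ∧ ∀ M ∈ V, M x = 0 := by
  have := nontrivial_of_finrank_pos (R := D) (M := E) (by omega)
  have hne : V ≠ ⊥ := by
    rintro rfl
    have hzero : 0 = finrank K₀ D := by simpa [hE] using hdim
    exact finrank_pos.ne hzero
  obtain ⟨M, hM, hM0⟩ := Submodule.exists_mem_ne_zero_of_ne_bot hne
  obtain ⟨x, hx, hMx⟩ := exists_ne_zero_apply_eq_zero (hV M hM)
  obtain ⟨g, hgx⟩ := exists_dual_eq_one (D := D) hx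
  have hker : finrank D (LinearMap.ker g) = 1 := by
    have := finrank_eq_finrank_ker_add_one hgx
    omega
  set f : Dual D E := g ∘ₗ M
  have hMf : M = f.smulRight x := eq_smulRight_of_apply_eq_zero hgx hMx
    (eq_zero_of_finrank_eq_one
      (isNilpotent_compress_of_apply_eq_zero (K₀ := K₀) hgx (hV M hM) hMx) hker)
  have hf : f ≠ 0 := fun hf ↦ hM0 (by rw [hMf, hf, LinearMap.zero_smulRight])
  have hfx : f x = 0 := by simp [f, hMx]
  have hkerf : finrank D (LinearMap.ker f) = 1 := by
    have := Dual.finrank_ker_add_one_of_ne_zero hf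
    omega
  refine ⟨x, hx, fun N hN ↦ ?_⟩
  have hfN : f (N x) = 0 := by
    simpa using dual_pow_apply_eq_zero (hV N hN) (hV _ (V.add_mem hN (hMf ▸ hM))) 1
  obtain ⟨a, ha⟩ := (finrank_eq_one_iff_of_nonzero' (⟨x, hfx⟩ : LinearMap.ker f)
    (by simpa [Subtype.ext_iff] using hx)).1 hkerf ⟨N x, hfN⟩
  have heig : N x = a • x := (congrArg Subtype.val ha).symm
  rw [heig, eigenvalue_eq_zero (hV N hN) hx heig, zero_smul]

omit hdim [FiniteDimensional K₀ D] in
theorem exists_isAdapted_and_isCoadapted (hE : 2 ≤ finrank D E) :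
    ∃ y x₀ : E, IsAdapted V.toAddSubgroup y ∧ y ≠ 0 ∧ x₀ ∉ Submodule.span D {y} ∧
      ∀ g : Dual D E, g x₀ ≠ 0 → IsCoadapted V.toAddSubgroup g := by
  have := nontrivial_of_finrank_pos (R := D) (M := E) (by omega)
  obtain ⟨H, hH, hHV⟩ := exists_forall_notMem_isAdapted (V := V.toAddSubgroup) hV
  obtain ⟨x₀, hx₀, hx₀V⟩ := exists_forall_apply_ne_zero_isCoadapted (V := V.toAddSubgroup) hV
  have hspan : Submodule.span D {x₀} ≠ ⊤ := by
    intro htop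
    have := finrank_span_singleton (K := D) hx₀
    rw [htop, finrank_top] at this
    omega
  obtain ⟨y, hyH, hyx⟩ := exists_notMem_and_notMem hH hspan
  refine ⟨y, x₀, hHV y hyH, fun hy ↦ hyH (hy ▸ H.zero_mem),
    fun hx ↦ ?_, hx₀V⟩
  obtain ⟨c, rfl⟩ := Submodule.mem_span_singleton.1 hx
  exact hyx (Submodule.mem_span_singleton.2 ⟨c⁻¹, inv_smul_smul₀ (left_ne_zero_of_smul hx₀) y⟩)

theorem exists_forall_apply_eq_zero_of_three_le {n : ℕ} (hE : finrank D E = n + 3)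
    (ih : ∀ g : Dual D E, finrank D (LinearMap.ker g) = n + 2 →
      ∀ W : Submodule K₀ (End D (LinearMap.ker g)), (∀ N ∈ W, IsNilpotent N) →
        finrank K₀ W = finrank K₀ D * (finrank D (LinearMap.ker g)).choose 2 →
        ∃ b : Basis (Fin (n + 2)) D (LinearMap.ker g), W = strictlyTriangular K₀ b) :
    ∃ x : E, x ≠ 0 ∧ ∀ M ∈ V, M x = 0 := by
  have finrank_ker {g : Dual D E} {z : E} (hgz : g z = 1) :
      finrank D (LinearMap.ker g) = n + 2 := by
    have := finrank_eq_finrank_ker_add_one hgz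
    omega
  obtain ⟨y, x₀, hyV, hy, hx₀y, hx₀V⟩ := exists_isAdapted_and_isCoadapted hV (by omega)
  obtain ⟨g₁, hg₁y⟩ := exists_dual_eq_one (D := D) hy
  obtain ⟨b₁, hb₁⟩ := ih g₁ (finrank_ker hg₁y) _
    (forall_mem_map_vanishingAt_isNilpotent hV hg₁y) (finrank_compress_vanishingAt hV hdim hg₁y hyV)
  set e : E := ↑(b₁ (Fin.last (n + 1)))
  have he : e ∉ Submodule.span D {y} := notMem_span_singleton_of_apply_eq_zero hg₁y
    (b₁ (Fin.last (n + 1))).2 (by simpa [e] using b₁.ne_zero (Fin.last (n + 1)))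
  obtain ⟨f, hfy, hfx₀, hfe⟩ := exists_dual_ne_zero_and_ne_zero hx₀y he
  set g : Dual D E := f <• (f e)⁻¹
  have hgy : g y = 0 := by simp [g, hfy y (Submodule.mem_span_singleton_self y)]
  have hge : g e = 1 := by simp [g, hfe]
  have hgV : IsCoadapted V.toAddSubgroup g := hx₀V g (by simp [g, hfe, hfx₀])
  obtain ⟨b₂, hb₂⟩ := ih g (finrank_ker hge) _
    (forall_mem_map_mapsToKer_isNilpotent hV hge) (finrank_compress_mapsToKer hV hdim hge hgV)
  have hhy := coord_zero_kerProj_ne_zero hge hb₂ hgy hyV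
    fun M ↦ exists_apply_last_eq_smul hg₁y hb₁
  obtain ⟨N, hN, c, hNy⟩ := exists_mem_apply_eq_add_smul hg₁y
    (map_columnMap_eq_top hV hdim hg₁y hyV) (b₁ (Fin.last (n + 1)))
  exact IsDualPair.exists_forall_apply_eq_zero (V := V.toAddSubgroup) hV
    ⟨hge, hgy, by simp [kerProj_self], mul_inv_cancel₀ hhy⟩ (by omega)
    (hasColumns_of_map_compress_eq hg₁y hb₁)
    ((hasRows_of_map_compress_eq hge hb₂).op_smul (inv_ne_zero hhy)) hN hNy

omit hdim in
theorem exists_basis_eq_strictlyTriangular {n : ℕ} (hE : finrank D E = n)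
    (hdim : finrank K₀ V = finrank K₀ D * n.choose 2) :
    ∃ b : Basis (Fin n) D E, V = strictlyTriangular K₀ b := by
  induction n generalizing E with
  | zero =>
    refine ⟨finBasisOfFinrankEq D E hE, eq_strictlyTriangular_of_le ?_ hdim⟩
    exact fun _ _ i ↦ i.elim0
  | succ n ih =>
    have hker (g : Dual D E) : finrank D (LinearMap.ker g) = n →
        ∀ W : Submodule K₀ (End D (LinearMap.ker g)), (∀ N ∈ W, IsNilpotent N) →
          finrank K₀ W = finrank K₀ D * (finrank D (LinearMap.ker g)).choose 2 →
          ∃ b : Basis (Fin n) D (LinearMap.ker g), W = strictlyTriangular K₀ b :=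
      fun hg W hW hWdim ↦ ih hW hg (hg ▸ hWdim)
    have hdim' : finrank K₀ V = finrank K₀ D * (finrank D E).choose 2 := by rw [hE]; exact hdim
    obtain ⟨x, hx, hVx⟩ : ∃ x : E, x ≠ 0 ∧ ∀ M ∈ V, M x = 0 := by
      match n, hE with
      | 0, hE =>
        have := nontrivial_of_finrank_pos (R := D) (M := E) (by omega)
        obtain ⟨x, hx⟩ := exists_ne (0 : E)
        exact ⟨x, hx, fun M hM ↦ by
          rw [eq_zero_of_finrank_eq_one (hV M hM) hE, LinearMap.zero_apply]⟩
      | 1, hE => exact exists_forall_apply_eq_zero_of_finrank_eq_two hV hdim' hE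
      | n + 2, hE => exact exists_forall_apply_eq_zero_of_three_le hV hdim' hE hker
    obtain ⟨g, hgx⟩ := exists_dual_eq_one (D := D) hx
    have hn : finrank D (LinearMap.ker g) = n := by
      have := finrank_eq_finrank_ker_add_one hgx
      omega
    obtain ⟨b, hb⟩ := hker g hn _ (forall_mem_map_compress_isNilpotent hV hgx hVx)
      (finrank_compress_of_forall_apply_eq_zero hV hdim' hgx hVx)
    obtain ⟨b', hb'⟩ := le_strictlyTriangular_of_compress_le hgx hVx hb.le
    exact ⟨b', eq_strictlyTriangular_of_le hb' hdim⟩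

end Flag

section Matrix

open scoped Matrix

variable (K₀ : Type*) {K m n : Type*} [Field K₀] [DivisionRing K] [Algebra K₀ K] [Fintype m]
  [DecidableEq m]

/-- The action of matrices on row vectors, as a `K₀`-linear equivalence. Over a noncommutative
division ring it is this action, and not the one on column vectors, which is left linear. -/
def vecMulEquiv : Matrix m n K ≃ₗ[K₀] ((m → K) →ₗ[K] n → K) where
  __ := (Matrix.toLinearMapRight' : Matrix m n K ≃ₗ[Kᵐᵒᵖ] _).toAddEquiv
  map_smul' c M := LinearMap.ext fun v ↦ Matrix.vecMul_smul v c M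

theorem vecMulEquiv_apply (M : Matrix m n K) (v : m → K) : vecMulEquiv K₀ M v = v ᵥ* M := rfl

theorem vecMulEquiv_pow (M : Matrix m m K) (k : ℕ) :
    (vecMulEquiv K₀ (M ^ k) : End K (m → K)) = vecMulEquiv K₀ M ^ k := by
  induction k with
  | zero => exact Matrix.toLinearMapRight'_one
  | succ k ih =>
    rw [pow_succ, pow_succ', ← ih]
    exact Matrix.toLinearMapRight'_mul _ _

theorem isNilpotent_vecMulEquiv {M : Matrix m m K} (hM : IsNilpotent M) :
    IsNilpotent (vecMulEquiv K₀ M : End K (m → K)) := by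
  obtain ⟨k, hk⟩ := hM
  exact ⟨k, by rw [← vecMulEquiv_pow, hk, map_zero]⟩

variable {K₀} (b : Basis m K (m → K))

theorem toMatrixRight'_equivFun_symm_mul_equivFun :
    LinearMap.toMatrixRight' (b.equivFun.symm : (m → K) →ₗ[K] m → K) *
      LinearMap.toMatrixRight' (b.equivFun : (m → K) →ₗ[K] m → K) = 1 := by
  rw [← LinearMap.toMatrixRight'_comp, LinearEquiv.comp_symm, LinearMap.toMatrixRight'_id]

theorem toMatrixRight'_equivFun_mul_equivFun_symm :
    LinearMap.toMatrixRight' (b.equivFun : (m → K) →ₗ[K] m → K) *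
      LinearMap.toMatrixRight' (b.equivFun.symm : (m → K) →ₗ[K] m → K) = 1 := by
  rw [← LinearMap.toMatrixRight'_comp, LinearEquiv.symm_comp, LinearMap.toMatrixRight'_id]

theorem toMatrixRight'_equivFun_symm_mul_mul_equivFun_apply (M : Matrix m m K) (i j : m) :
    (LinearMap.toMatrixRight' (b.equivFun.symm : (m → K) →ₗ[K] m → K) * M *
      LinearMap.toMatrixRight' (b.equivFun : (m → K) →ₗ[K] m → K)) i j =
      b.repr (b i ᵥ* M) j := by
  conv_lhs => rw [← LinearMap.toMatrixRight'.apply_symm_apply M]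
  rw [← LinearMap.toMatrixRight'_comp, ← LinearMap.toMatrixRight'_comp]
  change b.repr (b.equivFun.symm (Pi.single i 1) ᵥ* M) j = _
  have hbi : b.equivFun.symm (Pi.single i 1) = b i := by simp [Pi.single_apply]
  rw [hbi]

end Matrix

end Gerstenhaber

/-- Gerstenhaber equality case over a skew field: a `K0`-linear subspace of nilpotent
`n × n` matrices over `K` of dimension `q * (n choose 2)` is similar to the space
of strictly upper-triangular matrices. The invertible matrix `P` is given together
with its (two-sided) inverse `Q`. -/
theorem stmt_1 (K : Type*) [DivisionRing K] (K0 : Type*) [Field K0] [Algebra K0 K]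
    [FiniteDimensional K0 K] (q n : ℕ) (hq : Module.finrank K0 K = q) (hn : 0 < n)
    (V : Submodule K0 (Matrix (Fin n) (Fin n) K))
    (hV : ∀ M ∈ V, IsNilpotent M)
    (hdim : Module.finrank K0 V = q * n.choose 2) :
    ∃ P Q : Matrix (Fin n) (Fin n) K, P * Q = 1 ∧ Q * P = 1 ∧
      ∀ M : Matrix (Fin n) (Fin n) K,
        M ∈ V ↔ ∀ i j : Fin n, j ≤ i → (P * M * Q) i j = 0 := by
  subst hq
  let act : Matrix (Fin n) (Fin n) K ≃ₗ[K0] End K (Fin n → K) := Gerstenhaber.vecMulEquiv K0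
  have hnil : ∀ N ∈ V.map act.toLinearMap, IsNilpotent N := by
    rintro _ ⟨M, hM, rfl⟩
    exact Gerstenhaber.isNilpotent_vecMulEquiv K0 (hV M hM)
  obtain ⟨b, hb⟩ := Gerstenhaber.exists_basis_eq_strictlyTriangular hnil (finrank_fin_fun K)
    ((act.finrank_map_eq V).trans hdim)
  refine ⟨LinearMap.toMatrixRight' b.equivFun.symm, LinearMap.toMatrixRight' b.equivFun,
    Gerstenhaber.toMatrixRight'_equivFun_symm_mul_equivFun b,
    Gerstenhaber.toMatrixRight'_equivFun_mul_equivFun_symm b, fun M ↦ ?_⟩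
  have hMV : M ∈ V ↔ act M ∈ V.map act.toLinearMap := act.injective.mem_set_image.symm
  simp only [hMV, hb, Gerstenhaber.mem_strictlyTriangular_iff_repr,
    Gerstenhaber.toMatrixRight'_equivFun_symm_mul_mul_equivFun_apply, act,
    Gerstenhaber.vecMulEquiv_apply]
end

section
/- Let K be a finite field of cardinality p and n a positive integer. If V is a subgroup of the additive group (M_n(K), +) in which every matrix is nilpotent and V has cardinality exactly p^(n choose 2), then there exists an invertible matrix P in M_n(K) such that P V P^{-1} equals the set NT_n(K) of all strictly upper-triangular n×n matrices over K. -/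
/-!
Write `q = |K|` and `n = dim E`, and let `V` be an additive group of nilpotent operators on `E`.
If the rank-one operator `φ ⊗ x` belongs to `V`, then `φ` vanishes on `V x + K x`. Filtering `V` by
evaluation at `x` and by the action on `E ⧸ K x` then gives `|V| ≤ q ^ (n choose 2)` by induction.
If equality holds, it holds for the action on `E ⧸ K x` too, and `φ ⊗ x ∈ V` as soon as `φ`
vanishes on `V x + K x`.

In the case of equality the action on each `E ⧸ K x` is triangularizable by induction. The
identities `tr (a b) = 0` and `tr ((a b + b a) c) = 0` on `V` then allow one to lift scalar
multiples and Jordan products from `E ⧸ K x` to `V`, and the relations among lifts of elementary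
matrices produce a rank-one member `φ ⊗ x`. For such an `x` the subspace `V x + K x` is proper and
`V`-invariant, and the restriction of `V` to it is again extremal, hence triangularizable, so the
members of `V` kill a common vector `z ≠ 0`. A triangularizing basis of `E ⧸ K z` lifts to one of
`E`.
-/

open Module Polynomial

section NilpotentIdentities

variable {K E : Type*} [Field K] [AddCommGroup E] [Module K E]

theorem eq_zero_of_isNilpotent_of_apply_eq_smul {v : End K E} (hv : IsNilpotent v) {x : E}
    (hx : x ≠ 0) {c : K} (hvx : v x = c • x) : c = 0 :=
  (End.hasEigenvalue_of_hasEigenvector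
    (End.hasEigenvector_iff.mpr ⟨End.mem_eigenspace_iff.mpr hvx, hx⟩)).isNilpotent_of_isNilpotent
      hv |>.eq_zero

theorem exists_polynomial_coeff_eq_dual_pow_apply {b : End K E} (hb : IsNilpotent b)
    (φ : Dual K E) (x : E) : ∃ f : K[X], ∀ k, f.coeff k = φ ((b ^ k) x) := by
  obtain ⟨m, hm⟩ := hb
  refine ⟨PowerSeries.trunc m (PowerSeries.mk fun k ↦ φ ((b ^ k) x)), fun k ↦ ?_⟩
  rw [PowerSeries.coeff_trunc, PowerSeries.coeff_mk]
  split_ifs with hk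
  · rfl
  · rw [pow_eq_zero_of_le (not_lt.mp hk) hm, LinearMap.zero_apply, map_zero]

theorem pow_succ_add_smulRight_apply (b : End K E) (φ : Dual K E) (x y : E) (k : ℕ) :
    ((b + φ.smulRight x) ^ (k + 1)) y = (b ^ (k + 1)) y +
      ∑ ij ∈ Finset.HasAntidiagonal.antidiagonal k,
        φ ((b ^ ij.1) y) • ((b + φ.smulRight x) ^ ij.2) x := by
  induction k generalizing y with
  | zero => simp
  | succ k ih =>
    rw [pow_succ, End.mul_apply, LinearMap.add_apply, LinearMap.smulRight_apply, map_add, ih,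
      map_smul, Finset.Nat.sum_antidiagonal_succ, pow_succ b (k + 1)]
    simp only [pow_succ b, End.mul_apply, pow_zero, End.one_apply]
    abel

/-- Comparing the generating polynomials `f` and `g` of `φ (b ^ k x)` and
`φ ((b + φ ⊗ x) ^ k x)` gives `(1 - X f) (1 + X g) = 1`, which forces `f = 0`. -/
theorem dual_pow_apply_eq_zero_of_isNilpotent_add_smulRight {b : End K E} {φ : Dual K E} {x : E}
    (hb : IsNilpotent b) (hbφ : IsNilpotent (b + φ.smulRight x)) (k : ℕ) :
    φ ((b ^ k) x) = 0 := by
  obtain ⟨f, hf⟩ := exists_polynomial_coeff_eq_dual_pow_apply hb φ x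
  obtain ⟨g, hg⟩ := exists_polynomial_coeff_eq_dual_pow_apply hbφ φ x
  have hgf : g - f = X * (f * g) := by
    ext k
    cases k with
    | zero => simp [hf, hg]
    | succ k =>
      rw [coeff_sub, hf, hg, coeff_X_mul, coeff_mul, pow_succ_add_smulRight_apply, map_add,
        add_sub_cancel_left, map_sum]
      simp only [hf, hg, map_smul, smul_eq_mul]
  have hunit : IsUnit (1 - X * f) :=
    IsUnit.of_mul_eq_one (1 + X * g) (by linear_combination X * hgf)
  have hf0 : f = 0 := by
    ext k
    simpa [coeff_X_mul, coeff_one] using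
      (Polynomial.isUnit_iff_coeff_isUnit_isNilpotent.mp hunit).2 (k + 1) k.succ_ne_zero
  rw [← hf, hf0, coeff_zero]

end NilpotentIdentities

section TraceIdentities

variable {R ι : Type*} [CommRing R] [Fintype ι] [DecidableEq ι]

theorem isUnit_one_sub_X_smul_map_C {c : Matrix ι ι R} (hc : IsNilpotent c) :
    IsUnit (1 - (X : R[X]) • c.map C) :=
  ((hc.map (C : R →+* R[X]).mapMatrix).smul X).isUnit_one_sub

theorem coeff_trace_eq_zero_of_isUnit_det_one_add_X_sq_smul [IsReduced R]
    {M : Matrix ι ι R[X]} (hM : IsUnit (1 + (X ^ 2 : R[X]) • M).det) :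
    M.trace.coeff 0 = 0 ∧ M.trace.coeff 1 = 0 := by
  rw [Matrix.det_one_add_smul, ← pow_mul] at hM
  have hcoeff (k : ℕ) (hk : k ≠ 0) :=
    ((isUnit_iff_coeff_isUnit_isNilpotent.mp hM).2 k hk).eq_zero
  constructor
  · simpa [coeff_mul_X_pow', coeff_one] using hcoeff 2 two_ne_zero
  · simpa [coeff_mul_X_pow', coeff_one] using hcoeff 3 three_ne_zero

/-- Write `A`, `B` for `a`, `b` over `R[X]` and `H` for the inverse of `1 - X (A + B)`. Then
`H (1 - X A) (1 - X B) = 1 + X ^ 2 H A B` is invertible. -/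
theorem trace_mul_eq_zero_of_isNilpotent_add [IsReduced R] {a b : Matrix ι ι R}
    (ha : IsNilpotent a) (hb : IsNilpotent b) (hab : IsNilpotent (a + b)) :
    (a * b).trace = 0 ∧ ((a + b) * (a * b)).trace = 0 := by
  set A : Matrix ι ι R[X] := a.map C with hA
  set B : Matrix ι ι R[X] := b.map C with hB
  have hAB : (a + b).map C = A + B := Matrix.map_add _ (map_add C) a b
  obtain ⟨u, hu⟩ := isUnit_one_sub_X_smul_map_C hab
  set H : Matrix ι ι R[X] := ↑u⁻¹
  have hH : H * (1 - (X : R[X]) • (A + B)) = 1 := by rw [← hAB, ← hu, Units.inv_mul]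
  have hH_eq : H = 1 + (X : R[X]) • (H * (A + B)) := by
    rwa [mul_sub, mul_one, mul_smul_comm, sub_eq_iff_eq_add] at hH
  have hfactor : H * ((1 - (X : R[X]) • A) * (1 - (X : R[X]) • B)) =
      1 + (X ^ 2 : R[X]) • (H * (A * B)) := by
    have : (1 - (X : R[X]) • A) * (1 - (X : R[X]) • B) =
        (1 - (X : R[X]) • (A + B)) + (X ^ 2 : R[X]) • (A * B) := by
      simp only [sub_mul, mul_sub, one_mul, mul_one, smul_mul_smul_comm, smul_add, pow_two]
      abel
    rw [this, mul_add, hH, mul_smul_comm]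
  have hunit : IsUnit (1 + (X ^ 2 : R[X]) • (H * (A * B))).det := by
    rw [← Matrix.isUnit_iff_isUnit_det, ← hfactor]
    exact u⁻¹.isUnit.mul
      ((isUnit_one_sub_X_smul_map_C ha).mul (isUnit_one_sub_X_smul_map_C hb))
  have htrace_map (c : Matrix ι ι R) : (c.map C).trace = C c.trace :=
    (AddMonoidHom.map_trace (C : R →+* R[X]) c).symm
  have hexpand : (H * (A * B)).trace = C (a * b).trace + X * (C ((a + b) * (a * b)).trace +
      X * (H * (A + B) * (A + B) * (A * B)).trace) := by
    rw [← htrace_map, ← htrace_map, Matrix.map_mul, Matrix.map_mul, Matrix.map_mul, hAB]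
    conv_lhs => rw [hH_eq, hH_eq]
    simp only [add_mul, one_mul, smul_mul_assoc, smul_add, Matrix.trace_add, Matrix.trace_smul,
      smul_eq_mul, mul_assoc, ← hA, ← hB]
    ring
  have hcoeff := coeff_trace_eq_zero_of_isUnit_det_one_add_X_sq_smul hunit
  rw [hexpand] at hcoeff
  simpa [coeff_X_mul] using hcoeff

end TraceIdentities

section TraceEnd

variable {K E : Type*} [Field K] [AddCommGroup E] [Module K E] [FiniteDimensional K E]

theorem trace_end_mul_eq_zero_of_isNilpotent_add {a b : End K E}
    (ha : IsNilpotent a) (hb : IsNilpotent b) (hab : IsNilpotent (a + b)) :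
    LinearMap.trace K E (a * b) = 0 ∧ LinearMap.trace K E ((a + b) * (a * b)) = 0 := by
  let e := LinearMap.toMatrixAlgEquiv (finBasis K E)
  have htrace (c : End K E) : LinearMap.trace K E c = (e c).trace :=
    LinearMap.trace_eq_matrix_trace K (finBasis K E) c
  rw [htrace, htrace, map_mul, map_mul, map_mul, map_add]
  exact trace_mul_eq_zero_of_isNilpotent_add (ha.map e) (hb.map e) (map_add e a b ▸ hab.map e)

variable {V : AddSubgroup (End K E)} {a b c : End K E}

theorem trace_mul_eq_zero (hV : ∀ v ∈ V, IsNilpotent v) (ha : a ∈ V) (hb : b ∈ V) :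
    LinearMap.trace K E (a * b) = 0 :=
  (trace_end_mul_eq_zero_of_isNilpotent_add (hV a ha) (hV b hb) (hV _ (add_mem ha hb))).1

theorem trace_mul_mul_self (hV : ∀ v ∈ V, IsNilpotent v) (ha : a ∈ V) (hb : b ∈ V) :
    LinearMap.trace K E (a * a * b) = -LinearMap.trace K E (b * b * a) := by
  have h := (trace_end_mul_eq_zero_of_isNilpotent_add
    (hV a ha) (hV b hb) (hV _ (add_mem ha hb))).2
  rw [add_mul, map_add, ← mul_assoc, LinearMap.trace_mul_comm K b, mul_assoc a b b,
    LinearMap.trace_mul_comm K a] at h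
  exact eq_neg_of_add_eq_zero_left h

theorem trace_jordan_mul_eq_zero (hV : ∀ v ∈ V, IsNilpotent v) (ha : a ∈ V) (hb : b ∈ V)
    (hc : c ∈ V) : LinearMap.trace K E ((a * b + b * a) * c) = 0 := by
  have hpolar : (a * b + b * a) * c = (a + b) * (a + b) * c - a * a * c - b * b * c := by
    noncomm_ring
  rw [hpolar, map_sub, map_sub, trace_mul_mul_self hV (add_mem ha hb) hc,
    trace_mul_mul_self hV ha hc, trace_mul_mul_self hV hb hc, mul_add, map_add]
  ring

end TraceEnd

section InducedActions

variable {K E : Type*} [Field K] [AddCommGroup E] [Module K E]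

/-- The operators on `E ⧸ W` induced by the members of `V` preserving `W`. -/
def quotientAction (V : AddSubgroup (End K E)) (W : Submodule K E) : AddSubgroup (End K (E ⧸ W)) :=
  (V.map (LinearMap.compRight K W.mkQ).toAddMonoidHom).comap
    (LinearMap.lcomp K (E ⧸ W) W.mkQ).toAddMonoidHom

/-- The operators on `W` induced by the members of `V` preserving `W`. -/
def restrictAction (V : AddSubgroup (End K E)) (W : Submodule K E) : AddSubgroup (End K W) :=
  (V.map (LinearMap.lcomp K E W.subtype).toAddMonoidHom).comap
    (LinearMap.compRight K W.subtype).toAddMonoidHom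

/-- The members of `V` mapping `E` into `W`. -/
def mapsInto (V : AddSubgroup (End K E)) (W : Submodule K E) : AddSubgroup (End K E) :=
  V ⊓ (LinearMap.compRight K W.mkQ).toAddMonoidHom.ker

/-- The members of `V` vanishing on `W`. -/
def vanishingOn (V : AddSubgroup (End K E)) (W : Submodule K E) : AddSubgroup (End K E) :=
  V ⊓ (LinearMap.lcomp K E W.subtype).toAddMonoidHom.ker

variable {V : AddSubgroup (End K E)} {W : Submodule K E}

theorem mem_quotientAction {g : End K (E ⧸ W)} :
    g ∈ quotientAction V W ↔ ∃ v ∈ V, W.mkQ ∘ₗ v = g ∘ₗ W.mkQ :=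
  Iff.rfl

theorem mem_restrictAction {g : End K W} :
    g ∈ restrictAction V W ↔ ∃ v ∈ V, v ∘ₗ W.subtype = W.subtype ∘ₗ g :=
  Iff.rfl

theorem mem_mapsInto {v : End K E} : v ∈ mapsInto V W ↔ v ∈ V ∧ ∀ y, v y ∈ W := by
  refine and_congr_right fun _ ↦ LinearMap.ext_iff.trans (forall_congr' fun y ↦ ?_)
  exact Submodule.Quotient.mk_eq_zero W

theorem mem_vanishingOn {v : End K E} : v ∈ vanishingOn V W ↔ v ∈ V ∧ ∀ y ∈ W, v y = 0 :=
  and_congr_right fun _ ↦ LinearMap.ext_iff.trans Subtype.forall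

theorem isNilpotent_of_mem_quotientAction (hV : ∀ v ∈ V, IsNilpotent v) {g : End K (E ⧸ W)}
    (hg : g ∈ quotientAction V W) : IsNilpotent g := by
  obtain ⟨v, hv, hvg⟩ := mem_quotientAction.mp hg
  obtain ⟨k, hk⟩ := hV v hv
  refine ⟨k, (LinearMap.cancel_right W.mkQ_surjective).mp ?_⟩
  rw [End.commute_pow_left_of_commute hvg.symm, hk, LinearMap.comp_zero, LinearMap.zero_comp]

theorem isNilpotent_of_mem_restrictAction (hV : ∀ v ∈ V, IsNilpotent v) {g : End K W}
    (hg : g ∈ restrictAction V W) : IsNilpotent g := by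
  obtain ⟨v, hv, hvg⟩ := mem_restrictAction.mp hg
  obtain ⟨k, hk⟩ := hV v hv
  refine ⟨k, (LinearMap.cancel_left W.subtype_injective).mp ?_⟩
  rw [← End.commute_pow_left_of_commute hvg, hk, LinearMap.comp_zero, LinearMap.zero_comp]

theorem card_map_mul_card_inf_ker {A B : Type*} [AddGroup A] [AddGroup B] (S : AddSubgroup A)
    (f : A →+ B) : Nat.card (S.map f) * Nat.card ↥(S ⊓ f.ker) = Nat.card S := by
  rw [← AddSubgroup.relIndex_ker, ← AddSubgroup.inf_relIndex_left, mul_comm,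
    ← AddSubgroup.relIndex_bot_left, AddSubgroup.relIndex_mul_relIndex _ _ _ bot_le inf_le_left,
    AddSubgroup.relIndex_bot_left]

theorem card_comap_of_le_range {A B : Type*} [AddGroup A] [AddGroup B] {S : AddSubgroup B}
    {f : A →+ B} (hf : Function.Injective f) (hS : S ≤ f.range) :
    Nat.card (S.comap f) = Nat.card S := by
  rw [← AddSubgroup.card_map_of_injective hf, AddSubgroup.map_comap_eq_self hS]

theorem card_eq_card_quotientAction_mul (hVW : ∀ v ∈ V, ∀ w ∈ W, v w ∈ W) :
    Nat.card V = Nat.card (quotientAction V W) * Nat.card (mapsInto V W) := by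
  rw [quotientAction, card_comap_of_le_range, mapsInto, card_map_mul_card_inf_ker]
  · exact LinearMap.lcomp_injective_of_surjective _ W.mkQ_surjective
  · rintro _ ⟨v, hv, rfl⟩
    exact ⟨W.mapQ W v (hVW v hv), W.mapQ_mkQ W v (h := hVW v hv)⟩

theorem card_eq_card_restrictAction_mul (hVW : ∀ v ∈ V, ∀ w ∈ W, v w ∈ W) :
    Nat.card V = Nat.card (restrictAction V W) * Nat.card (vanishingOn V W) := by
  rw [restrictAction, card_comap_of_le_range, vanishingOn, card_map_mul_card_inf_ker]
  · exact fun _ _ ↦ (LinearMap.cancel_left W.subtype_injective).mp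
  · rintro _ ⟨v, hv, rfl⟩
    exact ⟨v.restrict (hVW v hv), v.subtype_comp_restrict (hVW v hv)⟩

end InducedActions

section PointActions

variable {K E : Type*} [Field K] [AddCommGroup E] [Module K E]

/-- The members of `V` killing `x`. -/
def pointAnnihilator (V : AddSubgroup (End K E)) (x : E) : AddSubgroup (End K E) :=
  V ⊓ (LinearMap.applyₗ x : End K E →ₗ[K] E).toAddMonoidHom.ker

/-- The operators induced on `E ⧸ K x` by the members of `V` killing `x`. -/
def pointQuotient (V : AddSubgroup (End K E)) (x : E) :
    AddSubgroup (End K (E ⧸ Submodule.span K {x})) :=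
  quotientAction (pointAnnihilator V x) (Submodule.span K {x})

/-- The functionals `φ` for which the rank-one operator `φ ⊗ x` belongs to `V`. -/
def rankOneFunctionals (V : AddSubgroup (End K E)) (x : E) : AddSubgroup (Dual K E) :=
  V.comap (LinearMap.smulRightₗ.flip x).toAddMonoidHom

/-- The image `V x` of a vector under `V`. -/
def pointOrbit (V : AddSubgroup (End K E)) (x : E) : AddSubgroup E :=
  V.map (LinearMap.applyₗ x : End K E →ₗ[K] E).toAddMonoidHom

/-- The subspace spanned by `x` and its image `V x`. -/
def orbitSpan (V : AddSubgroup (End K E)) (x : E) : Submodule K E :=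
  Submodule.span K (insert x (pointOrbit V x))

theorem smulRight_injective {x : E} (hx : x ≠ 0) :
    Function.Injective (LinearMap.smulRightₗ.flip x : Dual K E →ₗ[K] End K E) := fun _ _ h ↦
  LinearMap.ext fun y ↦ smul_left_injective K hx (LinearMap.congr_fun h y)

theorem exists_eq_smulRight_of_range_le_span {x : E} (hx : x ≠ 0) {v : End K E}
    (hv : ∀ y, v y ∈ Submodule.span K {x}) : ∃ φ : Dual K E, v = φ.smulRight x := by
  obtain ⟨ψ, hψ⟩ := Projective.exists_dual_eq_one K hx
  refine ⟨ψ ∘ₗ v, LinearMap.ext fun y ↦ ?_⟩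
  obtain ⟨c, hc⟩ := Submodule.mem_span_singleton.mp (hv y)
  rw [LinearMap.smulRight_apply, LinearMap.comp_apply, ← hc, map_smul, hψ, smul_eq_mul, mul_one]

variable {V : AddSubgroup (End K E)} {x : E}

theorem mem_pointAnnihilator {v : End K E} : v ∈ pointAnnihilator V x ↔ v ∈ V ∧ v x = 0 :=
  Iff.rfl

theorem mem_rankOneFunctionals {φ : Dual K E} :
    φ ∈ rankOneFunctionals V x ↔ φ.smulRight x ∈ V :=
  Iff.rfl

theorem apply_mem_pointOrbit {v : End K E} (hv : v ∈ V) : v x ∈ pointOrbit V x :=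
  ⟨v, hv, rfl⟩

theorem self_mem_orbitSpan : x ∈ orbitSpan V x :=
  Submodule.subset_span (Set.mem_insert _ _)

theorem pointOrbit_subset_orbitSpan : (pointOrbit V x : Set E) ⊆ orbitSpan V x :=
  (Set.subset_insert _ _).trans Submodule.subset_span

theorem mem_dualAnnihilator_orbitSpan {φ : Dual K E} :
    φ ∈ (orbitSpan V x).dualAnnihilator ↔ φ x = 0 ∧ ∀ v ∈ V, φ (v x) = 0 := by
  rw [Submodule.mem_dualAnnihilator]
  refine ⟨fun h ↦ ⟨h _ self_mem_orbitSpan, fun v hv ↦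
    h _ (pointOrbit_subset_orbitSpan (apply_mem_pointOrbit hv))⟩, fun ⟨hx, hVx⟩ ↦ ?_⟩
  change orbitSpan V x ≤ LinearMap.ker φ
  rw [orbitSpan, Submodule.span_le, Set.insert_subset_iff]
  exact ⟨hx, by rintro _ ⟨v, hv, rfl⟩; exact hVx v hv⟩

variable (hV : ∀ v ∈ V, IsNilpotent v)
include hV

theorem apply_pow_eq_zero_of_mem_rankOneFunctionals {φ : Dual K E}
    (hφ : φ ∈ rankOneFunctionals V x) {v : End K E} (hv : v ∈ V) (k : ℕ) :
    φ ((v ^ k) x) = 0 :=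
  dual_pow_apply_eq_zero_of_isNilpotent_add_smulRight (hV v hv) (hV _ (add_mem hv hφ)) k

theorem rankOneFunctionals_le_dualAnnihilator_orbitSpan :
    rankOneFunctionals V x ≤ (orbitSpan V x).dualAnnihilator.toAddSubgroup := fun φ hφ ↦
  mem_dualAnnihilator_orbitSpan.mpr
    ⟨apply_pow_eq_zero_of_mem_rankOneFunctionals hV hφ (zero_mem V) 0, fun v hv ↦ by
      simpa only [pow_one] using apply_pow_eq_zero_of_mem_rankOneFunctionals hV hφ hv 1⟩

theorem apply_self_eq_zero_of_mem_rankOneFunctionals {φ : Dual K E}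
    (hφ : φ ∈ rankOneFunctionals V x) : φ x = 0 :=
  apply_pow_eq_zero_of_mem_rankOneFunctionals hV hφ (zero_mem V) 0

theorem mapsInto_pointAnnihilator_span (hx : x ≠ 0) :
    mapsInto (pointAnnihilator V x) (Submodule.span K {x}) =
      (rankOneFunctionals V x).map (LinearMap.smulRightₗ.flip x).toAddMonoidHom := by
  ext v
  simp only [mem_mapsInto, mem_pointAnnihilator]
  constructor
  · rintro ⟨⟨hv, -⟩, hvx⟩
    obtain ⟨φ, rfl⟩ := exists_eq_smulRight_of_range_le_span hx hvx
    exact ⟨φ, hv, rfl⟩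
  · rintro ⟨φ, hφ, rfl⟩
    exact ⟨⟨hφ, by simp [apply_self_eq_zero_of_mem_rankOneFunctionals hV hφ]⟩,
      fun y ↦ Submodule.mem_span_singleton.mpr ⟨φ y, rfl⟩⟩

theorem card_eq_card_pointOrbit_mul (hx : x ≠ 0) :
    Nat.card V =
      Nat.card (pointOrbit V x) * (Nat.card (pointQuotient V x) *
        Nat.card (rankOneFunctionals V x)) := by
  rw [← card_map_mul_card_inf_ker V (LinearMap.applyₗ x : End K E →ₗ[K] E).toAddMonoidHom]
  change Nat.card (pointOrbit V x) * Nat.card (pointAnnihilator V x) = _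
  rw [card_eq_card_quotientAction_mul (V := pointAnnihilator V x) (W := Submodule.span K {x}),
    mapsInto_pointAnnihilator_span hV hx, AddSubgroup.card_map_of_injective, pointQuotient]
  · exact smulRight_injective hx
  · rintro v ⟨-, hvx⟩ w hw
    obtain ⟨c, rfl⟩ := Submodule.mem_span_singleton.mp hw
    rw [map_smul, show v x = 0 from hvx, smul_zero]
    exact zero_mem _

end PointActions

section Extremal

variable {K E : Type*} [Field K] [AddCommGroup E] [Module K E] {V : AddSubgroup (End K E)} {x : E}

/-- An additive group of nilpotent operators with the maximal number `q ^ (n choose 2)` of members,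
where `q = |K|` and `n = dim E`. -/
structure IsExtremalNil (V : AddSubgroup (End K E)) : Prop where
  isNilpotent : ∀ v ∈ V, IsNilpotent v
  card_eq : Nat.card V = Nat.card K ^ (finrank K E).choose 2

theorem isNilpotent_of_mem_pointQuotient (hV : ∀ v ∈ V, IsNilpotent v) :
    ∀ g ∈ pointQuotient V x, IsNilpotent g := fun _ ↦
  isNilpotent_of_mem_quotientAction fun v hv ↦ hV v (mem_pointAnnihilator.mp hv).1

/-- The addition map `V x × K → V x + K x`. -/
def pointOrbitAddSMul (V : AddSubgroup (End K E)) (x : E) (p : pointOrbit V x × K) :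
    orbitSpan V x :=
  ⟨p.1 + p.2 • x,
    add_mem (pointOrbit_subset_orbitSpan p.1.2) (Submodule.smul_mem _ _ self_mem_orbitSpan)⟩

theorem injective_pointOrbitAddSMul (hV : ∀ v ∈ V, IsNilpotent v) (hx : x ≠ 0) :
    Function.Injective (pointOrbitAddSMul V x) := by
  rintro ⟨⟨_, a, ha, rfl⟩, c⟩ ⟨⟨_, b, hb, rfl⟩, d⟩ hsum
  replace hsum : a x + c • x = b x + d • x := Subtype.ext_iff.mp hsum
  have hab : (a - b) x = (d - c) • x := by
    rw [LinearMap.sub_apply, sub_smul, sub_eq_sub_iff_add_eq_add, hsum, add_comm]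
  have hdc : d - c = 0 := eq_zero_of_isNilpotent_of_apply_eq_smul (hV _ (sub_mem ha hb)) hx hab
  obtain rfl := sub_eq_zero.mp hdc
  exact Prod.ext (Subtype.ext (add_right_cancel hsum)) rfl

variable [FiniteDimensional K E]

theorem card_mul_card_dualAnnihilator (W : Submodule K E) :
    Nat.card W * Nat.card W.dualAnnihilator = Nat.card K ^ finrank K E := by
  rw [natCard_eq_pow_finrank (K := K), natCard_eq_pow_finrank (K := K) (V := W.dualAnnihilator),
    ← pow_add, Subspace.finrank_add_finrank_dualAnnihilator_eq]

theorem finrank_quotient_span_singleton_add_one (hx : x ≠ 0) :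
    finrank K (E ⧸ Submodule.span K {x}) + 1 = finrank K E := by
  rw [← Submodule.finrank_quotient_add_finrank (Submodule.span K {x}), finrank_span_singleton hx]

theorem pow_choose_two_mul_card (hx : x ≠ 0) :
    Nat.card K ^ (finrank K E).choose 2 * Nat.card K =
      Nat.card K ^ (finrank K (E ⧸ Submodule.span K {x})).choose 2 * Nat.card K ^ finrank K E := by
  rw [← finrank_quotient_span_singleton_add_one hx, Nat.choose_succ_succ' _ 1, Nat.choose_one_right]
  ring

variable [Finite K]

theorem card_pointOrbit_mul_card_le (hV : ∀ v ∈ V, IsNilpotent v) (hx : x ≠ 0) :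
    Nat.card (pointOrbit V x) * Nat.card K ≤ Nat.card (orbitSpan V x) := by
  have : Finite E := finite_of_finite K
  rw [← Nat.card_prod]
  exact Nat.card_le_card_of_injective _ (injective_pointOrbitAddSMul hV hx)

theorem card_rankOneFunctionals_le (hV : ∀ v ∈ V, IsNilpotent v) :
    Nat.card (rankOneFunctionals V x) ≤ Nat.card (orbitSpan V x).dualAnnihilator := by
  have : Finite (Dual K E) := finite_of_finite K
  exact Nat.card_mono (Set.toFinite _) (rankOneFunctionals_le_dualAnnihilator_orbitSpan hV)

theorem card_pointOrbit_mul_card_rankOneFunctionals_le (hV : ∀ v ∈ V, IsNilpotent v)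
    (hx : x ≠ 0) :
    Nat.card (pointOrbit V x) * Nat.card (rankOneFunctionals V x) * Nat.card K ≤
      Nat.card K ^ finrank K E := by
  rw [← card_mul_card_dualAnnihilator (orbitSpan V x), mul_right_comm]
  exact Nat.mul_le_mul (card_pointOrbit_mul_card_le hV hx) (card_rankOneFunctionals_le hV)

theorem card_le_of_forall_isNilpotent (hV : ∀ v ∈ V, IsNilpotent v) :
    Nat.card V ≤ Nat.card K ^ (finrank K E).choose 2 := by
  induction hn : finrank K E generalizing E with
  | zero =>
    have := finrank_zero_iff.mp hn
    simp
  | succ n ih =>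
    have := nontrivial_of_finrank_pos (R := K) (M := E) (by lia)
    obtain ⟨x, hx⟩ := exists_ne (0 : E)
    have hxn := finrank_quotient_span_singleton_add_one (K := K) hx
    have hQ : Nat.card (pointQuotient V x) ≤ Nat.card K ^ n.choose 2 :=
      ih (isNilpotent_of_mem_pointQuotient hV) (by lia)
    refine Nat.le_of_mul_le_mul_right ?_ (Nat.card_pos (α := K))
    calc Nat.card V * Nat.card K
        = Nat.card (pointQuotient V x) * (Nat.card (pointOrbit V x) *
            Nat.card (rankOneFunctionals V x) * Nat.card K) := by
          rw [card_eq_card_pointOrbit_mul hV hx]; ring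
      _ ≤ Nat.card K ^ n.choose 2 * Nat.card K ^ (n + 1) :=
          Nat.mul_le_mul hQ (hn ▸ card_pointOrbit_mul_card_rankOneFunctionals_le hV hx)
      _ = Nat.card K ^ (n + 1).choose 2 * Nat.card K := by
          rw [← hn, pow_choose_two_mul_card hx,
            show finrank K (E ⧸ Submodule.span K {x}) = n by lia]

namespace IsExtremalNil

theorem card_pointQuotient_eq_and_card_pointOrbit_mul_eq (hV : IsExtremalNil V) (hx : x ≠ 0) :
    Nat.card (pointQuotient V x) =
        Nat.card K ^ (finrank K (E ⧸ Submodule.span K {x})).choose 2 ∧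
      Nat.card (pointOrbit V x) * Nat.card (rankOneFunctionals V x) * Nat.card K =
        Nat.card K ^ finrank K E := by
  have hle₁ := card_le_of_forall_isNilpotent
    (isNilpotent_of_mem_pointQuotient (x := x) hV.isNilpotent)
  have hle₂ := card_pointOrbit_mul_card_rankOneFunctionals_le hV.isNilpotent hx
  have : Finite (End K (E ⧸ Submodule.span K {x})) := finite_of_finite K
  refine (mul_eq_mul_iff_eq_and_eq_of_pos hle₁ hle₂ Nat.card_pos
    (pow_pos Nat.card_pos _)).mp ?_
  rw [← pow_choose_two_mul_card hx, ← hV.card_eq, card_eq_card_pointOrbit_mul hV.isNilpotent hx]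
  ring

theorem quotient (hV : IsExtremalNil V) (hx : x ≠ 0) : IsExtremalNil (pointQuotient V x) :=
  ⟨isNilpotent_of_mem_pointQuotient hV.isNilpotent,
    (hV.card_pointQuotient_eq_and_card_pointOrbit_mul_eq hx).1⟩

theorem card_pointOrbit_mul_eq_and_card_rankOneFunctionals_eq (hV : IsExtremalNil V) (hx : x ≠ 0) :
    Nat.card (pointOrbit V x) * Nat.card K = Nat.card (orbitSpan V x) ∧
      Nat.card (rankOneFunctionals V x) = Nat.card (orbitSpan V x).dualAnnihilator := by
  have : Finite E := finite_of_finite K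
  have : Finite (Dual K E) := finite_of_finite K
  refine (mul_eq_mul_iff_eq_and_eq_of_pos (card_pointOrbit_mul_card_le hV.isNilpotent hx)
    (card_rankOneFunctionals_le hV.isNilpotent) (Nat.mul_pos Nat.card_pos Nat.card_pos)
    Nat.card_pos).mp ?_
  rw [mul_right_comm, (hV.card_pointQuotient_eq_and_card_pointOrbit_mul_eq hx).2,
    card_mul_card_dualAnnihilator]

theorem mem_rankOneFunctionals_iff (hV : IsExtremalNil V) (hx : x ≠ 0) {φ : Dual K E} :
    φ ∈ rankOneFunctionals V x ↔ φ ∈ (orbitSpan V x).dualAnnihilator := by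
  have : Finite (Dual K E) := finite_of_finite K
  have h := AddSubgroup.eq_of_le_of_card_ge
    (rankOneFunctionals_le_dualAnnihilator_orbitSpan hV.isNilpotent)
    (hV.card_pointOrbit_mul_eq_and_card_rankOneFunctionals_eq hx).2.ge
  rw [h, Submodule.mem_toAddSubgroup]

theorem exists_eq_apply_add_smul (hV : IsExtremalNil V) (hx : x ≠ 0) {w : E}
    (hw : w ∈ orbitSpan V x) : ∃ v ∈ V, ∃ c : K, w = v x + c • x := by
  have : Finite E := finite_of_finite K
  obtain ⟨⟨⟨_, v, hv, rfl⟩, c⟩, hvc⟩ := ((Nat.bijective_iff_injective_and_card _).mpr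
    ⟨injective_pointOrbitAddSMul hV.isNilpotent hx,
      by rw [Nat.card_prod, (hV.card_pointOrbit_mul_eq_and_card_rankOneFunctionals_eq hx).1]⟩
    ).surjective ⟨w, hw⟩
  exact ⟨v, hv, c, (Subtype.ext_iff.mp hvc).symm⟩

end IsExtremalNil

variable {W : Submodule K E}

theorem choose_two_add (m n : ℕ) : (m + n).choose 2 = m.choose 2 + (n.choose 2 + n * m) := by
  induction m with
  | zero => simp
  | succ m ih =>
    rw [Nat.succ_add, Nat.choose_succ_succ' _ 1, Nat.choose_succ_succ' m 1, ih,
      Nat.choose_one_right, Nat.choose_one_right]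
    ring

theorem card_mapsInto_vanishingOn_le :
    Nat.card (mapsInto (vanishingOn V W) W) ≤
      Nat.card K ^ (finrank K (E ⧸ W) * finrank K W) := by
  have : Finite ((E ⧸ W) →ₗ[K] W) := finite_of_finite K
  rw [← finrank_linearMap K K (E ⧸ W) W, ← natCard_eq_pow_finrank]
  refine (Nat.card_mono (Set.finite_range fun g : (E ⧸ W) →ₗ[K] W ↦ W.subtype ∘ₗ g ∘ₗ W.mkQ)
    fun v hv ↦ ?_).trans (Finite.card_range_le _)
  obtain ⟨hvN, hvE⟩ := mem_mapsInto.mp hv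
  have hvW : W ≤ LinearMap.ker (v.codRestrict W hvE) := fun w hw ↦
    Subtype.ext ((mem_vanishingOn.mp hvN).2 w hw)
  exact ⟨W.liftQ (v.codRestrict W hvE) hvW, LinearMap.ext fun _ ↦ rfl⟩

theorem card_vanishingOn_le (hV : ∀ v ∈ V, IsNilpotent v) :
    Nat.card (vanishingOn V W) ≤
      Nat.card K ^ ((finrank K (E ⧸ W)).choose 2 + finrank K (E ⧸ W) * finrank K W) := by
  have hN {v : End K E} (hv : v ∈ vanishingOn V W) := mem_vanishingOn.mp hv
  rw [card_eq_card_quotientAction_mul (W := W) fun v hv w hw ↦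
    ((hN hv).2 w hw).symm ▸ zero_mem W, pow_add]
  refine Nat.mul_le_mul (card_le_of_forall_isNilpotent fun g hg ↦ ?_) card_mapsInto_vanishingOn_le
  exact isNilpotent_of_mem_quotientAction (fun v hv ↦ hV v (hN hv).1) hg

theorem IsExtremalNil.restrict (hV : IsExtremalNil V) (hVW : ∀ v ∈ V, ∀ w ∈ W, v w ∈ W) :
    IsExtremalNil (restrictAction V W) := by
  have hnil : ∀ g ∈ restrictAction V W, IsNilpotent g := fun g hg ↦
    isNilpotent_of_mem_restrictAction hV.isNilpotent hg
  have : Finite (End K W) := finite_of_finite K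
  refine ⟨hnil, ((mul_eq_mul_iff_eq_and_eq_of_pos (card_le_of_forall_isNilpotent hnil)
    (card_vanishingOn_le (W := W) hV.isNilpotent) Nat.card_pos
    (pow_pos Nat.card_pos _)).mp ?_).1⟩
  rw [← card_eq_card_restrictAction_mul hVW, hV.card_eq, ← pow_add, ← choose_two_add, add_comm,
    Submodule.finrank_quotient_add_finrank]

end Extremal

section StrictlyUpper

variable {K E ι : Type*} [Field K] [AddCommGroup E] [Module K E]

/-- The operators that are strictly upper triangular in the basis `e`. -/
def strictlyUpper [Preorder ι] (e : Basis ι K E) : Submodule K (End K E) where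
  carrier := {f | ∀ i j, j ≤ i → e.coord i (f (e j)) = 0}
  zero_mem' := fun i j _ ↦ by rw [LinearMap.zero_apply, map_zero]
  add_mem' := fun hf hg i j hji ↦ by
    rw [LinearMap.add_apply, map_add, hf i j hji, hg i j hji, add_zero]
  smul_mem' := fun c f hf i j hji ↦ by
    rw [LinearMap.smul_apply, map_smul, hf i j hji, smul_zero]

/-- A group of operators is triangular if it consists of all strictly upper triangular operators
in some basis. -/
def IsTriangular (V : AddSubgroup (End K E)) : Prop :=
  ∃ (n : ℕ) (e : Basis (Fin n) K E), V = (strictlyUpper e).toAddSubgroup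

theorem mem_strictlyUpper [Preorder ι] {e : Basis ι K E} {f : End K E} :
    f ∈ strictlyUpper e ↔ ∀ i j, j ≤ i → e.coord i (f (e j)) = 0 :=
  Iff.rfl

theorem coord_apply_of_ne (e : Basis ι K E) {i j : ι} (hij : i ≠ j) : e.coord i (e j) = 0 := by
  rw [e.coord_apply, e.repr_self, Finsupp.single_eq_of_ne hij]

theorem coord_apply_self (e : Basis ι K E) (i : ι) : e.coord i (e i) = 1 := by
  rw [e.coord_apply, e.repr_self, Finsupp.single_eq_same]

theorem smulRight_mem_strictlyUpper [Preorder ι] (e : Basis ι K E) {i j : ι} (hij : i < j) :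
    (e.coord j).smulRight (e i) ∈ strictlyUpper e := by
  intro k l hlk
  rw [LinearMap.smulRight_apply, map_smul, smul_eq_mul, mul_eq_zero]
  rcases eq_or_ne k i with rfl | hki
  · exact .inl (coord_apply_of_ne e (hlk.trans_lt hij).ne')
  · exact .inr (coord_apply_of_ne e hki)

theorem mul_mem_strictlyUpper [LinearOrder ι] [Finite ι] {e : Basis ι K E} {f g : End K E}
    (hf : f ∈ strictlyUpper e) (hg : g ∈ strictlyUpper e) : f * g ∈ strictlyUpper e := by
  cases nonempty_fintype ι
  intro i j hji
  rw [End.mul_apply, ← e.sum_repr (g (e j)), map_sum, map_sum]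
  refine Finset.sum_eq_zero fun k _ ↦ ?_
  rw [map_smul, map_smul]
  rcases le_total j k with hjk | hkj
  · rw [show e.repr (g (e j)) k = 0 from hg k j hjk, zero_smul]
  · rw [hf i k (hkj.trans hji), smul_zero]

end StrictlyUpper

section Lifting

variable {K E : Type*} [Field K] [AddCommGroup E] [Module K E] {V : AddSubgroup (End K E)} {x : E}

theorem span_singleton_le_comap {v : End K E} (hv : v x = 0) :
    Submodule.span K {x} ≤ (Submodule.span K {x}).comap v := by
  rw [Submodule.span_singleton_le_iff_mem, Submodule.mem_comap, hv]
  exact zero_mem _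

theorem exists_mem_pointQuotient {v : End K E} (hv : v ∈ V) (hvx : v x = 0) :
    ∃ g ∈ pointQuotient V x,
      (Submodule.span K {x}).mkQ ∘ₗ v = g ∘ₗ (Submodule.span K {x}).mkQ :=
  have hvg := (Submodule.mapQ_mkQ _ _ _ (h := span_singleton_le_comap hvx)).symm
  ⟨_, mem_quotientAction.mpr ⟨v, ⟨hv, hvx⟩, hvg⟩, hvg⟩

theorem exists_apply_eq_zero_of_isNilpotent [Nontrivial E] {v : End K E} (hv : IsNilpotent v) :
    ∃ x, x ≠ 0 ∧ v x = 0 := by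
  by_contra! hker
  obtain ⟨k, hk⟩ := hv
  obtain ⟨y, hy⟩ := exists_ne (0 : E)
  have hinj : Function.Injective v :=
    (injective_iff_map_eq_zero v).mpr fun x hvx ↦ not_imp_not.mp (hker x) hvx
  refine hy (hinj.iterate k ?_)
  rw [← End.pow_apply, ← End.pow_apply, hk, LinearMap.zero_apply, LinearMap.zero_apply]

theorem exists_sub_eq_smulRight (hx : x ≠ 0) {a b : End K E}
    (hab : (Submodule.span K {x}).mkQ ∘ₗ a = (Submodule.span K {x}).mkQ ∘ₗ b) :
    ∃ φ : Dual K E, a - b = φ.smulRight x :=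
  exists_eq_smulRight_of_range_le_span hx fun y ↦
    (Submodule.Quotient.eq _).mp (LinearMap.congr_fun hab y)

theorem exists_eq_add_smulRight {T : End K E} (hx : x ≠ 0) (hTx : T x = 0)
    {g : End K (E ⧸ Submodule.span K {x})} (hg : g ∈ pointQuotient V x)
    (hTg : (Submodule.span K {x}).mkQ ∘ₗ T = g ∘ₗ (Submodule.span K {x}).mkQ) :
    ∃ v ∈ V, v x = 0 ∧ ∃ φ : Dual K E, φ x = 0 ∧ T = v + φ.smulRight x := by
  obtain ⟨v, ⟨hv, hvx⟩, hvg⟩ := mem_quotientAction.mp hg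
  replace hvx : v x = 0 := hvx
  obtain ⟨φ, hφ⟩ := exists_sub_eq_smulRight hx (hTg.trans hvg.symm)
  refine ⟨v, hv, hvx, φ, ?_, by rw [← hφ, add_sub_cancel]⟩
  have h := LinearMap.congr_fun hφ x
  rw [LinearMap.sub_apply, hTx, hvx, sub_zero, LinearMap.smulRight_apply] at h
  exact (smul_eq_zero.mp h.symm).resolve_right hx

theorem trace_smulRight_mul [FiniteDimensional K E] (φ : Dual K E) (y : E) (b : End K E) :
    LinearMap.trace K E (φ.smulRight y * b) = φ (b y) := by
  rw [LinearMap.trace_mul_comm, ← LinearMap.trace_smulRight φ (b y)]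
  exact congrArg _ (LinearMap.ext fun _ ↦ map_smul b _ _)

variable [Finite K] [FiniteDimensional K E]

theorem IsExtremalNil.mem_of_trace_mul_eq_zero (hV : IsExtremalNil V) (hx : x ≠ 0)
    {T : End K E} (hTx : T x = 0) {g : End K (E ⧸ Submodule.span K {x})}
    (hg : g ∈ pointQuotient V x)
    (hTg : (Submodule.span K {x}).mkQ ∘ₗ T = g ∘ₗ (Submodule.span K {x}).mkQ)
    (htrace : ∀ b ∈ V, LinearMap.trace K E (T * b) = 0) : T ∈ V := by
  obtain ⟨v, hv, -, φ, hφx, rfl⟩ := exists_eq_add_smulRight hx hTx hg hTg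
  refine add_mem hv ((hV.mem_rankOneFunctionals_iff hx).mpr
    (mem_dualAnnihilator_orbitSpan.mpr ⟨hφx, fun b hb ↦ ?_⟩))
  have h := htrace b hb
  rwa [add_mul, map_add, trace_mul_eq_zero hV.isNilpotent hv hb, zero_add,
    trace_smulRight_mul] at h

theorem IsExtremalNil.smul_mem (hV : IsExtremalNil V)
    (hQ : ∀ x : E, x ≠ 0 → IsTriangular (pointQuotient V x)) (c : K) {a : End K E} (ha : a ∈ V) :
    c • a ∈ V := by
  rcases subsingleton_or_nontrivial E with _ | _
  · rwa [Subsingleton.elim (c • a) a]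
  obtain ⟨x, hx, hax⟩ := exists_apply_eq_zero_of_isNilpotent (hV.isNilpotent a ha)
  obtain ⟨n, e, he⟩ := hQ x hx
  obtain ⟨g, hg, hag⟩ := exists_mem_pointQuotient ha hax
  refine hV.mem_of_trace_mul_eq_zero hx (g := c • g) (by rw [LinearMap.smul_apply, hax, smul_zero])
    ?_ (by rw [LinearMap.comp_smul, hag, LinearMap.smul_comp]) fun b hb ↦ ?_
  · rw [he] at hg ⊢
    exact (strictlyUpper e).smul_mem c hg
  · rw [smul_mul_assoc, map_smul, trace_mul_eq_zero hV.isNilpotent ha hb, smul_zero]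

theorem IsExtremalNil.jordan_mem (hV : IsExtremalNil V) (hx : x ≠ 0)
    (hQ : IsTriangular (pointQuotient V x)) {a b : End K E} (ha : a ∈ V) (hax : a x = 0)
    (hb : b ∈ V) (hbx : b x = 0) : a * b + b * a ∈ V := by
  obtain ⟨n, e, he⟩ := hQ
  obtain ⟨g, hg, hag⟩ := exists_mem_pointQuotient ha hax
  obtain ⟨h, hh, hbh⟩ := exists_mem_pointQuotient hb hbx
  refine hV.mem_of_trace_mul_eq_zero hx (g := g * h + h * g)
    (by simp [hax, hbx]) ?_ ?_ fun c hc ↦ trace_jordan_mul_eq_zero hV.isNilpotent ha hb hc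
  · rw [he] at hg hh ⊢
    exact add_mem (mul_mem_strictlyUpper hg hh) (mul_mem_strictlyUpper hh hg)
  · ext y
    have hag (y) := LinearMap.congr_fun hag y
    have hbh (y) := LinearMap.congr_fun hbh y
    simp only [LinearMap.comp_apply, LinearMap.add_apply, End.mul_apply, map_add] at hag hbh ⊢
    rw [hag, hbh, hbh, hag]

end Lifting

section RankOne

variable {K E : Type*} [Field K] [AddCommGroup E] [Module K E] {V : AddSubgroup (End K E)} {x : E}

/-- `V` contains an operator of rank one. -/
def HasRankOne (V : AddSubgroup (End K E)) : Prop :=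
  ∃ z ≠ 0, ∃ φ ≠ 0, φ ∈ rankOneFunctionals V z

/-- Lifts to `V` of the elementary operators of a triangular group `pointQuotient V x`: the
vectors `vec i` lift the triangularizing basis of `E ⧸ K x`, and for `i < j` the elementary
operator sending the basis vector `j` to the basis vector `i` has a lift in `V` that differs by
`corr i j ⊗ x` from the one sending `vec j` to `vec i`. -/
structure ElementaryLifts (V : AddSubgroup (End K E)) (x : E) (n : ℕ) where
  basis : Basis (Fin n) K (E ⧸ Submodule.span K {x})
  pointQuotient_eq : pointQuotient V x = (strictlyUpper basis).toAddSubgroup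
  vec : Fin n → E
  mkQ_vec : ∀ i, (Submodule.span K {x}).mkQ (vec i) = basis i
  corr : Fin n → Fin n → Dual K E
  corr_base : ∀ i j, i < j → corr i j x = 0
  mem : ∀ i j, i < j →
    ((basis.coord j ∘ₗ (Submodule.span K {x}).mkQ).smulRight (vec i) +
      (corr i j).smulRight x) ∈ V

theorem mkQ_span_singleton_self (x : E) : (Submodule.span K {x}).mkQ x = 0 :=
  (Submodule.Quotient.mk_eq_zero _).mpr (Submodule.mem_span_singleton_self x)

theorem nonempty_elementaryLifts_of_eq {n : ℕ} (hx : x ≠ 0)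
    (e : Basis (Fin n) K (E ⧸ Submodule.span K {x}))
    (he : pointQuotient V x = (strictlyUpper e).toAddSubgroup) :
    Nonempty (ElementaryLifts V x n) := by
  choose y hy using fun i ↦ (Submodule.span K {x}).mkQ_surjective (e i)
  have hlift (i j : Fin n) (hij : i < j) : ∃ φ : Dual K E, φ x = 0 ∧
      (e.coord j ∘ₗ (Submodule.span K {x}).mkQ).smulRight (y i) + φ.smulRight x ∈ V := by
    obtain ⟨v, hv, -, φ, hφx, hφ⟩ := exists_eq_add_smulRight (V := V) hx
      (T := (e.coord j ∘ₗ (Submodule.span K {x}).mkQ).smulRight (y i))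
      (g := (e.coord j).smulRight (e i)) (by
        rw [LinearMap.smulRight_apply, LinearMap.comp_apply, mkQ_span_singleton_self, map_zero,
          zero_smul])
      (he ▸ smulRight_mem_strictlyUpper e hij) (LinearMap.ext fun z ↦ by simp [← hy i])
    refine ⟨-φ, by rw [LinearMap.neg_apply, hφx, neg_zero], ?_⟩
    rw [hφ]
    convert hv using 1
    ext z
    simp
  choose! r hrx hr using hlift
  exact ⟨⟨e, he, y, hy, r, hrx, hr⟩⟩

namespace ElementaryLifts

section Lifts

variable {n : ℕ} (L : ElementaryLifts V x n)

/-- The functional killing `x` and dual to the vectors `vec i`. -/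
noncomputable def coord (j : Fin n) : Dual K E :=
  L.basis.coord j ∘ₗ (Submodule.span K {x}).mkQ

/-- The lift to `V` of the elementary operator sending the basis vector `j` to `i`. -/
noncomputable def elem (i j : Fin n) : End K E :=
  (L.coord j).smulRight (L.vec i) + (L.corr i j).smulRight x

theorem elem_mem {i j : Fin n} (hij : i < j) : L.elem i j ∈ V :=
  L.mem i j hij

theorem elem_apply (i j : Fin n) (z : E) :
    L.elem i j z = L.coord j z • L.vec i + L.corr i j z • x :=
  rfl

theorem coord_base (j : Fin n) : L.coord j x = 0 := by
  rw [coord, LinearMap.comp_apply, mkQ_span_singleton_self, map_zero]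

theorem coord_vec_self (i : Fin n) : L.coord i (L.vec i) = 1 := by
  rw [coord, LinearMap.comp_apply, mkQ_vec, coord_apply_self]

theorem coord_vec_of_ne {i j : Fin n} (hij : i ≠ j) : L.coord i (L.vec j) = 0 := by
  rw [coord, LinearMap.comp_apply, mkQ_vec, coord_apply_of_ne _ hij]

theorem elem_base {i j : Fin n} (hij : i < j) : L.elem i j x = 0 := by
  rw [elem_apply, coord_base, L.corr_base i j hij, zero_smul, zero_smul, add_zero]

theorem dual_ext {φ ψ : Dual K E} (hx : φ x = ψ x) (hvec : ∀ i, φ (L.vec i) = ψ (L.vec i)) :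
    φ = ψ := by
  have hker : Submodule.span K {x} ≤ LinearMap.ker (φ - ψ) := by
    rw [Submodule.span_singleton_le_iff_mem, LinearMap.mem_ker, LinearMap.sub_apply, hx, sub_self]
  have hlift : (Submodule.span K {x}).liftQ (φ - ψ) hker = 0 := L.basis.ext fun i ↦ by
    rw [← L.mkQ_vec, Submodule.mkQ_apply, Submodule.liftQ_apply, LinearMap.sub_apply, hvec,
      sub_self, LinearMap.zero_apply]
  rw [← sub_eq_zero, ← Submodule.liftQ_mkQ _ _ hker, hlift, LinearMap.zero_comp]

theorem exists_mem_strictlyUpper {v : End K E} (hv : v ∈ V) (hvx : v x = 0) :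
    ∃ g ∈ strictlyUpper L.basis,
      (Submodule.span K {x}).mkQ ∘ₗ v = g ∘ₗ (Submodule.span K {x}).mkQ := by
  obtain ⟨g, hg, hvg⟩ := exists_mem_pointQuotient hv hvx
  rw [L.pointQuotient_eq] at hg
  exact ⟨g, hg, hvg⟩

theorem hasRankOne_of_smulRight_mem {c φ : Dual K E} {i j : Fin n} {s : K}
    (hc : c (L.vec j) = 1)
    (hmem : c.smulRight (L.vec i) + φ.smulRight x ∈ V) (hφ : φ = s • c) : HasRankOne V := by
  refine ⟨L.vec i + s • x, fun hzero ↦ ?_, c, fun hczero ↦ ?_, ?_⟩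
  · have h := congrArg (L.coord i) hzero
    rw [map_add, map_smul, coord_vec_self, coord_base, map_zero, smul_zero, add_zero] at h
    exact one_ne_zero h
  · exact zero_ne_one (hczero ▸ hc)
  · rw [mem_rankOneFunctionals]
    convert hmem using 1
    ext z
    simp [hφ, mul_smul, smul_comm s]

theorem hasRankOne_of_corr_vec_eq_zero {i j : Fin n} (hij : i < j)
    (hcorr : ∀ k ≠ j, L.corr i j (L.vec k) = 0) : HasRankOne V := by
  refine L.hasRankOne_of_smulRight_mem (L.coord_vec_self j) (L.elem_mem hij)
    (s := L.corr i j (L.vec j)) (L.dual_ext ?_ fun k ↦ ?_)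
  · rw [L.corr_base i j hij, LinearMap.smul_apply, coord_base, smul_zero]
  · rcases eq_or_ne k j with rfl | hkj
    · rw [LinearMap.smul_apply, coord_vec_self, smul_eq_mul, mul_one]
    · rw [LinearMap.smul_apply, hcorr k hkj, L.coord_vec_of_ne hkj.symm, smul_zero]

theorem elem_mul_elem {i j : Fin n} (hij : i < j) (k l : Fin n) :
    L.elem i j * L.elem k l = L.coord j (L.vec k) • (L.coord l).smulRight (L.vec i) +
      (L.corr i j (L.vec k) • L.coord l).smulRight x := by
  ext z
  rw [End.mul_apply, L.elem_apply k l, map_add, map_smul, map_smul, L.elem_base hij, smul_zero,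
    add_zero, elem_apply]
  simp [smul_comm (L.coord l z), mul_smul]

include L in
theorem isTriangular_pointQuotient : IsTriangular (pointQuotient V x) :=
  ⟨n, L.basis, L.pointQuotient_eq⟩

section Jordan

variable [Finite K] [FiniteDimensional K E]

theorem corr_vec_smul_coord_add (hV : IsExtremalNil V) (hx : x ≠ 0) (hR : ¬HasRankOne V)
    {i j k l : Fin n} (hij : i < j) (hkl : k < l) (hjk : j ≠ k) (hli : l ≠ i) :
    L.corr i j (L.vec k) • L.coord l + L.corr k l (L.vec i) • L.coord j = 0 := by
  have hjordan := hV.jordan_mem hx L.isTriangular_pointQuotient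
    (L.elem_mem hij) (L.elem_base hij) (L.elem_mem hkl) (L.elem_base hkl)
  rw [L.elem_mul_elem hij, L.elem_mul_elem hkl, L.coord_vec_of_ne hjk,
    L.coord_vec_of_ne hli, zero_smul, zero_smul, zero_add, zero_add] at hjordan
  by_contra hφ
  refine hR ⟨x, hx, _, hφ, ?_⟩
  rw [mem_rankOneFunctionals]
  convert hjordan using 1
  ext z
  simp [add_smul]

theorem corr_eq (hV : IsExtremalNil V) (hx : x ≠ 0) (hR : ¬HasRankOne V) {i j l : Fin n}
    (hij : i < j) (hjl : j < l) :
    L.corr i l = L.corr i j (L.vec j) • L.coord l + L.corr j l (L.vec i) • L.coord j := by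
  have hjordan := sub_mem (hV.jordan_mem hx L.isTriangular_pointQuotient
    (L.elem_mem hij) (L.elem_base hij) (L.elem_mem hjl) (L.elem_base hjl))
    (L.elem_mem (hij.trans hjl))
  rw [L.elem_mul_elem hij, L.elem_mul_elem hjl, L.coord_vec_self,
    L.coord_vec_of_ne (hij.trans hjl).ne', zero_smul, zero_add, one_smul] at hjordan
  by_contra hne
  refine hR ⟨x, hx, _, sub_ne_zero.mpr (Ne.symm hne), ?_⟩
  rw [mem_rankOneFunctionals]
  convert hjordan using 1
  ext z
  simp only [elem, LinearMap.smulRight_apply, LinearMap.add_apply, LinearMap.sub_apply,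
    LinearMap.smul_apply, add_smul, sub_smul]
  abel

theorem corr_vec_eq_zero_of_ne (hV : IsExtremalNil V) (hx : x ≠ 0) (hR : ¬HasRankOne V)
    {i j k l : Fin n} (hij : i < j) (hjl : j < l) (hkj : k ≠ j) (hkl : k ≠ l) :
    L.corr i l (L.vec k) = 0 := by
  rw [L.corr_eq hV hx hR hij hjl, LinearMap.add_apply, LinearMap.smul_apply, LinearMap.smul_apply,
    L.coord_vec_of_ne hkj.symm, L.coord_vec_of_ne hkl.symm, smul_zero, smul_zero, add_zero]

theorem corr_vec_self_left (hV : IsExtremalNil V) (hx : x ≠ 0) (hR : ¬HasRankOne V)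
    {i j l : Fin n} (hij : i < j) (hjl : j < l) : L.corr i j (L.vec i) = 0 := by
  simpa [L.coord_vec_of_ne hjl.ne, L.coord_vec_self] using LinearMap.congr_fun
    (L.corr_vec_smul_coord_add hV hx hR hij (hij.trans hjl) hij.ne' (hij.trans hjl).ne') (L.vec l)

theorem corr_vec_self_right (hV : IsExtremalNil V) (hx : x ≠ 0) (hR : ¬HasRankOne V)
    {i j l : Fin n} (hij : i < j) (hjl : j < l) :
    L.corr i l (L.vec l) = L.corr i j (L.vec j) := by
  simp [L.corr_eq hV hx hR hij hjl, L.coord_vec_of_ne hjl.ne, L.coord_vec_self]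

theorem two_mul_corr_vec (hV : IsExtremalNil V) (hx : x ≠ 0) (hR : ¬HasRankOne V)
    {i j l : Fin n} (hij : i < j) (hjl : j < l) : 2 * L.corr i l (L.vec j) = 0 := by
  have hadd : L.corr i l (L.vec j) + L.corr j l (L.vec i) = 0 := by
    simpa [L.coord_vec_self] using LinearMap.congr_fun (L.corr_vec_smul_coord_add hV hx hR
      (hij.trans hjl) hjl hjl.ne' (hij.trans hjl).ne') (L.vec l)
  have heq : L.corr i l (L.vec j) = L.corr j l (L.vec i) := by
    simp [L.corr_eq hV hx hR hij hjl, L.coord_vec_of_ne hjl.ne', L.coord_vec_self]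
  rwa [← heq, ← two_mul] at hadd

include L in
theorem hasRankOne_of_four_le (hV : IsExtremalNil V) (hx : x ≠ 0) (hn : 4 ≤ n) :
    HasRankOne V := by
  by_contra hR
  have h01 : (⟨0, by lia⟩ : Fin n) < ⟨1, by lia⟩ := by simp
  have h02 : (⟨0, by lia⟩ : Fin n) < ⟨2, by lia⟩ := by simp
  have h13 : (⟨1, by lia⟩ : Fin n) < ⟨3, by lia⟩ := by simp
  have h23 : (⟨2, by lia⟩ : Fin n) < ⟨3, by lia⟩ := by simp
  refine hR (L.hasRankOne_of_corr_vec_eq_zero (h01.trans h13) fun k hk3 ↦ ?_)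
  by_cases hk1 : k = ⟨1, by lia⟩
  · exact L.corr_vec_eq_zero_of_ne hV hx hR h02 h23 (by simp [hk1]) hk3
  · exact L.corr_vec_eq_zero_of_ne hV hx hR h01 h13 hk1 hk3

theorem smulRight_add_mem (hV : IsExtremalNil V)
    (hQ : ∀ x : E, x ≠ 0 → IsTriangular (pointQuotient V x)) {i j l : Fin n} (hij : i < j)
    (hil : i < l) (t : K) :
    (L.coord j + t • L.coord l).smulRight (L.vec i) +
      (L.corr i j + t • L.corr i l).smulRight x ∈ V := by
  convert add_mem (L.elem_mem hij) (hV.smul_mem hQ t (L.elem_mem hil)) using 1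
  ext z
  simp only [elem, LinearMap.smulRight_apply, LinearMap.add_apply, LinearMap.smul_apply,
    smul_eq_mul, add_smul, mul_smul, smul_add]
  abel

end Jordan

end Lifts

section LowDimension

variable [Finite K] [FiniteDimensional K E]

/- The Jordan relations force `2 * λ = 0` for `λ = corr 0 2 (vec 1)`. If `λ ≠ 0`, every element of
`K` is a square, and `elem 0 1 + t • elem 0 2` has rank one when `t ^ 2 * λ = corr 0 1 (vec 2)`. -/
theorem hasRankOne_of_three (L : ElementaryLifts V x 3) (hV : IsExtremalNil V) (hx : x ≠ 0)
    (hQ : ∀ x : E, x ≠ 0 → IsTriangular (pointQuotient V x)) : HasRankOne V := by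
  by_contra hR
  have h01 : (0 : Fin 3) < 1 := by decide
  have h12 : (1 : Fin 3) < 2 := by decide
  have h02 := h01.trans h12
  have hρ₀ : L.corr 0 2 (L.vec 0) = 0 := L.corr_vec_eq_zero_of_ne hV hx hR h01 h12 h01.ne h02.ne
  by_cases hρ₁ : L.corr 0 2 (L.vec 1) = 0
  · exact hR (L.hasRankOne_of_corr_vec_eq_zero h02 fun k hk ↦ by fin_cases k <;> simp_all)
  have hchar : ringChar K = 2 := CharP.ringChar_of_prime_eq_zero Nat.prime_two
    (mod_cast (mul_eq_zero.mp (L.two_mul_corr_vec hV hx hR h01 h12)).resolve_right hρ₁)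
  obtain ⟨t, ht⟩ := FiniteField.isSquare_of_char_two hchar
    (L.corr 0 1 (L.vec 2) / L.corr 0 2 (L.vec 1))
  have hr₂ : L.corr 0 1 (L.vec 2) = t * t * L.corr 0 2 (L.vec 1) := (div_eq_iff hρ₁).mp ht
  have c21 : L.coord 2 (L.vec 1) = 0 := L.coord_vec_of_ne h12.ne'
  refine hR (L.hasRankOne_of_smulRight_mem (j := 1)
    (s := L.corr 0 1 (L.vec 1) + t * L.corr 0 2 (L.vec 1)) (by simp [c21, L.coord_vec_self])
    (L.smulRight_add_mem hV hQ h01 h02 t) (L.dual_ext ?_ fun k ↦ ?_))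
  · simp [L.corr_base 0 1 h01, L.corr_base 0 2 h02, coord_base]
  · fin_cases k
    · simp [L.corr_vec_self_left hV hx hR h01 h12, hρ₀, L.coord_vec_of_ne h01.ne',
        L.coord_vec_of_ne h02.ne']
    · simp [c21, L.coord_vec_self]
    · simp only [Fin.reduceFinMk, LinearMap.add_apply, LinearMap.smul_apply, smul_eq_mul, hr₂,
        L.corr_vec_self_right hV hx hR h01 h12, L.coord_vec_of_ne h12.ne, L.coord_vec_self]
      ring

end LowDimension

end ElementaryLifts

end RankOne

section CubicTrace

open scoped Matrix

theorem exists_ne_zero_vecMul_eq_zero_of_alternating {K : Type*} [Field K]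
    {A : Matrix (Fin 3) (Fin 3) K} (hdiag : ∀ i, A i i = 0) (hskew : ∀ i j, A i j = -A j i) :
    ∃ v : Fin 3 → K, v ≠ 0 ∧ v ᵥ* A = 0 := by
  rw [Matrix.exists_vecMul_eq_zero_iff, Matrix.det_fin_three, hdiag, hdiag, hdiag, hskew 1 0,
    hskew 2 0, hskew 2 1]
  ring

variable {K E : Type*} [Field K] [AddCommGroup E] [Module K E] [FiniteDimensional K E]

/- On a space of nilpotent operators, `tr (a * a * b)` is an alternating form in `a` and `b`. -/
theorem exists_ne_zero_forall_trace_mul_self_mul_eq_zero {S : Submodule K (End K E)}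
    (hS : ∀ v ∈ S, IsNilpotent v) (hrank : finrank K S = 3) :
    ∃ a ∈ S, a ≠ 0 ∧ ∀ b ∈ S, LinearMap.trace K E (a * a * b) = 0 := by
  let e : Basis (Fin 3) K S := finBasisOfFinrankEq K S hrank
  let F (a : End K E) : S →ₗ[K] K :=
    LinearMap.trace K E ∘ₗ LinearMap.mulLeft K (a * a) ∘ₗ S.subtype
  have hskew (a b : S) : F a b = -F b a := trace_mul_mul_self (V := S.toAddSubgroup) hS a.2 b.2
  have hdiag (a : S) : F a a = 0 := by
    change LinearMap.trace K E ((a : End K E) * a * a) = 0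
    rw [← pow_three']
    exact (LinearMap.isNilpotent_trace_of_isNilpotent
      ((hS a a.2).pow_of_pos three_ne_zero)).eq_zero
  obtain ⟨v, hv, hvF⟩ := exists_ne_zero_vecMul_eq_zero_of_alternating
    (A := .of fun i j ↦ F (e i) (e j)) (fun i ↦ hdiag _) (fun i j ↦ hskew _ _)
  have hsum : ∑ i, v i • F (e i) = 0 := e.ext fun j ↦ by
    simpa [Matrix.vecMul, dotProduct, LinearMap.sum_apply] using congrFun hvF j
  refine ⟨_, (∑ i, v i • e i).2, fun hzero ↦ hv (funext (Fintype.linearIndependent_iff.mp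
    e.linearIndependent v (Subtype.ext hzero))), fun b hb ↦ ?_⟩
  calc F (∑ i, v i • e i : S) ⟨b, hb⟩ = -F b (∑ i, v i • e i) := hskew _ _
    _ = (∑ i, v i • F (e i)) ⟨b, hb⟩ := by
      rw [map_sum, LinearMap.sum_apply, ← Finset.sum_neg_distrib]
      refine Finset.sum_congr rfl fun i _ ↦ ?_
      rw [map_smul, LinearMap.smul_apply, hskew (e i) ⟨b, hb⟩, smul_neg]
    _ = 0 := by rw [hsum, LinearMap.zero_apply]

end CubicTrace

section StrictlyUpperLow

variable {K E : Type*} [Field K] [AddCommGroup E] [Module K E]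

theorem eq_zero_of_mem_strictlyUpper_fin_one {e : Basis (Fin 1) K E} {g : End K E}
    (hg : g ∈ strictlyUpper e) : g = 0 :=
  e.ext fun j ↦ e.ext_elem fun i ↦ by
    rw [LinearMap.zero_apply, map_zero]
    exact hg i j (Subsingleton.elim j i).le

theorem eq_smul_smulRight_of_mem_strictlyUpper_fin_two {e : Basis (Fin 2) K E} {g : End K E}
    (hg : g ∈ strictlyUpper e) : g = e.coord 0 (g (e 1)) • (e.coord 1).smulRight (e 0) := by
  have hg' (i j : Fin 2) (hji : j ≤ i) : e.repr (g (e j)) i = 0 := hg i j hji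
  refine e.ext fun j ↦ e.ext_elem fun i ↦ ?_
  fin_cases i <;> fin_cases j <;> simp [hg']

end StrictlyUpperLow

section RankOneLow

variable {K E : Type*} [Field K] [AddCommGroup E] [Module K E] {V : AddSubgroup (End K E)} {x : E}

namespace ElementaryLifts

theorem mkQ_comp_elem {n : ℕ} (L : ElementaryLifts V x n) (i j : Fin n) :
    (Submodule.span K {x}).mkQ ∘ₗ L.elem i j =
      (L.basis.coord j).smulRight (L.basis i) ∘ₗ (Submodule.span K {x}).mkQ := by
  ext z
  rw [LinearMap.comp_apply, elem_apply, map_add, map_smul, map_smul, mkQ_span_singleton_self,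
    smul_zero, add_zero, mkQ_vec]
  rfl

theorem exists_eq_smul_elem_add_of_two (L : ElementaryLifts V x 2) (hx : x ≠ 0) {a : End K E}
    (ha : a ∈ V) (hax : a x = 0) :
    ∃ (s : K) (φ : Dual K E), a = s • L.elem 0 1 + φ.smulRight x := by
  obtain ⟨g, hg, hag⟩ := L.exists_mem_strictlyUpper ha hax
  rw [eq_smul_smulRight_of_mem_strictlyUpper_fin_two hg, LinearMap.smul_comp, ← mkQ_comp_elem,
    ← LinearMap.comp_smul] at hag
  obtain ⟨φ, hφ⟩ := exists_sub_eq_smulRight hx hag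
  exact ⟨_, φ, by rw [← hφ, add_sub_cancel]⟩

theorem hasRankOne_of_one (L : ElementaryLifts V x 1) (hx : x ≠ 0) {a : End K E} (ha : a ∈ V)
    (ha0 : a ≠ 0) (hax : a x = 0) : HasRankOne V := by
  obtain ⟨g, hg, hag⟩ := L.exists_mem_strictlyUpper ha hax
  obtain ⟨φ, hφ⟩ := exists_sub_eq_smulRight (b := 0) hx (by
    rw [hag, eq_zero_of_mem_strictlyUpper_fin_one hg, LinearMap.comp_zero, LinearMap.zero_comp])
  rw [sub_zero] at hφ
  refine ⟨x, hx, φ, ?_, mem_rankOneFunctionals.mpr (hφ ▸ ha)⟩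
  rintro rfl
  exact ha0 (by rw [hφ, LinearMap.zero_smulRight])

theorem hasRankOne_of_two [Finite K] [FiniteDimensional K E] (L : ElementaryLifts V x 2)
    (hV : IsExtremalNil V) (hx : x ≠ 0)
    (hQ : ∀ x : E, x ≠ 0 → IsTriangular (pointQuotient V x))
    {a : End K E} (ha : a ∈ V) (ha0 : a ≠ 0)
    (hax : a x = 0) (htrace : ∀ b ∈ V, LinearMap.trace K E (a * a * b) = 0) : HasRankOne V := by
  by_contra hR
  have h01 : (0 : Fin 2) < 1 := by decide
  obtain ⟨s, φ, hφ⟩ := L.exists_eq_smul_elem_add_of_two hx ha hax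
  have hφ0 : φ = 0 := by
    by_contra hφ0
    refine hR ⟨x, hx, φ, hφ0, mem_rankOneFunctionals.mpr ?_⟩
    rw [← add_sub_cancel_left (s • L.elem 0 1) (φ.smulRight x), ← hφ]
    exact sub_mem ha (hV.smul_mem hQ s (L.elem_mem h01))
  have hs : s ≠ 0 := by
    rintro rfl
    exact ha0 (by rw [hφ, hφ0, zero_smul, LinearMap.zero_smulRight, zero_add])
  have haa : a * a = (s * s) • (L.corr 0 1 (L.vec 0) • L.coord 1).smulRight x := by
    rw [hφ, hφ0, LinearMap.zero_smulRight, add_zero, smul_mul_smul_comm, L.elem_mul_elem h01,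
      L.coord_vec_of_ne h01.ne', zero_smul, zero_add]
  have hmem : L.corr 0 1 (L.vec 0) • L.coord 1 ∈ rankOneFunctionals V x := by
    refine (hV.mem_rankOneFunctionals_iff hx).mpr (mem_dualAnnihilator_orbitSpan.mpr
      ⟨by rw [LinearMap.smul_apply, coord_base, smul_zero], fun b hb ↦ ?_⟩)
    have h := htrace b hb
    rw [haa, smul_mul_assoc, map_smul, trace_smulRight_mul, smul_eq_mul] at h
    exact (mul_eq_zero.mp h).resolve_left (mul_ne_zero hs hs)
  have hcorr : L.corr 0 1 (L.vec 0) • L.coord 1 = 0 := by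
    by_contra hne
    exact hR ⟨x, hx, _, hne, hmem⟩
  refine hR (L.hasRankOne_of_corr_vec_eq_zero h01 fun k hk ↦ ?_)
  obtain rfl : k = 0 := by lia
  simpa [L.coord_vec_self] using LinearMap.congr_fun hcorr (L.vec 1)

end ElementaryLifts

theorem IsExtremalNil.exists_mem_ne_zero [Finite K] (hV : IsExtremalNil V) (hE : 2 ≤ finrank K E) :
    ∃ v ∈ V, v ≠ 0 := by
  by_contra! hzero
  have hcard := hV.card_eq
  rw [(AddSubgroup.eq_bot_iff_forall V).mpr hzero, AddSubgroup.card_bot] at hcard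
  exact (Nat.one_lt_pow (Nat.choose_pos hE).ne' Finite.one_lt_card).ne hcard

variable [FiniteDimensional K E]

theorem IsTriangular.nonempty_elementaryLifts (hQ : IsTriangular (pointQuotient V x))
    (hx : x ≠ 0) {n : ℕ} (hn : finrank K E = n + 1) : Nonempty (ElementaryLifts V x n) := by
  obtain ⟨m, e, he⟩ := hQ
  obtain rfl : m = n := by
    rw [← Nat.add_right_cancel_iff (n := 1), ← hn, ← finrank_quotient_span_singleton_add_one hx,
      finrank_eq_card_basis e, Fintype.card_fin]
  exact nonempty_elementaryLifts_of_eq hx e he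

namespace IsExtremalNil

variable [Finite K]

theorem hasRankOne_of_finrank_eq_two (hV : IsExtremalNil V)
    (hQ : ∀ x : E, x ≠ 0 → IsTriangular (pointQuotient V x)) (hE : finrank K E = 2) :
    HasRankOne V := by
  have : Nontrivial E := nontrivial_of_finrank_eq_succ hE
  obtain ⟨a, ha, ha0⟩ := hV.exists_mem_ne_zero hE.ge
  obtain ⟨x, hx, hax⟩ := exists_apply_eq_zero_of_isNilpotent (hV.isNilpotent a ha)
  obtain ⟨L⟩ := (hQ x hx).nonempty_elementaryLifts hx hE
  exact L.hasRankOne_of_one hx ha ha0 hax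

theorem hasRankOne_of_finrank_eq_three (hV : IsExtremalNil V)
    (hQ : ∀ x : E, x ≠ 0 → IsTriangular (pointQuotient V x)) (hE : finrank K E = 3) :
    HasRankOne V := by
  have : Nontrivial E := nontrivial_of_finrank_eq_succ hE
  let S : Submodule K (End K E) := { V with smul_mem' := fun c _ ↦ hV.smul_mem hQ c }
  have hS : finrank K S = 3 := Nat.pow_right_injective Finite.one_lt_card <| by
    change Nat.card K ^ finrank K S = Nat.card K ^ 3
    rw [← natCard_eq_pow_finrank]
    exact hV.card_eq.trans (by rw [hE]; rfl)
  obtain ⟨a, ha, ha0, htrace⟩ :=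
    exists_ne_zero_forall_trace_mul_self_mul_eq_zero (S := S) hV.isNilpotent hS
  obtain ⟨x, hx, hax⟩ := exists_apply_eq_zero_of_isNilpotent (hV.isNilpotent a ha)
  obtain ⟨L⟩ := (hQ x hx).nonempty_elementaryLifts hx hE
  exact L.hasRankOne_of_two hV hx hQ ha ha0 hax htrace

theorem hasRankOne (hV : IsExtremalNil V)
    (hQ : ∀ x : E, x ≠ 0 → IsTriangular (pointQuotient V x)) (hE : 2 ≤ finrank K E) :
    HasRankOne V := by
  have : Nontrivial E := nontrivial_of_finrank_pos (zero_lt_two.trans_le hE)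
  obtain ⟨x, hx⟩ := exists_ne (0 : E)
  obtain h2 | h3 | h4 | h5 : finrank K E = 2 ∨ finrank K E = 3 ∨ finrank K E = 4 ∨
      5 ≤ finrank K E := by lia
  · exact hV.hasRankOne_of_finrank_eq_two hQ h2
  · exact hV.hasRankOne_of_finrank_eq_three hQ h3
  · obtain ⟨L⟩ := (hQ x hx).nonempty_elementaryLifts hx h4
    exact L.hasRankOne_of_three hV hx hQ
  · obtain ⟨n, hn⟩ := Nat.exists_eq_add_of_le' (Nat.one_le_of_lt h5)
    obtain ⟨L⟩ := (hQ x hx).nonempty_elementaryLifts hx hn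
    exact L.hasRankOne_of_four_le hV hx (by lia)

end IsExtremalNil

end RankOneLow

section Comparability

variable {K E ι : Type*} [Field K] [AddCommGroup E] [Module K E] [LinearOrder ι]

theorem exists_mem_strictlyUpper_apply_eq (e : Basis ι K E) {y w : E} {t : ι}
    (hy : e.repr y t ≠ 0) (hw : ∀ i, t ≤ i → e.repr w i = 0) :
    ∃ u ∈ strictlyUpper e, u y = w := by
  refine ⟨(e.coord t).smulRight ((e.repr y t)⁻¹ • w), fun i j hji ↦ ?_, ?_⟩
  · rcases eq_or_ne t j with rfl | htj
    · rw [LinearMap.smulRight_apply, map_smul, map_smul, e.coord_apply i, hw i hji, smul_zero,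
        smul_zero]
    · rw [LinearMap.smulRight_apply, coord_apply_of_ne e htj, zero_smul, map_zero]
  · rw [LinearMap.smulRight_apply, e.coord_apply, smul_smul, mul_inv_cancel₀ hy, one_smul]

theorem exists_eq_smul_add_of_repr_ne_zero (e : Basis ι K E) {y z : E} {t : ι}
    (hy : e.repr y t ≠ 0) (htop : ∀ i, t < i → e.repr y i = 0 ∧ e.repr z i = 0) :
    ∃ c : K, ∃ u ∈ strictlyUpper e, z = c • y + u y := by
  obtain ⟨u, hu, huy⟩ := exists_mem_strictlyUpper_apply_eq e
    (w := z - (e.repr z t / e.repr y t) • y) hy fun i hti ↦ by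
      rw [map_sub, map_smul, Finsupp.sub_apply, Finsupp.smul_apply, smul_eq_mul]
      rcases hti.eq_or_lt with rfl | hti
      · rw [div_mul_cancel₀ _ hy, sub_self]
      · rw [(htop i hti).1, (htop i hti).2, mul_zero, sub_zero]
  exact ⟨_, u, hu, by rw [huy, add_sub_cancel]⟩

theorem exists_eq_smul_add_or_exists_eq_smul_add [Finite ι] (e : Basis ι K E) (y z : E) :
    (∃ c : K, ∃ u ∈ strictlyUpper e, z = c • y + u y) ∨
      ∃ c : K, ∃ u ∈ strictlyUpper e, y = c • z + u z := by
  by_cases hz : z = 0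
  · exact .inl ⟨0, 0, zero_mem _, by rw [hz, zero_smul, LinearMap.zero_apply, add_zero]⟩
  obtain ⟨i, hi⟩ := Finsupp.ne_iff.mp (e.repr.map_ne_zero_iff.mpr hz)
  obtain ⟨t, ht, hmax⟩ := Set.exists_max_image {i | e.repr y i ≠ 0 ∨ e.repr z i ≠ 0} id
    (Set.toFinite _) ⟨i, .inr hi⟩
  have htop (i : ι) (hti : t < i) : e.repr y i = 0 ∧ e.repr z i = 0 := by
    by_contra hne
    exact (hmax i (not_and_or.mp hne)).not_gt hti
  rcases ht with hy | hz
  · exact .inl (exists_eq_smul_add_of_repr_ne_zero e hy htop)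
  · exact .inr (exists_eq_smul_add_of_repr_ne_zero e hz fun i hti ↦ (htop i hti).symm)

end Comparability

section OrbitInvariance

variable {K E : Type*} [Field K] [AddCommGroup E] [Module K E]
  {V : AddSubgroup (End K E)} {x : E} {φ : Dual K E} {a b u : End K E}

theorem apply_apply_eq_neg_of_mem_rankOneFunctionals (hV : ∀ v ∈ V, IsNilpotent v)
    (hφ : φ ∈ rankOneFunctionals V x) (ha : a ∈ V) (hb : b ∈ V) :
    φ (a (b x)) = -φ (b (a x)) := by
  have hsq {v : End K E} (hv : v ∈ V) : φ (v (v x)) = 0 :=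
    apply_pow_eq_zero_of_mem_rankOneFunctionals hV hφ hv 2
  have hab := hsq (add_mem ha hb)
  simp only [LinearMap.add_apply, map_add] at hab
  linear_combination hab - hsq ha - hsq hb

namespace IsExtremalNil

variable [Finite K] [FiniteDimensional K E]

theorem comp_mem_rankOneFunctionals (hV : IsExtremalNil V) (hx : x ≠ 0)
    (hφ : φ ∈ rankOneFunctionals V x) (hu : u ∈ V) (hux : u x = 0) :
    φ ∘ₗ u ∈ rankOneFunctionals V x := by
  refine (hV.mem_rankOneFunctionals_iff hx).mpr (mem_dualAnnihilator_orbitSpan.mpr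
    ⟨by rw [LinearMap.comp_apply, hux, map_zero], fun v hv ↦ ?_⟩)
  rw [LinearMap.comp_apply,
    apply_apply_eq_neg_of_mem_rankOneFunctionals hV.isNilpotent hφ hu hv, hux, map_zero, map_zero,
    neg_zero]

theorem apply_conj_eq_zero (hV : IsExtremalNil V) (hx : x ≠ 0)
    (hφ : φ ∈ rankOneFunctionals V x) (hb : b ∈ V) (hu : u ∈ V) (hux : u x = 0) :
    φ (b (u (b x))) = 0 := by
  have hcube {v : End K E} (hv : v ∈ V) : φ (v (v (v x))) = 0 :=
    apply_pow_eq_zero_of_mem_rankOneFunctionals hV.isNilpotent hφ hv 3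
  have hsq {v : End K E} (hv : v ∈ V) : φ (u (v (v x))) = 0 :=
    apply_pow_eq_zero_of_mem_rankOneFunctionals hV.isNilpotent
      (hV.comp_mem_rankOneFunctionals hx hφ hu hux) hv 2
  have hbu := hcube (add_mem hb hu)
  have hubu := hsq (add_mem hb hu)
  simp only [LinearMap.add_apply, map_add, hux, add_zero] at hbu hubu
  linear_combination hbu - hcube hb - hubu

theorem apply_eq_zero_of_mkQ_eq (hV : IsExtremalNil V) (hx : x ≠ 0)
    (hφ : φ ∈ rankOneFunctionals V x) (hb : b ∈ V)
    {g : End K (E ⧸ Submodule.span K {x})} (hg : g ∈ pointQuotient V x) {c : K}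
    {y : E} (hab : (Submodule.span K {x}).mkQ y =
      c • (Submodule.span K {x}).mkQ (b x) + g ((Submodule.span K {x}).mkQ (b x))) :
    φ (b y) = 0 := by
  have hpow := apply_pow_eq_zero_of_mem_rankOneFunctionals hV.isNilpotent hφ hb
  have hbx : φ (b x) = 0 := hpow 1
  have hbbx : φ (b (b x)) = 0 := hpow 2
  obtain ⟨u, ⟨hu, hux⟩, hug⟩ := mem_quotientAction.mp hg
  have hgb : g ((Submodule.span K {x}).mkQ (b x)) = (Submodule.span K {x}).mkQ (u (b x)) :=
    (LinearMap.congr_fun hug (b x)).symm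
  rw [hgb, ← map_smul, ← map_add] at hab
  obtain ⟨k, hk⟩ := Submodule.mem_span_singleton.mp ((Submodule.Quotient.eq _).mp hab)
  rw [← sub_add_cancel y, ← hk, map_add, map_add, map_add, map_smul, map_smul, map_add,
    map_smul, map_smul, hbx, hbbx, hV.apply_conj_eq_zero hx hφ hb hu hux]
  simp only [smul_zero, add_zero]

theorem apply_apply_eq_zero (hV : IsExtremalNil V) (hx : x ≠ 0)
    (hQ : IsTriangular (pointQuotient V x)) (hφ : φ ∈ rankOneFunctionals V x)
    (ha : a ∈ V) (hb : b ∈ V) : φ (a (b x)) = 0 := by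
  obtain ⟨n, e, he⟩ := hQ
  rcases exists_eq_smul_add_or_exists_eq_smul_add e ((Submodule.span K {x}).mkQ (a x))
    ((Submodule.span K {x}).mkQ (b x)) with ⟨c, u, hu, hab⟩ | ⟨c, u, hu, hab⟩
  · exact hV.apply_eq_zero_of_mkQ_eq hx hφ ha (he ▸ hu) hab
  · rw [apply_apply_eq_neg_of_mem_rankOneFunctionals hV.isNilpotent hφ ha hb,
      hV.apply_eq_zero_of_mkQ_eq hx hφ hb (he ▸ hu) hab, neg_zero]

theorem apply_mem_orbitSpan (hV : IsExtremalNil V) (hx : x ≠ 0)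
    (hQ : IsTriangular (pointQuotient V x)) {v : End K E} (hv : v ∈ V) {w : E}
    (hw : w ∈ orbitSpan V x) : v w ∈ orbitSpan V x := by
  rw [← Subspace.dualAnnihilator_dualCoannihilator_eq (W := orbitSpan V x),
    Submodule.mem_dualCoannihilator]
  intro φ hφ
  obtain ⟨b, hb, c, rfl⟩ := hV.exists_eq_apply_add_smul hx hw
  rw [map_add, map_add, map_smul, map_smul, (mem_dualAnnihilator_orbitSpan.mp hφ).2 v hv,
    hV.apply_apply_eq_zero hx hQ ((hV.mem_rankOneFunctionals_iff hx).mpr hφ) hv hb, smul_zero,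
    add_zero]

end IsExtremalNil

end OrbitInvariance

section Triangularization

variable {K E : Type*} [Field K] [AddCommGroup E] [Module K E] {V : AddSubgroup (End K E)} {x : E}

theorem orbitSpan_ne_top_of_mem_rankOneFunctionals (hV : ∀ v ∈ V, IsNilpotent v) {φ : Dual K E}
    (hφ0 : φ ≠ 0) (hφ : φ ∈ rankOneFunctionals V x) : orbitSpan V x ≠ ⊤ := by
  intro htop
  have h : φ ∈ (orbitSpan V x).dualAnnihilator :=
    rankOneFunctionals_le_dualAnnihilator_orbitSpan hV hφ
  rw [htop, Submodule.dualAnnihilator_top] at h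
  exact hφ0 h

theorem IsTriangular.exists_forall_apply_eq_zero [Nontrivial E] (hV : IsTriangular V) :
    ∃ z ≠ 0, ∀ v ∈ V, v z = 0 := by
  obtain ⟨n, e, rfl⟩ := hV
  have : Nonempty (Fin n) := e.index_nonempty
  have : NeZero n := ⟨(Fin.pos_iff_nonempty.mpr this).ne'⟩
  exact ⟨e 0, e.ne_zero 0, fun v hv ↦ e.ext_elem fun i ↦ by
    rw [map_zero e.repr]
    exact hv i 0 (Fin.zero_le i)⟩

theorem exists_forall_apply_eq_zero_of_restrictAction {W : Submodule K E}
    (hVW : ∀ v ∈ V, ∀ w ∈ W, v w ∈ W) (hW : ∃ z ≠ 0, ∀ g ∈ restrictAction V W, g z = 0) :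
    ∃ z ≠ 0, ∀ v ∈ V, v z = 0 := by
  obtain ⟨z, hz, hg⟩ := hW
  exact ⟨z, Submodule.coe_eq_zero.not.mpr hz, fun v hv ↦ congrArg Subtype.val
    (hg (v.restrict (hVW v hv)) (mem_restrictAction.mpr
      ⟨v, hv, (v.subtype_comp_restrict (hVW v hv)).symm⟩))⟩

end Triangularization

section BasisLifting

variable {K E : Type*} [Field K] [AddCommGroup E] [Module K E] {V : AddSubgroup (End K E)} {z : E}
  {n : ℕ}

theorem apply_eq_zero_of_isNilpotent_of_finrank_eq_one (hE : finrank K E = 1) (hz : z ≠ 0)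
    {v : End K E} (hv : IsNilpotent v) : v z = 0 := by
  obtain ⟨c, hc⟩ := (finrank_eq_one_iff_of_nonzero' z hz).mp hE (v z)
  rw [← hc, eq_zero_of_isNilpotent_of_apply_eq_smul hv hz hc.symm, zero_smul]

theorem exists_basis_zero_eq_and_mkQ_succ_eq (hz : z ≠ 0)
    (e : Basis (Fin n) K (E ⧸ Submodule.span K {z})) :
    ∃ b : Basis (Fin (n + 1)) K E,
      b 0 = z ∧ ∀ i, (Submodule.span K {z}).mkQ (b i.succ) = e i := by
  let bz : Basis Unit K (Submodule.span K {z}) :=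
    (Basis.singleton Unit K).map (LinearEquiv.toSpanNonzeroSingleton K E z hz)
  let σ : Unit ⊕ Fin n ≃ Fin (n + 1) :=
    (Equiv.sumComm _ _).trans ((Equiv.optionEquivSumPUnit _).symm.trans (finSuccEquiv n).symm)
  refine ⟨(Basis.sumQuot bz e).reindex σ, ?_, fun i ↦ ?_⟩
  · simp [σ, Basis.reindex_apply, Basis.sumQuot_inl, bz]
  · simp [σ, Basis.reindex_apply, Basis.sumQuot_inr]

theorem mem_strictlyUpper_iff_of_mkQ_succ_eq {b : Basis (Fin (n + 1)) K E}
    {e : Basis (Fin n) K (E ⧸ Submodule.span K {z})} (hb₀ : b 0 = z)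
    (hb : ∀ i, (Submodule.span K {z}).mkQ (b i.succ) = e i) {f : End K E} :
    f ∈ strictlyUpper b ↔ f z = 0 ∧ ∃ g ∈ strictlyUpper e,
      (Submodule.span K {z}).mkQ ∘ₗ f = g ∘ₗ (Submodule.span K {z}).mkQ := by
  have hcoord (i : Fin n) : e.coord i ∘ₗ (Submodule.span K {z}).mkQ = b.coord i.succ :=
    b.ext <| Fin.cases
      (by rw [hb₀, LinearMap.comp_apply, mkQ_span_singleton_self, map_zero, ← hb₀,
        coord_apply_of_ne b (Fin.succ_ne_zero i)])
      fun j ↦ by simp [hb, Finsupp.single_apply]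
  have hshift {g : End K (E ⧸ Submodule.span K {z})}
      (hfg : (Submodule.span K {z}).mkQ ∘ₗ f = g ∘ₗ (Submodule.span K {z}).mkQ) (i j : Fin n) :
      e.coord i (g (e j)) = b.coord i.succ (f (b j.succ)) := by
    rw [← hcoord, ← hb]
    exact congrArg (e.coord i) (LinearMap.congr_fun hfg _).symm
  constructor
  · intro hf
    have hfz : f z = 0 := b.ext_elem fun i ↦ by
      rw [← hb₀, map_zero b.repr]
      exact hf i 0 (Fin.zero_le i)
    have hfg := (Submodule.mapQ_mkQ _ _ f (h := span_singleton_le_comap hfz)).symm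
    exact ⟨hfz, _, fun i j hji ↦ (hshift hfg i j).trans (hf _ _ (Fin.succ_le_succ_iff.mpr hji)),
      hfg⟩
  · rintro ⟨hfz, g, hg, hfg⟩ i j hji
    induction j using Fin.cases with
    | zero => rw [hb₀, hfz, map_zero]
    | succ j =>
      induction i using Fin.cases with
      | zero => exact absurd hji (Fin.succ_pos j).not_ge
      | succ i => rw [← hshift hfg, hg i j (Fin.succ_le_succ_iff.mp hji)]

namespace IsExtremalNil

variable [Finite K] [FiniteDimensional K E]

theorem isTriangular_of_forall_apply_eq_zero (hV : IsExtremalNil V) (hz : z ≠ 0)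
    (hVz : ∀ v ∈ V, v z = 0) (hQ : IsTriangular (pointQuotient V z)) : IsTriangular V := by
  obtain ⟨n, e, he⟩ := hQ
  obtain ⟨b, hb₀, hb⟩ := exists_basis_zero_eq_and_mkQ_succ_eq hz e
  refine ⟨n + 1, b, AddSubgroup.ext fun f ↦ ?_⟩
  rw [Submodule.mem_toAddSubgroup, mem_strictlyUpper_iff_of_mkQ_succ_eq hb₀ hb]
  constructor
  · intro hf
    obtain ⟨g, hg, hfg⟩ := exists_mem_pointQuotient hf (hVz f hf)
    rw [he] at hg
    exact ⟨hVz f hf, g, hg, hfg⟩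
  · rintro ⟨hfz, g, hg, hfg⟩
    obtain ⟨v, hv, -, φ, hφz, rfl⟩ := exists_eq_add_smulRight (V := V) hz hfz (by rwa [he]) hfg
    exact add_mem hv ((hV.mem_rankOneFunctionals_iff hz).mpr
      (mem_dualAnnihilator_orbitSpan.mpr ⟨hφz, fun w hw ↦ by rw [hVz w hw, map_zero]⟩))

theorem isTriangular (hV : IsExtremalNil V) : IsTriangular V := by
  induction hE : finrank K E using Nat.strong_induction_on generalizing E with
  | h m ih =>
  rcases subsingleton_or_nontrivial E with _ | _
  · exact ⟨0, Basis.empty E, AddSubgroup.ext fun f ↦ by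
      simp [Subsingleton.elim f 0, zero_mem]⟩
  have hQ (x : E) (hx : x ≠ 0) : IsTriangular (pointQuotient V x) :=
    ih _ (by rw [← hE, ← finrank_quotient_span_singleton_add_one hx]; exact Nat.lt_succ_self _)
      (hV.quotient hx) rfl
  suffices h : ∃ z ≠ 0, ∀ v ∈ V, v z = 0 by
    obtain ⟨z, hz, hVz⟩ := h
    exact hV.isTriangular_of_forall_apply_eq_zero hz hVz (hQ z hz)
  obtain hE₁ | hE₂ : finrank K E = 1 ∨ 2 ≤ finrank K E := by
    have := finrank_pos (R := K) (M := E)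
    lia
  · obtain ⟨z, hz⟩ := exists_ne (0 : E)
    exact ⟨z, hz, fun v hv ↦
      apply_eq_zero_of_isNilpotent_of_finrank_eq_one hE₁ hz (hV.isNilpotent v hv)⟩
  · obtain ⟨x, hx, φ, hφ0, hφ⟩ := hV.hasRankOne hQ hE₂
    have hinv : ∀ v ∈ V, ∀ w ∈ orbitSpan V x, v w ∈ orbitSpan V x := fun v hv w hw ↦
      hV.apply_mem_orbitSpan hx (hQ x hx) hv hw
    have hlt := Submodule.finrank_lt
      (orbitSpan_ne_top_of_mem_rankOneFunctionals hV.isNilpotent hφ0 hφ)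
    have : Nontrivial (orbitSpan V x) := ⟨⟨x, self_mem_orbitSpan⟩, 0, fun h ↦
      hx (congrArg Subtype.val h)⟩
    exact exists_forall_apply_eq_zero_of_restrictAction hinv
      (ih _ (hE ▸ hlt) (hV.restrict hinv) rfl).exists_forall_apply_eq_zero

end IsExtremalNil

end BasisLifting

section Matrices

variable {K ι : Type*} [Field K] [Fintype ι] [DecidableEq ι]

theorem exists_units_conj_eq_toMatrix (b : Basis ι K (ι → K)) :
    ∃ P : (Matrix ι ι K)ˣ, ∀ M : Matrix ι ι K,
      (P : Matrix ι ι K) * M * (↑P⁻¹ : Matrix ι ι K) =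
        LinearMap.toMatrix b b (Matrix.toLin' M) := by
  refine ⟨⟨b.toMatrix (Pi.basisFun K ι), (Pi.basisFun K ι).toMatrix b,
    b.toMatrix_mul_toMatrix_flip _, (Pi.basisFun K ι).toMatrix_mul_toMatrix_flip _⟩, fun M ↦ ?_⟩
  rw [← basis_toMatrix_mul_linearMap_toMatrix_mul_basis_toMatrix b (Pi.basisFun K ι) b
    (Pi.basisFun K ι), LinearMap.toMatrix_eq_toMatrix', LinearMap.toMatrix'_toLin']
  rfl

theorem isExtremalNil_map_toLin' [Fintype K] {V : AddSubgroup (Matrix ι ι K)}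
    (hV : ∀ M ∈ V, IsNilpotent M)
    (hcard : Nat.card V = Fintype.card K ^ (Fintype.card ι).choose 2) :
    IsExtremalNil (V.map (Matrix.toLin' : Matrix ι ι K ≃ₗ[K] _).toAddEquiv.toAddMonoidHom) where
  isNilpotent := by
    rintro _ ⟨M, hM, rfl⟩
    exact (hV M hM).map (Matrix.toLinAlgEquiv' (R := K) (n := ι))
  card_eq := by
    rw [AddSubgroup.card_map_of_injective Matrix.toLin'.injective, hcard,
      finrank_fintype_fun_eq_card, Nat.card_eq_fintype_card]

end Matrices

/-- An additive subgroup of nilpotent `n × n` matrices over a finite field of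
cardinality `p` with exactly `p ^ (n choose 2)` elements is similar to the set of
strictly upper-triangular matrices. -/
theorem stmt_5 (K : Type*) [Field K] [Fintype K] (p n : ℕ) (hp : Fintype.card K = p)
    (hn : 0 < n)
    (V : AddSubgroup (Matrix (Fin n) (Fin n) K))
    (hV : ∀ M ∈ V, IsNilpotent M)
    (hcard : Nat.card V = p ^ n.choose 2) :
    ∃ P : (Matrix (Fin n) (Fin n) K)ˣ,
      ∀ M : Matrix (Fin n) (Fin n) K,
        M ∈ V ↔ ∀ i j : Fin n, j ≤ i →
          ((P : Matrix (Fin n) (Fin n) K) * M * ((P⁻¹ : (Matrix (Fin n) (Fin n) K)ˣ) :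
            Matrix (Fin n) (Fin n) K)) i j = 0 := by
  subst hp
  have hVt := isExtremalNil_map_toLin' hV (by rw [hcard, Fintype.card_fin])
  obtain ⟨m, b, hb⟩ := hVt.isTriangular
  obtain rfl : m = n := by simpa using (finrank_eq_card_basis b).symm
  obtain ⟨P, hP⟩ := exists_units_conj_eq_toMatrix b
  refine ⟨P, fun M ↦ ?_⟩
  calc M ∈ V ↔ Matrix.toLin' M ∈ strictlyUpper b := by
        rw [← Submodule.mem_toAddSubgroup, ← hb]
        exact (AddSubgroup.mem_map_iff_mem Matrix.toLin'.injective).symm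
    _ ↔ _ := by simp only [mem_strictlyUpper, hP, LinearMap.toMatrix_apply, Basis.coord_apply]
end

section
/- Let K be a division ring and K0 a field contained in the center of K over which K has finite dimension q. If V is a K0-linear subspace of M_2(K) all of whose elements are nilpotent matrices and dim_{K0} V = q, then there exists an invertible matrix P in M_2(K) such that P V P^{-1} equals the set NT_2(K) of all strictly upper-triangular 2×2 matrices over K. -/
/-! Every element of `V` squares to zero, so polarizing `(A + N) ^ 2 = 0` shows that any two
elements of `V` anticommute. If `A ∈ V` is nonzero and `v` is a row vector with `v A ≠ 0`, then in
the basis `v, v A` the matrix `A` becomes the matrix unit `E₀₁`, and the only square-zero matrices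
anticommuting with `E₀₁` are strictly upper triangular. Hence `V` is conjugate into `NT₂(K)`, whose
dimension is also `q`.

Matrices act on row vectors from the right, which makes the action left `K`-linear for
noncommutative `K`. -/

open Matrix Module

section StrictlyUpperTriangular

/-- A matrix is strictly upper triangular if its entries on and below the diagonal vanish. -/
def IsStrictlyUpperTriangular {n R : Type*} [LE n] [Zero R] (M : Matrix n n R) : Prop :=
  ∀ i j, j ≤ i → M i j = 0

variable (k n R : Type*) [Semiring k] [AddCommMonoid R] [Module k R]

/-- The space `NT_n(R)` of strictly upper triangular matrices, as a `k`-submodule: the dimension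
count needs scalars `k` smaller than the ring `R` of entries. -/
def strictlyUpperTriangular [LE n] : Submodule k (Matrix n n R) where
  carrier := {M | IsStrictlyUpperTriangular M}
  zero_mem' _ _ _ := rfl
  add_mem' hM hN i j hij := by rw [Matrix.add_apply, hM i j hij, hN i j hij, add_zero]
  smul_mem' c M hM i j hij := by rw [Matrix.smul_apply, hM i j hij, smul_zero]

/-- A strictly upper triangular matrix is the same as a family of entries above the diagonal. -/
def strictlyUpperTriangularEquivPi [LinearOrder n] :
    strictlyUpperTriangular k n R ≃ₗ[k] ({p : n × n // p.1 < p.2} → R) where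
  toFun M p := M.1 p.1.1 p.1.2
  map_add' _ _ := rfl
  map_smul' _ _ := rfl
  invFun f := ⟨of fun i j ↦ if h : i < j then f ⟨(i, j), h⟩ else 0,
    fun _ _ hij ↦ dif_neg hij.not_gt⟩
  left_inv M := by
    ext i j
    by_cases hij : i < j
    · exact dif_pos hij
    · exact (dif_neg hij).trans (M.2 i j (not_lt.mp hij)).symm
  right_inv f := funext fun p ↦ dif_pos p.2

theorem finrank_strictlyUpperTriangular [LinearOrder n] [Fintype n] [StrongRankCondition k]
    [Module.Free k R] [Module.Finite k R] :
    finrank k (strictlyUpperTriangular k n R) =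
      Fintype.card {p : n × n // p.1 < p.2} * finrank k R := by
  rw [(strictlyUpperTriangularEquivPi k n R).finrank_eq, finrank_pi_fintype, Finset.sum_const,
    Finset.card_univ, smul_eq_mul]

end StrictlyUpperTriangular

theorem mul_add_mul_eq_zero_of_sq_eq_zero {R : Type*} [Semiring R] {a b : R} (ha : a ^ 2 = 0)
    (hb : b ^ 2 = 0) (hab : (a + b) ^ 2 = 0) : a * b + b * a = 0 := by
  rw [sq] at ha hb hab
  simpa only [add_mul, mul_add, ha, hb, zero_add, add_zero, add_comm] using hab

theorem toLinearMapRight'_pow {n R : Type*} [Fintype n] [DecidableEq n] [Semiring R]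
    (M : Matrix n n R) (m : ℕ) :
    toLinearMapRight' (M ^ m) = (toLinearMapRight' M : End R (n → R)) ^ m := by
  induction m with
  | zero => exact toLinearMapRight'_one
  | succ m ih => rw [pow_succ, toLinearMapRight'_mul, ih, pow_succ', End.mul_eq_comp]

theorem isStrictlyUpperTriangular_of_anticommute_single {R : Type*} [Semiring R] [NoZeroDivisors R]
    {N : Matrix (Fin 2) (Fin 2) R} (hN : N ^ 2 = 0)
    (h : single 0 1 1 * N + N * single 0 1 1 = 0) : IsStrictlyUpperTriangular N := by
  have h10 : N 1 0 = 0 := by simpa using congr_fun₂ h 0 0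
  have h00 : N 0 0 = 0 := by simpa [sq, mul_apply, h10] using congr_fun₂ hN 0 0
  have h11 : N 1 1 = 0 := by simpa [sq, mul_apply, h10] using congr_fun₂ hN 1 1
  simp [IsStrictlyUpperTriangular, Fin.forall_fin_two, h00, h10, h11]

section DivisionRing

variable {K : Type*} [DivisionRing K]

theorem pow_finrank_eq_zero_of_isNilpotent {W : Type*} [AddCommGroup W] [Module K W]
    [FiniteDimensional K W] {f : End K W} (hf : IsNilpotent f) : f ^ finrank K W = 0 := by
  obtain ⟨m, hm⟩ := hf
  rw [← LinearMap.ker_eq_top, eq_top_iff, ← LinearMap.ker_eq_top.mpr hm]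
  exact End.ker_pow_le_ker_pow_finrank f m

theorem linearIndependent_pair_apply_of_sq_eq_zero {W : Type*} [AddCommGroup W] [Module K W]
    {f : End K W} (hf : f ^ 2 = 0) {v : W} (hv : f v ≠ 0) : LinearIndependent K ![v, f v] := by
  refine LinearIndependent.pair_iff.mpr fun s t hst ↦ ?_
  have hffv : f (f v) = 0 := by simpa [sq] using LinearMap.congr_fun hf v
  have hs : s = 0 := by simpa [hffv, hv] using congrArg f hst
  exact ⟨hs, by simpa [hs, hv] using hst⟩

section Matrix

variable {n : Type*} [Fintype n] [DecidableEq n]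

theorem pow_card_eq_zero_of_isNilpotent {M : Matrix n n K} (hM : IsNilpotent M) :
    M ^ Fintype.card n = 0 := by
  obtain ⟨m, hm⟩ := hM
  have hf : IsNilpotent (toLinearMapRight' M : End K (n → K)) :=
    ⟨m, by rw [← toLinearMapRight'_pow, hm, map_zero]⟩
  apply toLinearMapRight'.injective
  rw [toLinearMapRight'_pow, map_zero, ← finrank_fintype_fun_eq_card K]
  exact pow_finrank_eq_zero_of_isNilpotent hf

theorem isUnit_of_linearIndependent_row {M : Matrix n n K} (hM : LinearIndependent K M.row) :
    IsUnit M := by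
  have hinj : Function.Injective M.vecMulLinear := vecMul_injective_iff.mpr hM
  have hsurj : Function.Surjective M.vecMul := LinearMap.surjective_of_injective hinj
  obtain ⟨N, hNM⟩ := vecMul_surjective_iff_exists_left_inverse.mp hsurj
  exact IsUnit.of_mul_eq_one_right N hNM

end Matrix

theorem exists_conj_eq_single {A : Matrix (Fin 2) (Fin 2) K} (hA : A ^ 2 = 0) (hA0 : A ≠ 0) :
    ∃ P : (Matrix (Fin 2) (Fin 2) K)ˣ, P.val * A * P⁻¹.val = single 0 1 1 := by
  obtain ⟨v, hv⟩ : ∃ v : Fin 2 → K, v ᵥ* A ≠ 0 := by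
    by_contra! h
    exact hA0 (vecMul_injective (funext fun v ↦ (h v).trans (vecMul_zero v).symm))
  have hind : LinearIndependent K ![v, v ᵥ* A] :=
    linearIndependent_pair_apply_of_sq_eq_zero (f := toLinearMapRight' A)
      (by rw [← toLinearMapRight'_pow, hA, map_zero]) hv
  obtain ⟨P, hP⟩ := isUnit_of_linearIndependent_row (M := of ![v, v ᵥ* A]) hind
  have hvAA : v ᵥ* A ᵥ* A = 0 := by rw [vecMul_vecMul, ← sq, hA, vecMul_zero]
  refine ⟨P, (Units.mul_inv_eq_iff_eq_mul P).mpr ?_⟩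
  rw [hP]
  ext i j
  fin_cases i
  · simp [cons_mul]
  · simp [cons_mul, hvAA]

theorem exists_forall_conj_isStrictlyUpperTriangular
    (V : AddSubmonoid (Matrix (Fin 2) (Fin 2) K)) (hV : ∀ M ∈ V, IsNilpotent M) :
    ∃ P : (Matrix (Fin 2) (Fin 2) K)ˣ,
      ∀ M ∈ V, IsStrictlyUpperTriangular (P.val * M * P⁻¹.val) := by
  have hsq : ∀ M ∈ V, M ^ 2 = 0 := fun M hM ↦ pow_card_eq_zero_of_isNilpotent (hV M hM)
  by_cases! hne : ∃ A ∈ V, A ≠ 0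
  · obtain ⟨A, hAV, hA0⟩ := hne
    obtain ⟨P, hPA⟩ := exists_conj_eq_single (hsq A hAV) hA0
    have hconj_sq : ∀ M ∈ V, (P.val * M * P⁻¹.val) ^ 2 = 0 := fun M hM ↦ by
      rw [Units.conj_pow, hsq M hM, mul_zero, zero_mul]
    refine ⟨P, fun N hN ↦
      isStrictlyUpperTriangular_of_anticommute_single (hconj_sq N hN) ?_⟩
    rw [← hPA]
    refine mul_add_mul_eq_zero_of_sq_eq_zero (hconj_sq A hAV) (hconj_sq N hN) ?_
    rw [← add_mul, ← mul_add]
    exact hconj_sq (A + N) (V.add_mem hAV hN)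
  · exact ⟨1, fun M hM i j _ ↦ by simp [hne M hM]⟩

end DivisionRing

/-- The `2 × 2` equality case: a `q`-dimensional `K0`-linear subspace of nilpotent
`2 × 2` matrices over `K` is similar to the space of strictly upper-triangular
matrices. The invertible matrix `P` is given together with its (two-sided)
inverse `Q`. -/
theorem stmt_10 (K : Type*) [DivisionRing K] (K0 : Type*) [Field K0] [Algebra K0 K]
    [FiniteDimensional K0 K] (q : ℕ) (hq : Module.finrank K0 K = q)
    (V : Submodule K0 (Matrix (Fin 2) (Fin 2) K))
    (hV : ∀ M ∈ V, IsNilpotent M)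
    (hdim : Module.finrank K0 V = q) :
    ∃ P Q : Matrix (Fin 2) (Fin 2) K, P * Q = 1 ∧ Q * P = 1 ∧
      ∀ M : Matrix (Fin 2) (Fin 2) K,
        M ∈ V ↔ ∀ i j : Fin 2, j ≤ i → (P * M * Q) i j = 0 := by
  obtain ⟨P, hP⟩ := exists_forall_conj_isStrictlyUpperTriangular V.toAddSubmonoid hV
  let conj : Matrix (Fin 2) (Fin 2) K ≃ₗ[K0] Matrix (Fin 2) (Fin 2) K :=
    (MulSemiringAction.toAlgEquiv K0 _ (ConjAct.toConjAct P)).toLinearEquiv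
  have hle : V.map conj.toLinearMap ≤ strictlyUpperTriangular K0 (Fin 2) K :=
    Submodule.map_le_iff_le_comap.mpr hP
  have hcard : Fintype.card {p : Fin 2 × Fin 2 // p.1 < p.2} = 1 := rfl
  have heq : V.map conj.toLinearMap = strictlyUpperTriangular K0 (Fin 2) K :=
    Submodule.eq_of_le_of_finrank_eq hle <| by
      rw [conj.finrank_map_eq, hdim, finrank_strictlyUpperTriangular, hcard, one_mul, hq]
  refine ⟨P, ↑P⁻¹, P.mul_inv, P.inv_mul, fun M ↦ ?_⟩
  calc M ∈ V ↔ conj M ∈ V.map conj.toLinearMap :=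
        (conj.injective.mem_set_image (s := V)).symm
    _ ↔ conj M ∈ strictlyUpperTriangular K0 (Fin 2) K := by rw [heq]
    _ ↔ ∀ i j : Fin 2, j ≤ i → (P.val * M * P⁻¹.val) i j = 0 := Iff.rfl
end
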